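/- Let G be a convex triangular grid and let h₀ : B(G) → ℤ be an integer-valued function on the boundary edges of G. If h₀ is extendable to a concave cocirculation in G, then h₀ is extendable to an integer concave cocirculation in G. -/

import Mathlib

open scoped BigOperators

section FrozenDefs

attribute [local instance] Classical.propDecidable

noncomputable section

/-- Points of the plane. -/
abbrev Pt : Type := ℝ × ℝ

/-- Directed edges: ordered pairs of points. -/
abbrev Ed : Type := Pt × Pt

/-- The three generating vectors ξ₁ = (1,0), ξ₂ = (−1/2, √3/2), ξ₃ = (−1/2, −√3/2). -/
noncomputable def xiv : Fin 3 → Pt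
  | 0 => ((1 : ℝ), (0 : ℝ))
  | 1 => (-(1 / 2 : ℝ), Real.sqrt 3 / 2)
  | 2 => (-(1 / 2 : ℝ), -(Real.sqrt 3 / 2))

/-- A little (lattice) triangle of the triangular grid, given by its base point and
its orientation (`up = true` for an upward triangle). -/
structure GridTriangle : Type where
  base : Pt
  up : Bool

noncomputable def GridTriangle.v0 (T : GridTriangle) : Pt := T.base
noncomputable def GridTriangle.v1 (T : GridTriangle) : Pt := T.base + xiv 0
noncomputable def GridTriangle.v2 (T : GridTriangle) : Pt :=
  if T.up then T.base + xiv 0 + xiv 1 else T.base + xiv 0 + xiv 2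

/-- The three directed edges of the 3-circuit surrounding a little triangle;
each has direction ξ₁, ξ₂ or ξ₃. -/
noncomputable def GridTriangle.e0 (T : GridTriangle) : Ed := (T.v0, T.v1)
noncomputable def GridTriangle.e1 (T : GridTriangle) : Ed := (T.v1, T.v2)
noncomputable def GridTriangle.e2 (T : GridTriangle) : Ed := (T.v2, T.v0)

noncomputable def GridTriangle.edgeFinset (T : GridTriangle) : Finset Ed := {T.e0, T.e1, T.e2}

/-- The closed region spanned by a little triangle. -/
noncomputable def GridTriangle.region (T : GridTriangle) : Set Pt :=
  convexHull ℝ {T.v0, T.v1, T.v2}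

/-- Vectors of the lattice generated by ξ₁ and ξ₂. -/
def IsLatticeVec (p : Pt) : Prop := ∃ m n : ℤ, p = (m : ℝ) • xiv 0 + (n : ℝ) • xiv 1

/-- A convex triangular grid: a finite nonempty set of little triangles of a common
translate of the triangular lattice whose union is a convex polygon.  (Its vertices,
edges, bounded faces and boundary are then those of the planar digraph formed by the
edges of the little triangles.) -/
structure ConvexGrid : Type where
  tris : Finset GridTriangle
  nonempty : tris.Nonempty
  aligned : ∀ T ∈ tris, ∀ T' ∈ tris, IsLatticeVec (T.base - T'.base)
  convex : Convex ℝ (⋃ T ∈ tris, GridTriangle.region T)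

/-- The region R(G) spanned by the grid. -/
noncomputable def ConvexGrid.region (G : ConvexGrid) : Set Pt :=
  ⋃ T ∈ G.tris, GridTriangle.region T

/-- The (directed) edge set E(G) of the grid. -/
noncomputable def ConvexGrid.edges (G : ConvexGrid) : Finset Ed :=
  G.tris.biUnion GridTriangle.edgeFinset

/-- The boundary edges B(G): edges lying in exactly one little triangle. -/
noncomputable def ConvexGrid.boundary (G : ConvexGrid) : Finset Ed :=
  G.edges.filter fun e => (G.tris.filter fun T => e ∈ T.edgeFinset).card = 1

/-- A cocirculation: `h(e)+h(e')+h(e'')=0` around each little triangle. -/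
def IsCocirculation (G : ConvexGrid) (h : Ed → ℝ) : Prop :=
  ∀ T ∈ G.tris, h T.e0 + h T.e1 + h T.e2 = 0

/-- `g` coincides with an affine function on `S`. -/
def AffineOn (g : Pt → ℝ) (S : Set Pt) : Prop :=
  ∃ φ : Pt →ᵃ[ℝ] ℝ, ∀ x ∈ S, g x = φ x

/-- A concave cocirculation: a cocirculation induced by a concave function on R(G)
which is affinely linear within each little triangle. -/
def IsConcaveCocirculation (G : ConvexGrid) (h : Ed → ℝ) : Prop :=
  IsCocirculation G h ∧
  ∃ g : Pt → ℝ, ConcaveOn ℝ G.region g ∧ (∀ T ∈ G.tris, AffineOn g T.region) ∧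
    ∀ e ∈ G.edges, h e = g e.2 - g e.1

/-- The polyhedron C(G,h₀) of concave cocirculations agreeing with h₀ on F. -/
def CC (G : ConvexGrid) (F : Set Ed) (h₀ : Ed → ℝ) : Set (Ed → ℝ) :=
  {h | IsConcaveCocirculation G h ∧ ∀ e ∈ F, h e = h₀ e}

/-- `h` is a vertex (extreme point) of the set `C` of cocirculations, regarded as a
subset of ℝ^{E(G)} (only the coordinates on the edges of `G` matter). -/
def IsVertexOf (G : ConvexGrid) (C : Set (Ed → ℝ)) (h : Ed → ℝ) : Prop :=
  h ∈ C ∧ ∀ h₁ ∈ C, ∀ h₂ ∈ C,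
    (∀ e ∈ G.edges, h e = (h₁ e + h₂ e) / 2) → ∀ e ∈ G.edges, h₁ e = h₂ e


end

end FrozenDefs

noncomputable section


section Part1


/-- slack of the rhombus with short diagonal the edge `(k,v)` -/
def slk (g : ℤ × ℤ → ℝ) (k : Fin 3) (v : ℤ × ℤ) : ℝ :=
  if k = 0 then g (v.1, v.2) + g (v.1 + 1, v.2) - g (v.1, v.2 + 1) - g (v.1 + 1, v.2 - 1)
  else if k = 1 then g (v.1, v.2) + g (v.1, v.2 + 1) - g (v.1 - 1, v.2 + 1) - g (v.1 + 1, v.2)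
  else g (v.1 + 1, v.2) + g (v.1, v.2 + 1) - g (v.1, v.2) - g (v.1 + 1, v.2 + 1)

def Hive (g : ℤ × ℤ → ℝ) : Prop := ∀ k v, 0 ≤ slk g k v

theorem Hive.A {g : ℤ × ℤ → ℝ} (h : Hive g) (x y : ℤ) :
    g (x, y + 1) + g (x + 1, y - 1) ≤ g (x, y) + g (x + 1, y) := by
  have := h 0 (x, y); simp [slk] at this; linarith
theorem Hive.B {g : ℤ × ℤ → ℝ} (h : Hive g) (x y : ℤ) :
    g (x - 1, y + 1) + g (x + 1, y) ≤ g (x, y) + g (x, y + 1) := by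
  have := h 1 (x, y); simp [slk] at this; linarith
theorem Hive.C {g : ℤ × ℤ → ℝ} (h : Hive g) (x y : ℤ) :
    g (x, y) + g (x + 1, y + 1) ≤ g (x + 1, y) + g (x, y + 1) := by
  have := h 2 (x, y); simp [slk] at this; linarith

theorem Hive.mk' {g : ℤ × ℤ → ℝ}
    (hA : ∀ x y, g (x, y + 1) + g (x + 1, y - 1) ≤ g (x, y) + g (x + 1, y))
    (hB : ∀ x y, g (x - 1, y + 1) + g (x + 1, y) ≤ g (x, y) + g (x, y + 1))
    (hC : ∀ x y, g (x, y) + g (x + 1, y + 1) ≤ g (x + 1, y) + g (x, y + 1)) : Hive g := by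
  rintro k ⟨x, y⟩
  fin_cases k
  · have := hA x y; simp [slk]; linarith
  · have := hB x y; simp [slk]; linarith
  · have := hC x y; simp [slk]; linarith

def rtt (v : ℤ × ℤ) : ℤ × ℤ := (-v.2, v.1 + v.2)

theorem Hive.rot {g : ℤ × ℤ → ℝ} (h : Hive g) : Hive (fun v => g (rtt v)) := by
  refine Hive.mk' ?_ ?_ ?_ <;> intro x y <;> simp only [rtt]
  · have := h.B (-y) (x + y); ring_nf at this ⊢; linarith
  · have := h.C (-y-1) (x + y); ring_nf at this ⊢; linarith
  · have := h.A (-y-1) (x + y+1); ring_nf at this ⊢; linarith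

theorem Hive.neg {g : ℤ × ℤ → ℝ} (h : Hive g) : Hive (fun v => g (-v)) := by
  refine Hive.mk' ?_ ?_ ?_ <;> intro x y <;> simp only [Prod.neg_mk]
  · have := h.A (-x-1) (-y); ring_nf at this ⊢; linarith
  · have := h.B (-x) (-y-1); ring_nf at this ⊢; linarith
  · have := h.C (-x-1) (-y-1); ring_nf at this ⊢; linarith

theorem Hive.trans {g : ℤ × ℤ → ℝ} (h : Hive g) (a : ℤ × ℤ) : Hive (fun v => g (a + v)) := by
  obtain ⟨a, b⟩ := a
  refine Hive.mk' ?_ ?_ ?_ <;> intro x y <;> simp only [Prod.mk_add_mk]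
  · have := h.A (a + x) (b + y); ring_nf at this ⊢; linarith
  · have := h.B (a + x) (b + y); ring_nf at this ⊢; linarith
  · have := h.C (a + x) (b + y); ring_nf at this ⊢; linarith

/-- affine function -/
structure Aff where
  p : ℝ
  q : ℝ
  r : ℝ

def Aff.ev (φ : Aff) (v : ℤ × ℤ) : ℝ := φ.p + φ.q * v.1 + φ.r * v.2

theorem Hive.subAff {g : ℤ × ℤ → ℝ} (h : Hive g) (φ : Aff) : Hive (fun v => g v - φ.ev v) := by
  refine Hive.mk' ?_ ?_ ?_ <;> intro x y <;> simp only [Aff.ev] <;> push_cast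
  · have := h.A x y; linarith
  · have := h.B x y; linarith
  · have := h.C x y; linarith

def DDs (g : ℤ × ℤ → ℝ) (k : ℤ × ℤ) : AddSubmonoid (ℤ × ℤ) where
  carrier := {l | ∀ u, g u + g (u + k + l) ≤ g (u + k) + g (u + l)}
  zero_mem' := by intro u; simp [add_comm]
  add_mem' := by
    intro a b ha hb u
    have h1 := ha u
    have h2 := hb (u + a)
    have e1 : u + a + k + b = u + k + (a + b) := by abel
    have e2 : u + a + k = u + k + a := by abel
    have e3 : u + a + b = u + (a + b) := by abel
    rw [e1, e2, e3] at h2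
    linarith

theorem DDs_symm {g : ℤ × ℤ → ℝ} {k l : ℤ × ℤ} (h : l ∈ DDs g k) : k ∈ DDs g l := by
  intro u
  have := h u
  have e : u + k + l = u + l + k := by abel
  rw [e] at this; linarith

theorem mem_cone {S : AddSubmonoid (ℤ × ℤ)} (h0 : (1, 0) ∈ S) (h1 : (0, 1) ∈ S) {v : ℤ × ℤ}
    (hx : 0 ≤ v.1) (hy : 0 ≤ v.2) : v ∈ S := by
  obtain ⟨x, y⟩ := v
  obtain ⟨a, rfl⟩ := Int.eq_ofNat_of_zero_le hx
  obtain ⟨b, rfl⟩ := Int.eq_ofNat_of_zero_le hy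
  have := S.add_mem (S.nsmul_mem h0 a) (S.nsmul_mem h1 b)
  simpa using this

theorem Hive.dd {g : ℤ × ℤ → ℝ} (h : Hive g) {k l : ℤ × ℤ} (hk1 : 0 ≤ k.1) (hk2 : 0 ≤ k.2)
    (hl1 : 0 ≤ l.1) (hl2 : 0 ≤ l.2) (u : ℤ × ℤ) :
    g u + g (u + k + l) ≤ g (u + k) + g (u + l) := by
  have a00 : (1, 0) ∈ DDs g (1, 0) := by
    rintro ⟨x, y⟩
    have h1 := h.B (x+1) y
    have h2 := h.C x y
    simp only [Prod.mk_add_mk]; ring_nf at *; linarith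
  have a01 : (1, 0) ∈ DDs g (0, 1) := by
    rintro ⟨x, y⟩
    have h2 := h.C x y
    simp only [Prod.mk_add_mk]; ring_nf at *; linarith
  have a11 : (0, 1) ∈ DDs g (0, 1) := by
    rintro ⟨x, y⟩
    have h1 := h.A x (y+1)
    have h2 := h.C x y
    simp only [Prod.mk_add_mk]; ring_nf at *; linarith
  have b0 : (1, 0) ∈ DDs g l := DDs_symm (mem_cone a00 (DDs_symm a01) hl1 hl2)
  have b1 : (0, 1) ∈ DDs g l := DDs_symm (mem_cone a01 a11 hl1 hl2)
  exact DDs_symm (mem_cone b0 b1 hk1 hk2) u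

/-- double difference, cone 0 / 3 -/
theorem Hive.dd0 {g : ℤ × ℤ → ℝ} (h : Hive g) {u z w : ℤ × ℤ} (h1 : u.1 ≤ z.1) (h2 : z.1 ≤ w.1)
    (h3 : u.2 ≤ z.2) (h4 : z.2 ≤ w.2) : g u + g w ≤ g z + g (u + w - z) := by
  have := h.dd (k := z - u) (l := w - z) (by simpa) (by simpa) (by simpa) (by simpa) u
  have e1 : u + (z - u) + (w - z) = w := by abel
  have e2 : u + (z - u) = z := by abel
  have e3 : u + (w - z) = u + w - z := by abel
  rwa [e1, e2, e3] at this

def rotInv (v : ℤ × ℤ) : ℤ × ℤ := (v.1 + v.2, -v.1)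

theorem rot_rotInv (v : ℤ × ℤ) : rtt (rotInv v) = v := by
  simp [rtt, rotInv]

/-- cone 1 : x decreasing, x+y increasing -/
theorem Hive.dd1 {g : ℤ × ℤ → ℝ} (h : Hive g) {u z w : ℤ × ℤ} (h1 : z.1 ≤ u.1) (h2 : w.1 ≤ z.1)
    (h3 : u.1 + u.2 ≤ z.1 + z.2) (h4 : z.1 + z.2 ≤ w.1 + w.2) :
    g u + g w ≤ g z + g (u + w - z) := by
  have := h.rot.dd0 (u := rotInv u) (z := rotInv z) (w := rotInv w)
    (by simpa [rotInv]) (by simpa [rotInv]) (by simpa [rotInv]) (by simpa [rotInv])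
  simp only [rot_rotInv] at this
  convert this using 3
  ext <;> simp [rtt, rotInv] <;> ring

/-- cone 2 : y increasing, x+y decreasing -/
theorem Hive.dd2 {g : ℤ × ℤ → ℝ} (h : Hive g) {u z w : ℤ × ℤ} (h1 : u.2 ≤ z.2) (h2 : z.2 ≤ w.2)
    (h3 : z.1 + z.2 ≤ u.1 + u.2) (h4 : w.1 + w.2 ≤ z.1 + z.2) :
    g u + g w ≤ g z + g (u + w - z) := by
  have := h.rot.dd1 (u := rotInv u) (z := rotInv z) (w := rotInv w)
    (by simpa [rotInv]) (by simpa [rotInv]) (by simpa [rotInv]) (by simpa [rotInv])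
  simp only [rot_rotInv] at this
  convert this using 3
  ext <;> simp [rtt, rotInv] <;> ring

theorem Hive.gc0 {f : ℤ × ℤ → ℝ} (h : Hive f) (h0 : f (0, 0) = 0) (h1 : f (1, 0) = 0)
    (h2 : f (0, 1) = 0) (v : ℤ × ℤ) : f v ≤ 0 := by
  have c0 : ∀ f : ℤ × ℤ → ℝ, Hive f → f (0, 0) = 0 → f (1, 0) = 0 → f (0, 1) = 0 →
      ∀ n : ℕ, ∀ x y : ℤ, 0 ≤ x → 0 ≤ y → x + y = n → f (x, y) ≤ 0 := by
    intro f h h0 h1 h2 n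
    induction n with
    | zero =>
      intro x y hx hy hn
      obtain rfl : x = 0 := by push_cast at hn; omega
      obtain rfl : y = 0 := by push_cast at hn; omega
      exact h0.le
    | succ n ih =>
      intro x y hx hy hn
      push_cast at hn
      rcases lt_or_eq_of_le hx with hx' | hx'
      · have := h.dd0 (u := (0, 0)) (z := (1, 0)) (w := (x, y)) (by simp) (by simpa using (show (1:ℤ) ≤ x by omega))
          (by simp) (by simpa)
        have i := ih (x - 1) y (by omega) hy (by omega)
        simp at this; linarith
      · subst hx'
        have := h.dd0 (u := (0, 0)) (z := (0, 1)) (w := (0, y)) (by simp) (by simp)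
          (by simp) (by simp; omega)
        have i := ih 0 (y - 1) (by omega) (by omega) (by omega)
        simp at this; linarith
  have c1 : ∀ f : ℤ × ℤ → ℝ, Hive f → f (0, 0) = 0 → f (1, 0) = 0 → f (0, 1) = 0 →
      ∀ x y : ℤ, 0 ≤ x → 0 ≤ y → f (x, y) ≤ 0 := by
    intro f h h0 h1 h2 x y hx hy
    exact c0 f h h0 h1 h2 (x + y).toNat x y hx hy (by omega)
  -- turn by 120 degrees
  have turn : ∀ f : ℤ × ℤ → ℝ, Hive f → Hive (fun v => f (1 - v.1 - v.2, v.1)) := by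
    intro f h
    have := ((h.trans (1, 0)).rot).rot
    convert this using 2 with v
    simp only [rtt]; congr 1; ext <;> simp; ring
  have t1 := turn f h
  have t2 := turn _ t1
  simp only at t2
  have d0 := c1 f h h0 h1 h2
  have d1 := c1 _ t1 (by simpa) (by simpa) (by simpa)
  have d2 := c1 _ t2 (by simpa) (by simpa) (by simpa)
  simp only at d1 d2
  -- d1 : covers points (X,Y) = (1-x-y, x)
  have D1 : ∀ X Y : ℤ, 0 ≤ Y → X + Y ≤ 1 → f (X, Y) ≤ 0 := by
    intro X Y hY hXY
    have := d1 Y (1 - X - Y) hY (by omega)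
    ring_nf at this; exact this
  have D2 : ∀ X Y : ℤ, 0 ≤ X → X + Y ≤ 1 → f (X, Y) ≤ 0 := by
    intro X Y hY hXY
    have := d2 (1 - X - Y) X (by omega) hY 
    ring_nf at this; exact this
  obtain ⟨x, y⟩ := v
  rcases le_or_gt 0 x with hx | hx
  · rcases le_or_gt 0 y with hy | hy
    · exact d0 x y hx hy
    · rcases le_or_gt (x + y) 1 with hs | hs
      · exact D2 x y hx hs
      · -- base (1,0), cone d5,d0
        have := h.dd2 (w := (1, 0)) (z := (1 - y, y)) (u := (x, y)) (by simp) (by simp; omega)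
          (by simp; omega) (by simp)
        have a := D2 (1 - y) y (by omega) (by omega)
        have b := d0 (x + y) 0 (by omega) le_rfl
        simp at this
        ring_nf at this a b
        linarith
  · rcases le_or_gt 0 y with hy | hy
    · rcases le_or_gt (x + y) 1 with hs | hs
      · exact D1 x y hy hs
      · have := h.dd1 (u := (0, 1)) (z := (x, 1 - x)) (w := (x, y)) (by simp; omega) (by simp)
          (by simp) (by simp; omega)
        have a := D1 x (1 - x) (by omega) (by omega)
        have b := d0 0 (x + y) le_rfl (by omega)
        simp at this
        ring_nf at this a b
        linarith
    · have := h.dd0 (u := (x, y)) (z := (x, 0)) (w := (0, 0)) (by simp) (by simp; omega)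
          (by simp; omega) (by simp)
      have a := D1 x 0 (by omega) (by omega)
      have b := D2 0 y (by omega) (by omega)
      simp at this
      linarith

theorem Hive.gcUp {g : ℤ × ℤ → ℝ} (h : Hive g) (φ : Aff) (x y : ℤ) (h0 : g (x, y) = φ.ev (x, y))
    (h1 : g (x + 1, y) = φ.ev (x + 1, y)) (h2 : g (x, y + 1) = φ.ev (x, y + 1)) (v : ℤ × ℤ) :
    g v ≤ φ.ev v := by
  have := ((h.subAff φ).trans (x, y)).gc0 (by simpa using sub_eq_zero.2 h0)
    (by simpa using sub_eq_zero.2 h1) (by simpa using sub_eq_zero.2 h2) (v - (x, y))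
  simpa using this

theorem Hive.gcDn {g : ℤ × ℤ → ℝ} (h : Hive g) (φ : Aff) (x y : ℤ)
    (h0 : g (x + 1, y + 1) = φ.ev (x + 1, y + 1))
    (h1 : g (x + 1, y) = φ.ev (x + 1, y)) (h2 : g (x, y + 1) = φ.ev (x, y + 1)) (v : ℤ × ℤ) :
    g v ≤ φ.ev v := by
  have := (((h.subAff φ).trans (x + 1, y + 1)).neg).gc0 (by simpa using sub_eq_zero.2 h0)
    (by simpa [← sub_eq_add_neg] using sub_eq_zero.2 h2)
    (by simpa [← sub_eq_add_neg] using sub_eq_zero.2 h1) ((x + 1, y + 1) - v)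
  simpa using this


end Part1


section Part2
set_option linter.unusedSimpArgs false
/-- weight of a point of a hexagon, given distances to sides, `D` the value at interior points
and `a i` the value at inner points of the sides -/
def dv (D t0 t1 t2 t3 t4 t5 a0 a1 a2 a3 a4 a5 : ℤ) : ℤ :=
  if 0 < t0 ∧ 0 < t1 ∧ 0 < t2 ∧ 0 < t3 ∧ 0 < t4 ∧ 0 < t5 then D
  else (if t0 = 0 ∧ 0 < t5 ∧ 0 < t1 then a0 else 0) + (if t1 = 0 ∧ 0 < t0 ∧ 0 < t2 then a1 else 0) +
    (if t2 = 0 ∧ 0 < t1 ∧ 0 < t3 then a2 else 0) + (if t3 = 0 ∧ 0 < t2 ∧ 0 < t4 then a3 else 0) +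
    (if t4 = 0 ∧ 0 < t3 ∧ 0 < t5 then a4 else 0) + (if t5 = 0 ∧ 0 < t4 ∧ 0 < t0 then a5 else 0)

set_option maxHeartbeats 1000000 in
theorem dv_rh (m t0 t1 t2 t3 t4 t5 l0 l1 l2 l3 l4 l5 a0 a1 a2 a3 a4 a5 D : ℤ)
  (e0 : t5 + t1 - t0 = l0) (e1 : t0 + t2 - t1 = l1) (e2 : t1 + t3 - t2 = l2)
  (e3 : t2 + t4 - t3 = l3) (e4 : t3 + t5 - t4 = l4) (e5 : t4 + t0 - t5 = l5)
  (h0 : 0 ≤ l0 ∧ l0 ≤ m) (h1 : 0 ≤ l1 ∧ l1 ≤ m) (h2 : 0 ≤ l2 ∧ l2 ≤ m) (h3 : 0 ≤ l3 ∧ l3 ≤ m)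
  (h4 : 0 ≤ l4 ∧ l4 ≤ m) (h5 : 0 ≤ l5 ∧ l5 ≤ m) (hm : 0 < m)
  (A0 : l0 = m ∧ a0 = 1 ∨ l0 < m ∧ a0 = 0) (A1 : l1 = m ∧ a1 = 1 ∨ l1 < m ∧ a1 = 0) 
  (A2 : l2 = m ∧ a2 = 1 ∨ l2 < m ∧ a2 = 0) (A3 : l3 = m ∧ a3 = 1 ∨ l3 < m ∧ a3 = 0) 
  (A4 : l4 = m ∧ a4 = 1 ∨ l4 < m ∧ a4 = 0) (A5 : l5 = m ∧ a5 = 1 ∨ l5 < m ∧ a5 = 0) 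
  (D01 : a0 + a1 ≤ D) (D12 : a1 + a2 ≤ D) (D23 : a2 + a3 ≤ D) (D34 : a3 + a4 ≤ D)
  (D45 : a4 + a5 ≤ D) (D50 : a5 + a0 ≤ D)
  (DD : D ≤ a0 + a1 ∨ D ≤ a1 + a2 ∨ D ≤ a2 + a3 ∨ D ≤ a3 + a4 ∨ D ≤ a4 + a5 ∨ D ≤ a5 + a0)
  (g0 : 1 ≤ t0) (g1 : 1 ≤ t1) (g2 : 1 ≤ t2) (g3 : 0 ≤ t3) (g4 : 0 ≤ t4) (g5 : 1 ≤ t5) :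
  dv D (t0-1) t1 (t2+1) (t3+1) t4 (t5-1) a0 a1 a2 a3 a4 a5 +
  dv D t0 (t1-1) (t2-1) t3 (t4+1) (t5+1) a0 a1 a2 a3 a4 a5 ≤
  dv D t0 t1 t2 t3 t4 t5 a0 a1 a2 a3 a4 a5 + 
  dv D (t0-1) (t1-1) t2 (t3+1) (t4+1) t5 a0 a1 a2 a3 a4 a5 := by
  obtain ⟨u0, rfl⟩ : ∃ u, t0 = u + 1 := ⟨t0 - 1, by ring⟩
  obtain ⟨u1, rfl⟩ : ∃ u, t1 = u + 1 := ⟨t1 - 1, by ring⟩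
  obtain ⟨u2, rfl⟩ : ∃ u, t2 = u + 1 := ⟨t2 - 1, by ring⟩
  obtain ⟨u5, rfl⟩ : ∃ u, t5 = u + 1 := ⟨t5 - 1, by ring⟩
  have k0 : 0 ≤ u0 := by omega
  have k1 : 0 ≤ u1 := by omega
  have k2 : 0 ≤ u2 := by omega
  have k5 : 0 ≤ u5 := by omega
  have p0 : 0 < u0 + 1 := by omega
  have p1 : 0 < u1 + 1 := by omega
  have p2 : 0 < u2 + 1 := by omega
  have p3 : 0 < t3 + 1 := by omega
  have p4 : 0 < t4 + 1 := by omega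
  have p5 : 0 < u5 + 1 := by omega
  have q0 := p0.ne'
  have q1 := p1.ne'
  have q2 := p2.ne'
  have q3 := p3.ne'
  have q4 := p4.ne'
  have q5 := p5.ne'
  have r2 : 0 < u2 + 1 + 1 := by omega
  have r5 : 0 < u5 + 1 + 1 := by omega
  have s2 := r2.ne'
  have s5 := r5.ne'
  clear g0 g1 g2 g5
  have b0 : 0 ≤ a0 := by omega
  have b1 : 0 ≤ a1 := by omega
  have b2 : 0 ≤ a2 := by omega
  have b3 : 0 ≤ a3 := by omega
  have b4 : 0 ≤ a4 := by omega
  have b5 : 0 ≤ a5 := by omega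
  unfold dv
  simp only [add_sub_cancel_right, p0, p1, p2, p3, p4, p5, q0, q1, q2, q3, q4, q5, r2, r5, s2, s5, true_and, and_true, false_and, and_false, if_false]
  clear p0 p1 p2 p3 p4 p5 q0 q1 q2 q3 q4 q5 r2 r5 s2 s5
  have Z : ∀ {u : ℤ}, 0 ≤ u → (((0 < u) = False) ∧ ((u = 0) = True) ∧ u = 0) ∨
      (((0 < u) = True) ∧ ((u = 0) = False) ∧ 0 < u) := by
    intro u hu
    rcases hu.eq_or_lt with h | h
    · left; subst h; simp
    · right; simp [h, h.ne']
  rcases Z k0 with ⟨y0, x0, w0⟩ | ⟨y0, x0, w0⟩ <;> rcases Z k1 with ⟨y1, x1, w1⟩ | ⟨y1, x1, w1⟩ <;>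
  rcases Z g3 with ⟨y3, x3, w3⟩ | ⟨y3, x3, w3⟩ <;> rcases Z g4 with ⟨y4, x4, w4⟩ | ⟨y4, x4, w4⟩ <;>
  rcases Z k2 with ⟨y2, x2, w2⟩ | ⟨y2, x2, w2⟩ <;> rcases Z k5 with ⟨y5, x5, w5⟩ | ⟨y5, x5, w5⟩ <;>
  first
  | (exfalso; clear A0 A1 A2 A3 A4 A5 DD D01 D12 D23 D34 D45 D50; omega)
  | (simp only [x0, x1, x2, x3, x4, x5, y0, y1, y2, y3, y4, y5, true_and, and_true, false_and, and_false, if_false, if_true]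
     clear x0 x1 x2 x3 x4 x5 y0 y1 y2 y3 y4 y5
     first
     | (clear A0 A1 A2 A3 A4 A5 DD e0 e1 e2 e3 e4 e5; omega)
     | (clear DD; omega)
     | (rcases DD with DD | DD | DD | DD | DD | DD <;> omega))

/-- the six directions -/
def dr : Fin 6 → ℤ × ℤ := ![(1, 0), (0, 1), (-1, 1), (-1, 0), (0, -1), (1, -1)]
/-- the six functionals -/
def nn (i : Fin 6) (v : ℤ × ℤ) : ℤ := ![v.1, v.1 + v.2, v.2, -v.1, -v.1 - v.2, -v.2] i
def cc : Fin 6 → ℤ := ![1, 1, 0, -1, -1, 0]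

theorem nn_add (i : Fin 6) (v w : ℤ × ℤ) : nn i (v + w) = nn i v + nn i w := by
  fin_cases i <;> simp [nn] <;> ring
theorem nn_dr (i j : Fin 6) : nn i (dr j) = cc (i - j) := by
  revert i j; decide
theorem nn_sum (i : Fin 6) (v : ℤ × ℤ) : nn (i - 1) v + nn (i + 1) v = nn i v := by
  fin_cases i <;> simp [nn] <;> ring
theorem nn_neg (i : Fin 6) (v : ℤ × ℤ) : nn (i + 3) v = - nn i v := by
  fin_cases i <;> simp [nn] <;> ring

def dw (D : ℤ) (a t : Fin 6 → ℤ) : ℤ :=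
  if ∀ i, 0 < t i then D else ∑ i, if t i = 0 ∧ 0 < t (i - 1) ∧ 0 < t (i + 1) then a i else 0

theorem dw_eq (D : ℤ) (a t : Fin 6 → ℤ) : dw D a t =
    dv D (t 0) (t 1) (t 2) (t 3) (t 4) (t 5) (a 0) (a 1) (a 2) (a 3) (a 4) (a 5) := by
  unfold dw dv
  simp only [Fin.sum_univ_six, Fin.forall_fin_succ]
  simp
  rfl

theorem dw_shift (D : ℤ) (a t : Fin 6 → ℤ) (j : Fin 6) :
    dw D (fun i => a (i + j)) (fun i => t (i + j)) = dw D a t := by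
  unfold dw
  have h1 : (∀ i, 0 < t (i + j)) ↔ ∀ i, 0 < t i := by
    constructor
    · intro h i; simpa using h (i - j)
    · intro h i; exact h _
  simp only [h1]
  congr 1
  rw [← Equiv.sum_comp (Equiv.addRight j) (fun i => if t i = 0 ∧ 0 < t (i - 1) ∧ 0 < t (i + 1) then a i else 0)]
  refine Finset.sum_congr rfl fun i _ => ?_
  simp only [Equiv.coe_addRight]
  have e1 : i - 1 + j = i + j - 1 := by abel
  have e2 : i + 1 + j = i + j + 1 := by abel
  rw [e1, e2]
  exact if_congr Iff.rfl rfl rfl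

def hexL (M : Fin 6 → ℤ) (i : Fin 6) : ℤ := M (i - 1) + M (i + 1) - M i
def hexA (m : ℤ) (M : Fin 6 → ℤ) (i : Fin 6) : ℤ := if hexL M i = m then 1 else 0
def hexD (m : ℤ) (M : Fin 6 → ℤ) : ℤ :=
  Finset.univ.sup' Finset.univ_nonempty fun i => hexA m M i + hexA m M (i + 1)
/-- weight function of the hexagon `{v | ∀ i, nn i v ≤ M i}` -/
def hexW (m : ℤ) (M : Fin 6 → ℤ) (v : ℤ × ℤ) : ℤ :=
  dw (hexD m M) (hexA m M) (fun i => M i - nn i v)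

theorem hexL_t (M : Fin 6 → ℤ) (i : Fin 6) (v : ℤ × ℤ) :
    (M (i - 1) - nn (i - 1) v) + (M (i + 1) - nn (i + 1) v) - (M i - nn i v) = hexL M i := by
  have := nn_sum i v
  unfold hexL; linarith

theorem hexW_rhombus {m : ℤ} {M : Fin 6 → ℤ} (hm : 0 < m) (hL : ∀ i, 0 ≤ hexL M i ∧ hexL M i ≤ m)
    (j : Fin 6) (v : ℤ × ℤ) (h0 : ∀ i, nn i v ≤ M i) (h1 : ∀ i, nn i (v + dr j) ≤ M i)
    (h2 : ∀ i, nn i (v + dr (j - 1)) ≤ M i) (h3 : ∀ i, nn i (v + dr (j + 1)) ≤ M i) :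
    hexW m M (v + dr (j - 1)) + hexW m M (v + dr (j + 1)) ≤ hexW m M v + hexW m M (v + dr j) := by
  set t : Fin 6 → ℤ := fun i => M (i + j) - nn (i + j) v with ht
  have hA : ∀ i, hexL M i = m ∧ hexA m M i = 1 ∨ hexL M i < m ∧ hexA m M i = 0 := by
    intro i
    unfold hexA
    rcases (hL i).2.eq_or_lt with h | h
    · left; simp [h]
    · right; simp [h, h.ne]
  have hD : ∀ i, hexA m M i + hexA m M (i + 1) ≤ hexD m M := fun i =>
    Finset.le_sup' (fun i => hexA m M i + hexA m M (i + 1)) (Finset.mem_univ i)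
  obtain ⟨i₀, -, hi₀⟩ := Finset.exists_mem_eq_sup' (Finset.univ_nonempty)
    fun i => hexA m M i + hexA m M (i + 1)
  have hDD : ∃ i, hexD m M ≤ hexA m M (i + j) + hexA m M (i + 1 + j) :=
    ⟨i₀ - j, by
      have e1 : i₀ - j + j = i₀ := by abel
      have e2 : i₀ - j + 1 + j = i₀ + 1 := by abel
      rw [e1, e2]; exact hi₀.le⟩
  have hD' : ∀ i, hexA m M (i + j) + hexA m M (i + 1 + j) ≤ hexD m M := by
    intro i
    have := hD (i + j)
    rwa [show i + j + 1 = i + 1 + j by abel] at this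
  have e : ∀ i, t (i - 1) + t (i + 1) - t i = hexL M (i + j) := by
    intro i
    have := hexL_t M (i + j) v
    rw [← this]; simp only [ht]
    rw [show i + j - 1 = i - 1 + j by abel, show i + j + 1 = i + 1 + j by abel]
  have key : ∀ (l : Fin 6) , hexW m M (v + dr (j + l)) =
      dw (hexD m M) (fun i => hexA m M (i + j)) (fun i => t i - cc (i - l)) := by
    intro l
    unfold hexW
    rw [← dw_shift _ _ _ j]
    congr 1
    funext i
    rw [nn_add, nn_dr]
    simp only [ht]
    rw [show i + j - (j + l) = i - l by abel]; ring
  have key0 : hexW m M v = dw (hexD m M) (fun i => hexA m M (i + j)) t := by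
    unfold hexW
    rw [← dw_shift _ _ _ j]
  have g0 : ∀ i, 0 ≤ t i := fun i => by simp only [ht]; linarith [h0 (i + j)]
  have gl : ∀ l, (∀ i, nn i (v + dr (j + l)) ≤ M i) → ∀ i, cc (i - l) ≤ t i := by
    intro l hl i
    have := hl (i + j)
    rw [nn_add, nn_dr, show i + j - (j + l) = i - l by abel] at this
    simp only [ht]; linarith
  have g1 := gl 0 (by simpa using h1)
  have g2 := gl 5 (by rw [show j + 5 = j - 1 from by clear * -; revert j; decide]; exact h2)
  have g3 := gl 1 h3
  have k1 := key 0
  have k2 := key 5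
  have k3 := key 1
  rw [show j + 5 = j - 1 from by clear * -; revert j; decide] at k2
  rw [add_zero] at k1
  rw [k1, k2, k3, key0]
  simp only [dw_eq]
  have := dv_rh m (t 0) (t 1) (t 2) (t 3) (t 4) (t 5) _ _ _ _ _ _
    _ _ _ _ _ _ (hexD m M) (e 0) (e 1) (e 2) (e 3) (e 4) (e 5)
    (hL _) (hL _) (hL _) (hL _) (hL _) (hL _) hm (hA _) (hA _) (hA _) (hA _) (hA _) (hA _)
    (hD' 0) (hD' 1) (hD' 2) (hD' 3) (hD' 4) (hD' 5)
    (by simpa [Fin.exists_fin_succ] using hDD)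
    (g1 0) (g1 1) (g3 2) (g0 3) (g0 4) (g2 5)
  have c0 : cc 0 = 1 := rfl
  have c1 : cc 1 = 1 := rfl
  have c2 : cc 2 = 0 := rfl
  have c3 : cc 3 = -1 := rfl
  have c4 : cc 4 = -1 := rfl
  have c5 : cc 5 = 0 := rfl
  simpa [cc] using this


end Part2


section Part3

structure HexConv (A : Set (ℤ × ℤ)) : Prop where
  ip0 : ∀ u z w : ℤ × ℤ, u ∈ A → w ∈ A → u.1 ≤ z.1 → z.1 ≤ w.1 → u.2 ≤ z.2 → z.2 ≤ w.2 → z ∈ A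
  ip1 : ∀ u z w : ℤ × ℤ, u ∈ A → w ∈ A → z.1 ≤ u.1 → w.1 ≤ z.1 → u.1 + u.2 ≤ z.1 + z.2 →
    z.1 + z.2 ≤ w.1 + w.2 → z ∈ A
  ip2 : ∀ u z w : ℤ × ℤ, u ∈ A → w ∈ A → u.2 ≤ z.2 → z.2 ≤ w.2 → z.1 + z.2 ≤ u.1 + u.2 →
    w.1 + w.2 ≤ z.1 + z.2 → z ∈ A

theorem HexConv.box {A : Set (ℤ × ℤ)} (h : HexConv A) (z : ℤ × ℤ)
    (hz : ∀ i, ∃ u ∈ A, nn i z ≤ nn i u) : z ∈ A := by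
  obtain ⟨a, b⟩ := z
  have O (P : ℤ → ℤ → Prop) : Prop := ∃ x y, (x, y) ∈ A ∧ P x y
  by_contra hn
  have h03 : (∃ x y, (x, y) ∈ A ∧ a ≤ x ∧ b ≤ y) → (∃ x y, (x, y) ∈ A ∧ x ≤ a ∧ y ≤ b) → False := by
    rintro ⟨x, y, h1, h2, h3⟩ ⟨x', y', h1', h2', h3'⟩
    exact hn (h.ip0 _ _ _ h1' h1 h2' h2 h3' h3)
  have h14 : (∃ x y, (x, y) ∈ A ∧ x ≤ a ∧ a + b ≤ x + y) →
      (∃ x y, (x, y) ∈ A ∧ a ≤ x ∧ x + y ≤ a + b) → False := by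
    rintro ⟨x, y, h1, h2, h3⟩ ⟨x', y', h1', h2', h3'⟩
    exact hn (h.ip1 _ _ _ h1' h1 h2' h2 h3' h3)
  have h25 : (∃ x y, (x, y) ∈ A ∧ b ≤ y ∧ x + y ≤ a + b) →
      (∃ x y, (x, y) ∈ A ∧ y ≤ b ∧ a + b ≤ x + y) → False := by
    rintro ⟨x, y, h1, h2, h3⟩ ⟨x', y', h1', h2', h3'⟩
    exact hn (h.ip2 _ _ _ h1' h1 h2' h2 h3' h3)
  have h02 : (∃ x y, (x, y) ∈ A ∧ a ≤ x ∧ b ≤ y) → (∃ x y, (x, y) ∈ A ∧ b ≤ y ∧ x + y ≤ a + b) →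
      (∃ x y, (x, y) ∈ A ∧ x ≤ a ∧ a + b ≤ x + y) := by
    rintro ⟨x, y, h1, h2, h3⟩ ⟨x', y', h1', h2', h3'⟩
    rcases le_total y' y with hy | hy
    · exact ⟨a, y', h.ip0 _ _ _ h1' h1 (by simp; omega) (by simpa) (by simp) (by simpa), le_rfl, by omega⟩
    · exact ⟨a, y, h.ip2 _ _ _ h1 h1' (by simp) (by simpa) (by simpa) (by simp; omega), le_rfl, by omega⟩
  have h35 : (∃ x y, (x, y) ∈ A ∧ x ≤ a ∧ y ≤ b) → (∃ x y, (x, y) ∈ A ∧ y ≤ b ∧ a + b ≤ x + y) →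
      (∃ x y, (x, y) ∈ A ∧ a ≤ x ∧ x + y ≤ a + b) := by
    rintro ⟨x, y, h1, h2, h3⟩ ⟨x', y', h1', h2', h3'⟩
    rcases le_total y y' with hy | hy
    · exact ⟨a, y', h.ip0 _ _ _ h1 h1' (by simpa) (by simp; omega) (by simpa) (by simp), le_rfl, by omega⟩
    · exact ⟨a, y, h.ip2 _ _ _ h1' h1 (by simpa) (by simp) (by simp; omega) (by simpa), le_rfl, by omega⟩
  have hp : ∀ x y, (x, y) ∈ A →
     (a ≤ x → (a ≤ x ∧ b ≤ y) ∨ (a ≤ x ∧ x + y ≤ a + b) ∨ (y ≤ b ∧ a + b ≤ x + y)) ∧ True := by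
    intro x y _; exact ⟨by omega, trivial⟩
  have q0 : (∃ x y, (x, y) ∈ A ∧ a ≤ x ∧ x + y ≤ a + b) ∨ (∃ x y, (x, y) ∈ A ∧ y ≤ b ∧ a + b ≤ x + y)
      ∨ (∃ x y, (x, y) ∈ A ∧ a ≤ x ∧ b ≤ y) := by
    obtain ⟨⟨x, y⟩, hu, h1⟩ := hz 0
    simp [nn] at h1
    by_cases c1 : x + y ≤ a + b
    · exact Or.inl ⟨x, y, hu, by omega, by omega⟩
    by_cases c2 : y ≤ b
    · exact Or.inr (Or.inl ⟨x, y, hu, by omega, by omega⟩)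
    exact Or.inr (Or.inr ⟨x, y, hu, by omega, by omega⟩)
  have q1 : (∃ x y, (x, y) ∈ A ∧ y ≤ b ∧ a + b ≤ x + y)
      ∨ (∃ x y, (x, y) ∈ A ∧ a ≤ x ∧ b ≤ y) ∨ (∃ x y, (x, y) ∈ A ∧ x ≤ a ∧ a + b ≤ x + y) := by
    obtain ⟨⟨x, y⟩, hu, h1⟩ := hz 1
    simp [nn] at h1
    by_cases c1 : y ≤ b
    · exact Or.inl ⟨x, y, hu, by omega, by omega⟩
    by_cases c2 : a ≤ x
    · exact Or.inr (Or.inl ⟨x, y, hu, by omega, by omega⟩)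
    exact Or.inr (Or.inr ⟨x, y, hu, by omega, by omega⟩)
  have q2 : (∃ x y, (x, y) ∈ A ∧ a ≤ x ∧ b ≤ y) ∨ (∃ x y, (x, y) ∈ A ∧ x ≤ a ∧ a + b ≤ x + y)
      ∨ (∃ x y, (x, y) ∈ A ∧ b ≤ y ∧ x + y ≤ a + b) := by
    obtain ⟨⟨x, y⟩, hu, h1⟩ := hz 2
    simp [nn] at h1
    by_cases c1 : a ≤ x
    · exact Or.inl ⟨x, y, hu, by omega, by omega⟩
    by_cases c2 : a + b ≤ x + y
    · exact Or.inr (Or.inl ⟨x, y, hu, by omega, by omega⟩)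
    exact Or.inr (Or.inr ⟨x, y, hu, by omega, by omega⟩)
  have q3 : (∃ x y, (x, y) ∈ A ∧ x ≤ a ∧ a + b ≤ x + y)
      ∨ (∃ x y, (x, y) ∈ A ∧ b ≤ y ∧ x + y ≤ a + b) ∨ (∃ x y, (x, y) ∈ A ∧ x ≤ a ∧ y ≤ b) := by
    obtain ⟨⟨x, y⟩, hu, h1⟩ := hz 3
    simp [nn] at h1
    by_cases c1 : a + b ≤ x + y
    · exact Or.inl ⟨x, y, hu, by omega, by omega⟩
    by_cases c2 : b ≤ y
    · exact Or.inr (Or.inl ⟨x, y, hu, by omega, by omega⟩)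
    exact Or.inr (Or.inr ⟨x, y, hu, by omega, by omega⟩)
  have q4 : (∃ x y, (x, y) ∈ A ∧ b ≤ y ∧ x + y ≤ a + b) ∨ (∃ x y, (x, y) ∈ A ∧ x ≤ a ∧ y ≤ b)
      ∨ (∃ x y, (x, y) ∈ A ∧ a ≤ x ∧ x + y ≤ a + b) := by
    obtain ⟨⟨x, y⟩, hu, h1⟩ := hz 4
    simp [nn] at h1
    by_cases c1 : b ≤ y
    · exact Or.inl ⟨x, y, hu, by omega, by omega⟩
    by_cases c2 : x ≤ a
    · exact Or.inr (Or.inl ⟨x, y, hu, by omega, by omega⟩)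
    exact Or.inr (Or.inr ⟨x, y, hu, by omega, by omega⟩)
  have q5 : (∃ x y, (x, y) ∈ A ∧ x ≤ a ∧ y ≤ b)
      ∨ (∃ x y, (x, y) ∈ A ∧ a ≤ x ∧ x + y ≤ a + b) ∨ (∃ x y, (x, y) ∈ A ∧ y ≤ b ∧ a + b ≤ x + y) := by
    obtain ⟨⟨x, y⟩, hu, h1⟩ := hz 5
    simp [nn] at h1
    by_cases c1 : x ≤ a
    · exact Or.inl ⟨x, y, hu, by omega, by omega⟩
    by_cases c2 : x + y ≤ a + b
    · exact Or.inr (Or.inl ⟨x, y, hu, by omega, by omega⟩)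
    exact Or.inr (Or.inr ⟨x, y, hu, by omega, by omega⟩)
  clear hp O hz
  revert h03 h14 h25 h02 h35 q0 q1 q2 q3 q4 q5
  generalize (∃ x y, (x, y) ∈ A ∧ a ≤ x ∧ b ≤ y) = O0
  generalize (∃ x y, (x, y) ∈ A ∧ x ≤ a ∧ a + b ≤ x + y) = O1
  generalize (∃ x y, (x, y) ∈ A ∧ b ≤ y ∧ x + y ≤ a + b) = O2
  generalize (∃ x y, (x, y) ∈ A ∧ x ≤ a ∧ y ≤ b) = O3
  generalize (∃ x y, (x, y) ∈ A ∧ a ≤ x ∧ x + y ≤ a + b) = O4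
  generalize (∃ x y, (x, y) ∈ A ∧ y ≤ b ∧ a + b ≤ x + y) = O5
  intro h03 h14 h25 h02 h35 q0 q1 q2 q3 q4 q5
  by_cases O0 <;> by_cases O1 <;> by_cases O2 <;> by_cases O3 <;> by_cases O4 <;> by_cases O5 <;> simp_all

/-- contact set -/
def ctc (g : ℤ × ℤ → ℝ) (φ : Aff) : Set (ℤ × ℤ) := {v | g v = φ.ev v}

theorem Aff.ev_add_sub (φ : Aff) (u w z : ℤ × ℤ) : φ.ev (u + w - z) = φ.ev u + φ.ev w - φ.ev z := by
  simp [Aff.ev]; ring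

theorem Hive.hexConv {g : ℤ × ℤ → ℝ} (h : Hive g) {φ : Aff} (hφ : ∀ v, g v ≤ φ.ev v) :
    HexConv (ctc g φ) := by
  have key : ∀ u z w, g u = φ.ev u → g w = φ.ev w → g u + g w ≤ g z + g (u + w - z) →
      g z = φ.ev z := by
    intro u z w h1 h2 h3
    have h4 := hφ z
    have h5 := hφ (u + w - z)
    have := φ.ev_add_sub u w z
    linarith
  constructor
  · intro u z w hu hw h1 h2 h3 h4
    exact key u z w hu hw (h.dd0 h1 h2 h3 h4)
  · intro u z w hu hw h1 h2 h3 h4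
    exact key u z w hu hw (h.dd1 h1 h2 h3 h4)
  · intro u z w hu hw h1 h2 h3 h4
    exact key u z w hu hw (h.dd2 h1 h2 h3 h4)


end Part3


section Part4

def Aff.lin (φ : Aff) (w : ℤ × ℤ) : ℝ := φ.q * w.1 + φ.r * w.2

theorem Aff.ev_add (φ : Aff) (v w : ℤ × ℤ) : φ.ev (v + w) = φ.ev v + φ.lin w := by
  simp [Aff.ev, Aff.lin]; ring

theorem Aff.lin_smul (φ : Aff) (s : ℤ) (w : ℤ × ℤ) : φ.lin (s • w) = s * φ.lin w := by
  simp [Aff.lin]; ring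

theorem dr_neg (l : Fin 6) : dr (l + 3) = - dr l := by revert l; decide
theorem dr_sum (l : Fin 6) : dr (l - 1) + dr (l + 1) = dr l := by revert l; decide

def inHex (M : Fin 6 → ℤ) (v : ℤ × ℤ) : Prop := ∀ i, nn i v ≤ M i

/-- `M` is the tight box of `A`. -/
structure IsBox (A : Set (ℤ × ℤ)) (M : Fin 6 → ℤ) : Prop where
  mem : ∀ v, v ∈ A ↔ inHex M v
  att : ∀ i, ∃ v ∈ A, nn i v = M i

theorem IsBox.unique {A : Set (ℤ × ℤ)} {M M' : Fin 6 → ℤ} (h : IsBox A M) (h' : IsBox A M') :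
    M = M' := by
  funext i
  obtain ⟨v, hv, e⟩ := h.att i
  obtain ⟨v', hv', e'⟩ := h'.att i
  have := (h.mem v').1 hv' i
  have := (h'.mem v).1 hv i
  omega

theorem IsBox.L_nonneg {A : Set (ℤ × ℤ)} {M : Fin 6 → ℤ} (h : IsBox A M) (i : Fin 6) :
    0 ≤ hexL M i := by
  obtain ⟨v, hv, e⟩ := h.att i
  have hv := (h.mem v).1 hv
  have := hexL_t M i v
  have := hv (i - 1)
  have := hv (i + 1)
  omega

theorem fin6_split (l k : Fin 6) : k = l ∨ k = l + 1 ∨ k = l + 2 ∨ k = l + 3 ∨ k = l + 4 ∨ k = l + 5 := by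
  revert l k; decide

theorem inHex_dr {M : Fin 6 → ℤ} {v : ℤ × ℤ} (hv : inHex M v) (l : Fin 6) :
    inHex M (v + dr l) ↔ nn l v < M l ∧ nn (l + 1) v < M (l + 1) := by
  constructor
  · intro h
    have h1 := h l
    have h2 := h (l + 1)
    rw [nn_add, nn_dr] at h1 h2
    rw [show l - l = 0 by abel] at h1
    rw [show l + 1 - l = 1 by abel] at h2
    simp [cc] at h1 h2
    omega
  · rintro ⟨h1, h2⟩ k
    have h3 := hv k
    rw [nn_add, nn_dr]
    rcases fin6_split l k with rfl | rfl | rfl | rfl | rfl | rfl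
    · simp [cc]; omega
    all_goals rw [add_sub_cancel_left]; simp [cc]; omega

/-- `v` is an inner point of the side `i`. -/
def Act (M : Fin 6 → ℤ) (i : Fin 6) (v : ℤ × ℤ) : Prop :=
  M i - nn i v = 0 ∧ 0 < M (i - 1) - nn (i - 1) v ∧ 0 < M (i + 1) - nn (i + 1) v

structure Ndg (M : Fin 6 → ℤ) : Prop where
  L : ∀ i, 0 ≤ hexL M i
  w : ∀ i, 0 < M i + M (i + 3)

theorem nbrs {M : Fin 6 → ℤ} (hM : Ndg M) {i : Fin 6} {v : ℤ × ℤ} (h : Act M i v) :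
    nn (i + 2) v < M (i + 2) ∧ nn (i + 3) v < M (i + 3) ∧ nn (i + 4) v < M (i + 4) := by
  obtain ⟨h1, h2, h3⟩ := h
  have a := hexL_t M (i + 1) v
  have b := hexL_t M (i - 1) v
  have c := hM.L (i + 1)
  have d := hM.L (i - 1)
  have e := hM.w i
  have f := nn_neg i v
  rw [show i + 1 - 1 = i by abel, show i + 1 + 1 = i + 2 by rw [add_assoc]; rfl] at a
  rw [show i - 1 + 1 = i by abel, show i - 1 - 1 = i + 4 by clear * -; revert i; decide] at b
  omega

theorem Act.unique {M : Fin 6 → ℤ} (hM : Ndg M) {i k : Fin 6} {v : ℤ × ℤ} (h : Act M i v) 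
    (hk : Act M k v) : k = i := by
  obtain ⟨a, b, c⟩ := nbrs hM h
  obtain ⟨h1, h2, h3⟩ := h
  obtain ⟨k1, -, -⟩ := hk
  rcases fin6_split i k with rfl | rfl | rfl | rfl | rfl | rfl
  · rfl
  all_goals exfalso
  · omega
  · omega
  · omega
  · omega
  · rw [show i - 1 = i + 5 by clear * -; revert i; decide] at h2; omega

theorem hexW_act (m : ℤ) {M : Fin 6 → ℤ} (hM : Ndg M) {i : Fin 6} {v : ℤ × ℤ} (h : Act M i v) :
    hexW m M v = hexA m M i := by
  unfold hexW dw
  rw [if_neg]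
  · rw [Finset.sum_eq_single i]
    · rw [if_pos]; exact h
    · intro k _ hk
      rw [if_neg]
      intro hk'
      exact hk (h.unique hM hk')
    · simp
  · intro h'
    have h1 := h' i
    have h2 := h.1
    exact h1.ne' h2

theorem hexW_int (m : ℤ) {M : Fin 6 → ℤ} {v : ℤ × ℤ} (h : ∀ i, 0 < M i - nn i v) :
    hexW m M v = hexD m M := by
  unfold hexW dw
  rw [if_pos h]

theorem hexW_zero (m : ℤ) {M : Fin 6 → ℤ} {v : ℤ × ℤ} (h : ¬ ∀ i, 0 < M i - nn i v)
    (h' : ∀ i, ¬ Act M i v) : hexW m M v = 0 := by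
  unfold hexW dw
  rw [if_neg h]
  refine Finset.sum_eq_zero fun i _ => ?_
  rw [if_neg]; exact h' i

theorem line_iff {M : Fin 6 → ℤ} (hM : Ndg M) {v : ℤ × ℤ} (hv : inHex M v) {i : Fin 6}
    (h : M i - nn i v = 0) (s : ℤ) :
    inHex M (v + s • dr (i + 1)) ↔ -(M (i - 1) - nn (i - 1) v) ≤ s ∧ s ≤ M (i + 1) - nn (i + 1) v := by
  have ns : ∀ k, nn k (v + s • dr (i + 1)) = nn k v + s * cc (k - (i + 1)) := by
    intro k
    rw [nn_add, ← nn_dr]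
    congr 1
    fin_cases k <;> simp [nn] <;> ring
  have a := hexL_t M (i + 1) v
  have b := hexL_t M (i - 1) v
  have c := hM.L (i + 1)
  have d := hM.L (i - 1)
  rw [show i + 1 - 1 = i by abel, show i + 1 + 1 = i + 2 by rw [add_assoc]; rfl] at a
  rw [show i - 1 + 1 = i by abel, show i - 1 - 1 = i + 4 by clear * -; revert i; decide] at b
  rw [show i - 1 = i + 5 by clear * -; revert i; decide] at *
  constructor
  · intro h'
    have h1 := h' (i + 1)
    have h2 := h' (i + 5)
    rw [ns] at h1 h2
    rw [show i + 1 - (i + 1) = 0 by abel] at h1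
    rw [show i + 5 - (i + 1) = 4 by clear * -; revert i; decide] at h2
    simp [cc] at h1 h2
    omega
  · rintro ⟨h1, h2⟩ k
    rw [ns]
    have h3 := hv k
    rcases fin6_split i k with rfl | rfl | rfl | rfl | rfl | rfl
    · rw [show k - (k + 1) = 5 by clear * -; revert k; decide]
      simp [cc]; omega
    · rw [show i + 1 - (i + 1) = 0 by clear * -; revert i; decide]; simp [cc]; omega
    · rw [show i + 2 - (i + 1) = 1 by clear * -; revert i; decide]; simp [cc]; omega
    · rw [show i + 3 - (i + 1) = 2 by clear * -; revert i; decide]; simp [cc]; omega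
    · rw [show i + 4 - (i + 1) = 3 by clear * -; revert i; decide]; simp [cc]; omega
    · rw [show i + 5 - (i + 1) = 4 by clear * -; revert i; decide]; simp [cc]; omega

theorem lin_zero {q r : ℝ} {l j : Fin 6} (h1 : q * (dr l).1 + r * (dr l).2 = 0)
    (h2 : q * (dr j).1 + r * (dr j).2 = 0) (h3 : j ≠ l) (h4 : j ≠ l + 3) : q = 0 ∧ r = 0 := by
  fin_cases l <;> fin_cases j <;> simp [dr] at h1 h2 h3 h4 ⊢ <;> first | (constructor <;> linarith) | exact absurd rfl h4

theorem lin_prop {q r : ℝ} {i : Fin 6} (h1 : q * (dr (i + 1)).1 + r * (dr (i + 1)).2 = 0) (w : ℤ × ℤ) :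
    q * w.1 + r * w.2 = (q * (dr i).1 + r * (dr i).2) * nn i w := by
  fin_cases i <;> simp [dr, nn] at h1 ⊢ <;> first | (left; linarith) | skip
  · have : q = r := by linarith
    subst this; ring
  · rw [h1]; ring
  · have : q = r := by linarith
    subst this; ring
  · rw [h1]; ring


end Part4


section Part5

theorem IsBox.ndg {A : Set (ℤ × ℤ)} {M : Fin 6 → ℤ} (h : IsBox A M) {v : ℤ × ℤ} {j : Fin 6}
    (h0 : v ∈ A) (h1 : v + dr j ∈ A) (h2 : v + dr (j + 1) ∈ A) : Ndg M := by
  refine ⟨h.L_nonneg, fun i => ?_⟩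
  rw [h.mem] at *
  have a1 := h0 i
  have a2 := h0 (i + 3)
  have b1 := h1 i
  have b2 := h1 (i + 3)
  have c1 := h2 i
  have c2 := h2 (i + 3)
  rw [nn_neg] at a2 b2 c2
  rw [nn_add, nn_dr] at b1 b2 c1 c2
  have : cc (i - j) ≠ 0 ∨ cc (i - (j + 1)) ≠ 0 := by
    clear * -; revert i j; decide
  omega

structure Facet (g : ℤ × ℤ → ℝ) (φ : Aff) (M : Fin 6 → ℤ) : Prop where
  le : ∀ v, g v ≤ φ.ev v
  box : IsBox (ctc g φ) M
  ndg : Ndg M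

theorem Facet.ev {g : ℤ × ℤ → ℝ} {φ : Aff} {M : Fin 6 → ℤ} (h : Facet g φ M) {v : ℤ × ℤ} 
    (hv : inHex M v) : g v = φ.ev v := (h.box.mem v).2 hv

theorem Facet.mem {g : ℤ × ℤ → ℝ} {φ : Aff} {M : Fin 6 → ℤ} (h : Facet g φ M) {v : ℤ × ℤ} :
    g v = φ.ev v ↔ inHex M v := (h.box.mem v)

theorem Facet.eq_of {g : ℤ × ℤ → ℝ} {φ φ' : Aff} {M M' : Fin 6 → ℤ} (h : Facet g φ M)
    (h' : Facet g φ' M') {v : ℤ × ℤ} (h1 : φ'.ev v = φ.ev v) (hq : φ'.q - φ.q = 0) (hr : φ'.r - φ.r = 0) :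
    M = M' := by
  have e : φ = φ' := by
    have e1 : φ'.q = φ.q := by linarith
    have e2 : φ'.r = φ.r := by linarith
    cases φ; cases φ'
    simp only [Aff.ev] at *
    subst e1 e2
    congr 1
    linarith
  subst e
  exact h.box.unique h'.box

theorem Facet.E_int {g : ℤ × ℤ → ℝ} {φ φ' : Aff} {M M' : Fin 6 → ℤ} (h : Facet g φ M)
    (h' : Facet g φ' M') {v : ℤ × ℤ} (hv : ∀ i, 0 < M i - nn i v) (hv' : inHex M' v) : M = M' := by
  have hvM : inHex M v := fun i => by linarith [hv i]
  have nb : ∀ l, inHex M (v + dr l) := fun l => (inHex_dr hvM l).2 ⟨by linarith [hv l], by linarith [hv (l + 1)]⟩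
  have e0 : φ'.ev v = φ.ev v := by rw [← h.ev hvM, ← h'.ev hv']
  have ge : ∀ l, φ.lin (dr l) ≤ φ'.lin (dr l) := by
    intro l
    have := h'.le (v + dr l)
    rw [h.ev (nb l), Aff.ev_add, Aff.ev_add, e0] at this
    linarith
  refine h.eq_of h' e0 ?_ ?_
  · have a := ge 0
    have b := ge 3
    simp [Aff.lin, dr] at a b
    linarith
  · have a := ge 1
    have b := ge 4
    simp [Aff.lin, dr] at a b
    linarith

theorem Facet.E_act {g : ℤ × ℤ → ℝ} {φ φ' : Aff} {M M' : Fin 6 → ℤ} (h : Facet g φ M)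
    (h' : Facet g φ' M') {v : ℤ × ℤ} {j i : Fin 6} (hv : inHex M v) (hv' : inHex M' v)
    (hj : inHex M (v + dr j)) (hj' : inHex M' (v + dr j)) (ha : Act M i v) :
    M = M' ∨ Act M' (i + 3) v ∧ hexL M' (i + 3) = hexL M i := by
  obtain ⟨n2, n3, n4⟩ := nbrs h.ndg ha
  have e0 : φ'.ev v = φ.ev v := by rw [← h.ev hv, ← h'.ev hv']
  have ge : ∀ w, inHex M (v + w) → φ.lin w ≤ φ'.lin w := by
    intro w hw
    have := h'.le (v + w)
    rw [h.ev hw, Aff.ev_add, Aff.ev_add, e0] at this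
    linarith
  have ge' : ∀ w, inHex M' (v + w) → φ'.lin w ≤ φ.lin w := by
    intro w hw
    have := h.le (v + w)
    rw [h'.ev hw, Aff.ev_add, Aff.ev_add, e0] at this
    linarith
  obtain ⟨a0, a1, a2⟩ := ha
  have p1 : inHex M (v + dr (i + 1)) := (inHex_dr hv _).2 ⟨by omega, by
    rw [show i + 1 + 1 = i + 2 by rw [add_assoc]; rfl]; exact n2⟩
  have p4 : inHex M (v + dr (i + 4)) := (inHex_dr hv _).2 ⟨by omega, by
    rw [show i + 4 + 1 = i - 1 by clear * -; revert i; decide]; omega⟩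
  have p3 : inHex M (v + dr (i + 3)) := (inHex_dr hv _).2 ⟨by omega, by
    rw [show i + 3 + 1 = i + 4 by rw [add_assoc]; rfl]; exact n4⟩
  have l1 := ge _ p1
  have l4 := ge _ p4
  have l3 := ge _ p3
  have dn : dr (i + 4) = - dr (i + 1) := by
    rw [← dr_neg, add_assoc]; rfl
  rw [dn] at l4
  rw [dr_neg] at l3
  have z1 : (φ'.q - φ.q) * (dr (i + 1)).1 + (φ'.r - φ.r) * (dr (i + 1)).2 = 0 := by
    simp [Aff.lin] at l1 l4; linarith
  have lj := ge _ hj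
  have lj' := ge' _ hj'
  have zj : (φ'.q - φ.q) * (dr j).1 + (φ'.r - φ.r) * (dr j).2 = 0 := by
    simp [Aff.lin] at lj lj'; linarith
  by_cases hji : j = i + 1 ∨ j = i + 1 + 3
  swap
  · push Not at hji
    obtain ⟨hq, hr⟩ := lin_zero z1 zj hji.1 hji.2
    exact Or.inl (h.eq_of h' e0 hq hr)
  have pr := lin_prop z1
  set κ := (φ'.q - φ.q) * (dr i).1 + (φ'.r - φ.r) * (dr i).2 with hκ
  have lsub : ∀ w, φ'.lin w - φ.lin w = κ * nn i w := by
    intro w; rw [← pr w]; simp [Aff.lin]; ring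
  have hκ0 : κ ≤ 0 := by
    simp [Aff.lin] at l3; linarith
  rcases hκ0.eq_or_lt with hk | hk
  · left
    have q1 := pr (1, 0)
    have q2 := pr (0, 1)
    rw [hk] at q1 q2
    simp at q1 q2
    exact h.eq_of h' e0 q1 q2
  right
  have line : ∀ s : ℤ, inHex M (v + s • dr (i + 1)) ↔ inHex M' (v + s • dr (i + 1)) := by
    intro s
    rw [← h.mem, ← h'.mem, Aff.ev_add, Aff.ev_add, e0]
    have : φ'.lin (s • dr (i + 1)) = φ.lin (s • dr (i + 1)) := by
      rw [Aff.lin_smul, Aff.lin_smul]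
      have : φ'.lin (dr (i + 1)) = φ.lin (dr (i + 1)) := by simp [Aff.lin]; linarith
      rw [this]
    rw [this]
  -- side i+3 of M'
  have t3 : M' (i + 3) - nn (i + 3) v = 0 := by
    obtain ⟨u, hu, e⟩ := h'.box.att (i + 3)
    have hu' := (h'.box.mem u).1 hu
    have := ge' (u - v) (by simpa using hu')
    have l := lsub (u - v)
    have hn : (0 : ℝ) ≤ nn i (u - v) := by nlinarith
    have hn' : 0 ≤ nn i (u - v) := by exact_mod_cast hn
    have h5 := hv' (i + 3)
    have : nn i u = nn i v + nn i (u - v) := by rw [← nn_add]; simp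
    rw [← e, nn_neg, nn_neg] at *
    omega
  have E4 : i + 3 + 1 = i + 4 := by rw [add_assoc]; rfl
  have E2 : i + 3 - 1 = i + 2 := by clear * -; revert i; decide
  have li := fun s => line_iff h.ndg hv a0 s
  have li' := fun s => line_iff h'.ndg hv' t3 s
  rw [E4, E2] at li'
  have lk : ∀ s : ℤ, (-(M (i - 1) - nn (i - 1) v) ≤ s ∧ s ≤ M (i + 1) - nn (i + 1) v) ↔
     (-(M' (i + 2) - nn (i + 2) v) ≤ -s ∧ -s ≤ M' (i + 4) - nn (i + 4) v) := by
    intro s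
    rw [← li, ← li', dn, line s]; simp
  have A1 := (lk (M (i + 1) - nn (i + 1) v)).1 ⟨by omega, le_rfl⟩
  have A2 := (lk (-(M (i - 1) - nn (i - 1) v))).1 ⟨by omega, by omega⟩
  have hv2 := hv' (i + 2)
  have hv4 := hv' (i + 4)
  have A3 := (lk (M' (i + 2) - nn (i + 2) v)).2 ⟨le_rfl, by omega⟩
  have A4 := (lk (-(M' (i + 4) - nn (i + 4) v))).2 ⟨by omega, by omega⟩
  refine ⟨⟨t3, ?_, ?_⟩, ?_⟩
  · rw [E2]; omega
  · rw [E4]; omega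
  · rw [← hexL_t M' (i + 3) v, ← hexL_t M i v, E2, E4]; omega

theorem Facet.E {g : ℤ × ℤ → ℝ} {φ φ' : Aff} {M M' : Fin 6 → ℤ} (h : Facet g φ M)
    (h' : Facet g φ' M') {v : ℤ × ℤ} {j : Fin 6} (hv : inHex M v) (hv' : inHex M' v)
    (hj : inHex M (v + dr j)) (hj' : inHex M' (v + dr j)) (m : ℤ) : hexW m M v = hexW m M' v := by
  by_cases h1 : ∀ i, 0 < M i - nn i v
  · rw [h.E_int h' h1 hv']
  by_cases h2 : ∀ i, 0 < M' i - nn i v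
  · rw [h'.E_int h h2 hv]
  by_cases h3 : ∃ i, Act M i v
  · obtain ⟨i, hi⟩ := h3
    rcases h.E_act h' hv hv' hj hj' hi with e | ⟨e1, e2⟩
    · rw [e]
    · rw [hexW_act m h.ndg hi, hexW_act m h'.ndg e1]
      unfold hexA; rw [e2]
  by_cases h4 : ∃ i, Act M' i v
  · obtain ⟨i, hi⟩ := h4
    rcases h'.E_act h hv' hv hj' hj hi with e | ⟨e1, e2⟩
    · rw [e]
    · exact absurd ⟨_, e1⟩ h3
  push Not at h3 h4
  rw [hexW_zero m h1 h3, hexW_zero m h2 h4]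


end Part5


section Part6

def sl (g : ℤ × ℤ → ℝ) (j : Fin 6) (v : ℤ × ℤ) : ℝ :=
  g v + g (v + dr j) - g (v + dr (j - 1)) - g (v + dr (j + 1))

theorem slk0 (g : ℤ × ℤ → ℝ) (v : ℤ × ℤ) : slk g 0 v = sl g 0 v := by
  obtain ⟨x, y⟩ := v
  simp [slk, sl, dr, ← sub_eq_add_neg]; ring
theorem slk1 (g : ℤ × ℤ → ℝ) (v : ℤ × ℤ) : slk g 1 v = sl g 1 v := by
  obtain ⟨x, y⟩ := v
  simp [slk, sl, dr, ← sub_eq_add_neg]; ring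
theorem slk2 (g : ℤ × ℤ → ℝ) (v : ℤ × ℤ) : slk g 2 v = sl g 2 (v + (1, 0)) := by
  obtain ⟨x, y⟩ := v
  simp [slk, sl, dr]; ring
theorem sl_opp (g : ℤ × ℤ → ℝ) (j : Fin 6) (v : ℤ × ℤ) : sl g j v = sl g (j + 3) (v + dr j) := by
  unfold sl
  have e1 : dr j + dr (j + 3) = 0 := by clear * -; revert j; decide
  have e2 : dr j + dr (j + 3 - 1) = dr (j + 1) := by clear * -; revert j; decide
  have e3 : dr j + dr (j + 3 + 1) = dr (j - 1) := by clear * -; revert j; decide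
  simp only [add_assoc v, e1, e2, e3, add_zero]; ring
theorem slk3 (g : ℤ × ℤ → ℝ) (v : ℤ × ℤ) : sl g 3 v = slk g 0 (v - (1, 0)) := by
  rw [slk0, sl_opp]; simp only [dr]; congr 1
theorem slk4 (g : ℤ × ℤ → ℝ) (v : ℤ × ℤ) : sl g 4 v = slk g 1 (v - (0, 1)) := by
  rw [slk1, sl_opp]; simp only [dr]; congr 1
theorem slk5 (g : ℤ × ℤ → ℝ) (v : ℤ × ℤ) : sl g 5 v = slk g 2 (v - (0, 1)) := by
  rw [slk2, sl_opp _ 2]; simp only [dr]; congr 1; ext <;> simp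

theorem slk2' (g : ℤ × ℤ → ℝ) (v : ℤ × ℤ) : sl g 2 v = slk g 2 (v - (1, 0)) := by
  rw [slk2]; simp

theorem Hive.sl {g : ℤ × ℤ → ℝ} (h : Hive g) (j : Fin 6) (v : ℤ × ℤ) : 0 ≤ sl g j v := by
  fin_cases j
  · exact (h 0 v).trans_eq (slk0 g v)
  · exact (h 1 v).trans_eq (slk1 g v)
  · exact (h 2 _).trans_eq (slk2' g v).symm
  · exact (h 0 _).trans_eq (slk3 g v).symm
  · exact (h 1 _).trans_eq (slk4 g v).symm
  · exact (h 2 _).trans_eq (slk5 g v).symm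

theorem Hive.upEx {g : ℤ × ℤ → ℝ} (h : Hive g) (x y : ℤ) : ∃ φ : Aff, (∀ v, g v ≤ φ.ev v) ∧
    g (x, y) = φ.ev (x, y) ∧ g (x + 1, y) = φ.ev (x + 1, y) ∧ g (x, y + 1) = φ.ev (x, y + 1) := by
  let φ : Aff := ⟨g (x, y) - (g (x + 1, y) - g (x, y)) * x - (g (x, y + 1) - g (x, y)) * y,
    g (x + 1, y) - g (x, y), g (x, y + 1) - g (x, y)⟩
  have h0 : g (x, y) = φ.ev (x, y) := by simp [φ, Aff.ev]; ring
  have h1 : g (x + 1, y) = φ.ev (x + 1, y) := by simp [φ, Aff.ev]; ring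
  have h2 : g (x, y + 1) = φ.ev (x, y + 1) := by simp [φ, Aff.ev]; ring
  exact ⟨φ, h.gcUp φ x y h0 h1 h2, h0, h1, h2⟩

theorem Hive.dnEx {g : ℤ × ℤ → ℝ} (h : Hive g) (x y : ℤ) : ∃ φ : Aff, (∀ v, g v ≤ φ.ev v) ∧
    g (x + 1, y + 1) = φ.ev (x + 1, y + 1) ∧ g (x + 1, y) = φ.ev (x + 1, y) ∧
    g (x, y + 1) = φ.ev (x, y + 1) := by
  let a := g (x + 1, y + 1) - g (x, y + 1)
  let b := g (x + 1, y + 1) - g (x + 1, y)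
  let φ : Aff := ⟨g (x + 1, y + 1) - a * (x + 1) - b * (y + 1), a, b⟩
  have h0 : g (x + 1, y + 1) = φ.ev (x + 1, y + 1) := by simp [φ, Aff.ev]; ring
  have h1 : g (x + 1, y) = φ.ev (x + 1, y) := by simp [φ, Aff.ev, a, b]; ring
  have h2 : g (x, y + 1) = φ.ev (x, y + 1) := by simp [φ, Aff.ev, a, b]; ring
  exact ⟨φ, h.gcDn φ x y h0 h1 h2, h0, h1, h2⟩

theorem Hive.triEx {g : ℤ × ℤ → ℝ} (h : Hive g) (v : ℤ × ℤ) (j : Fin 6) :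
    ∃ φ : Aff, (∀ v, g v ≤ φ.ev v) ∧ v ∈ ctc g φ ∧ v + dr j ∈ ctc g φ ∧ v + dr (j + 1) ∈ ctc g φ := by
  obtain ⟨x, y⟩ := v
  fin_cases j
  · obtain ⟨φ, h1, h2, h3, h4⟩ := h.upEx x y
    exact ⟨φ, h1, h2, by simpa [dr, ctc] using h3, by simpa [dr, ctc] using h4⟩
  · obtain ⟨φ, h1, h2, h3, h4⟩ := h.dnEx (x - 1) y
    simp only [sub_add_cancel] at *
    exact ⟨φ, h1, h3, by simpa [dr, ctc, ← sub_eq_add_neg] using h2, by simpa [dr, ctc, ← sub_eq_add_neg] using h4⟩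
  · obtain ⟨φ, h1, h2, h3, h4⟩ := h.upEx (x - 1) y
    simp only [sub_add_cancel] at *
    exact ⟨φ, h1, h3, by simpa [dr, ctc, ← sub_eq_add_neg] using h4, by simpa [dr, ctc, ← sub_eq_add_neg] using h2⟩
  · obtain ⟨φ, h1, h2, h3, h4⟩ := h.dnEx (x - 1) (y - 1)
    simp only [sub_add_cancel] at *
    exact ⟨φ, h1, h2, by simpa [dr, ctc, ← sub_eq_add_neg] using h4, by simpa [dr, ctc, ← sub_eq_add_neg] using h3⟩
  · obtain ⟨φ, h1, h2, h3, h4⟩ := h.upEx x (y - 1)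
    simp only [sub_add_cancel] at *
    exact ⟨φ, h1, h4, by simpa [dr, ctc, ← sub_eq_add_neg] using h2, by simpa [dr, ctc, ← sub_eq_add_neg] using h3⟩
  · obtain ⟨φ, h1, h2, h3, h4⟩ := h.dnEx x (y - 1)
    simp only [sub_add_cancel] at *
    exact ⟨φ, h1, h4, by simpa [dr, ctc, ← sub_eq_add_neg] using h3, by simpa [dr, ctc, ← sub_eq_add_neg] using h2⟩

def StrictOff (g : ℤ × ℤ → ℝ) (I : Set (ℤ × ℤ)) : Prop :=
  ∀ v, v ∉ I → ∀ j, g (v + dr j) + g (v - dr j) < 2 * g v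

theorem StrictOff.mem {g : ℤ × ℤ → ℝ} {I : Set (ℤ × ℤ)} (h : StrictOff g I) {φ : Aff} {v : ℤ × ℤ}
    {j : Fin 6} (h0 : v ∈ ctc g φ) (h1 : v + dr j ∈ ctc g φ) (h2 : v - dr j ∈ ctc g φ) : v ∈ I := by
  by_contra hv
  have := h v hv j
  simp only [ctc, Set.mem_ofPred_eq] at *
  rw [h0, h1, h2] at this
  simp [Aff.ev] at this
  linarith

theorem seg_bound {g : ℤ × ℤ → ℝ} {I : Set (ℤ × ℤ)} (h : StrictOff g I) {R : ℤ} (hR0 : 0 ≤ R)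
    (hR : ∀ v ∈ I, |v.1| ≤ R ∧ |v.2| ≤ R) {φ : Aff} {u : ℤ × ℤ} {j : Fin 6} {a : ℤ}
    (hs : ∀ s : ℤ, 0 ≤ s → s ≤ a → u + s • dr j ∈ ctc g φ) : a ≤ 2 * R + 2 := by
  by_contra hc
  push Not at hc
  have i1 : u + (1 : ℤ) • dr j ∈ I := by
    refine h.mem (j := j) (hs 1 (by omega) (by omega)) ?_ ?_
    · have := hs 2 (by omega) (by omega)
      rwa [show u + (1 : ℤ) • dr j + dr j = u + (2 : ℤ) • dr j by module]
    · have := hs 0 (by omega) (by omega)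
      rwa [show u + (1 : ℤ) • dr j - dr j = u + (0 : ℤ) • dr j by module]
  have i2 : u + (a - 1) • dr j ∈ I := by
    refine h.mem (j := j) (hs (a - 1) (by omega) (by omega)) ?_ ?_
    · have := hs a (by omega) (by omega)
      rwa [show u + (a - 1) • dr j + dr j = u + a • dr j by module]
    · have := hs (a - 2) (by omega) (by omega)
      rwa [show u + (a - 1) • dr j - dr j = u + (a - 2) • dr j by module]
  have b1 := hR _ i1
  have b2 := hR _ i2
  simp only [abs_le] at b1 b2
  fin_cases j <;> simp [dr] at b1 b2 <;> omega

theorem pair_bound {g : ℤ × ℤ → ℝ} (hg : Hive g) {I : Set (ℤ × ℤ)} (h : StrictOff g I) {R : ℤ} (hR0 : 0 ≤ R)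
    (hR : ∀ v ∈ I, |v.1| ≤ R ∧ |v.2| ≤ R) {φ : Aff} (hφ : ∀ v, g v ≤ φ.ev v) {u w : ℤ × ℤ}
    (hu : u ∈ ctc g φ) (hw : w ∈ ctc g φ) (i : Fin 6) : nn i w - nn i u ≤ 4 * R + 4 := by
  have H := hg.hexConv hφ
  have c0 : ∀ u w : ℤ × ℤ, u ∈ ctc g φ → w ∈ ctc g φ → u.1 ≤ w.1 → u.2 ≤ w.2 →
      w.1 - u.1 ≤ 2 * R + 2 ∧ w.2 - u.2 ≤ 2 * R + 2 := by
    intro u w hu hw h1 h2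
    constructor
    · refine seg_bound h hR0 hR (φ := φ) (u := u) (j := 0) fun s s0 s1 => ?_
      refine H.ip0 u _ w hu hw ?_ ?_ ?_ ?_ <;> simp [dr] <;> omega
    · refine seg_bound h hR0 hR (φ := φ) (u := u) (j := 1) fun s s0 s1 => ?_
      refine H.ip0 u _ w hu hw ?_ ?_ ?_ ?_ <;> simp [dr] <;> omega
  have c1 : ∀ u w : ℤ × ℤ, u ∈ ctc g φ → w ∈ ctc g φ → w.1 ≤ u.1 → u.1 + u.2 ≤ w.1 + w.2 →
      u.1 - w.1 ≤ 2 * R + 2 ∧ w.1 + w.2 - (u.1 + u.2) ≤ 2 * R + 2 := by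
    intro u w hu hw h1 h2
    constructor
    · refine seg_bound h hR0 hR (φ := φ) (u := u) (j := 2) fun s s0 s1 => ?_
      refine H.ip1 u _ w hu hw ?_ ?_ ?_ ?_ <;> simp [dr] <;> omega
    · refine seg_bound h hR0 hR (φ := φ) (u := u) (j := 1) fun s s0 s1 => ?_
      refine H.ip1 u _ w hu hw ?_ ?_ ?_ ?_ <;> simp [dr] <;> omega
  have c2 : ∀ u w : ℤ × ℤ, u ∈ ctc g φ → w ∈ ctc g φ → u.2 ≤ w.2 → w.1 + w.2 ≤ u.1 + u.2 →
      w.2 - u.2 ≤ 2 * R + 2 ∧ u.1 + u.2 - (w.1 + w.2) ≤ 2 * R + 2 := by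
    intro u w hu hw h1 h2
    constructor
    · refine seg_bound h hR0 hR (φ := φ) (u := u) (j := 2) fun s s0 s1 => ?_
      refine H.ip2 u _ w hu hw ?_ ?_ ?_ ?_ <;> simp [dr] <;> omega
    · refine seg_bound h hR0 hR (φ := φ) (u := u) (j := 3) fun s s0 s1 => ?_
      refine H.ip2 u _ w hu hw ?_ ?_ ?_ ?_ <;> simp [dr] <;> omega
  have a1 := c0 u w hu hw
  have a2 := c0 w u hw hu
  have a3 := c1 u w hu hw
  have a4 := c1 w u hw hu
  have a5 := c2 u w hu hw
  have a6 := c2 w u hw hu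
  fin_cases i <;> simp [nn] <;> omega

theorem exFacet {g : ℤ × ℤ → ℝ} (hg : Hive g) {I : Set (ℤ × ℤ)} (h : StrictOff g I) {R : ℤ} (hR0 : 0 ≤ R)
    (hR : ∀ v ∈ I, |v.1| ≤ R ∧ |v.2| ≤ R) (v : ℤ × ℤ) (j : Fin 6) :
    ∃ φ M, Facet g φ M ∧ inHex M v ∧ inHex M (v + dr j) ∧ inHex M (v + dr (j + 1)) := by
  obtain ⟨φ, hφ, h0, h1, h2⟩ := hg.triEx v j
  have H := hg.hexConv hφ
  have hmax : ∀ i, ∃ u ∈ ctc g φ, ∀ w ∈ ctc g φ, nn i w ≤ nn i u := by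
    intro i
    obtain ⟨n, ⟨u, hu, rfl⟩, hn⟩ := Int.exists_greatest_of_bdd (P := fun n => ∃ u ∈ ctc g φ, nn i u = n)
      ⟨nn i v + (4 * R + 4), by
        rintro z ⟨u, hu, rfl⟩
        have := pair_bound hg h hR0 hR hφ h0 hu i
        omega⟩ ⟨_, v, h0, rfl⟩
    exact ⟨u, hu, fun w hw => hn _ ⟨w, hw, rfl⟩⟩
  choose u hu hmu using hmax
  have box : IsBox (ctc g φ) (fun i => nn i (u i)) := by
    refine ⟨fun w => ⟨fun hw i => hmu i w hw, fun hw => H.box w fun i => ⟨u i, hu i, hw i⟩⟩, fun i => ⟨u i, hu i, rfl⟩⟩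
  exact ⟨φ, _, ⟨hφ, box, box.ndg h0 h1 h2⟩, (box.mem _).1 h0, (box.mem _).1 h1, (box.mem _).1 h2⟩


end Part6


section Part7

theorem hexD_nonneg (m : ℤ) (M : Fin 6 → ℤ) : 0 ≤ hexD m M := by
  have a : ∀ i, 0 ≤ hexA m M i := fun i => by unfold hexA; split_ifs <;> norm_num
  have := Finset.le_sup' (fun i => hexA m M i + hexA m M (i + 1)) (Finset.mem_univ (0 : Fin 6))
  have b := a 0
  have c := a (0 + 1)
  unfold hexD
  omega

theorem hexW_nonneg (m : ℤ) (M : Fin 6 → ℤ) (v : ℤ × ℤ) : 0 ≤ hexW m M v := by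
  unfold hexW dw
  split_ifs
  · exact hexD_nonneg m M
  · refine Finset.sum_nonneg fun i _ => ?_
    unfold hexA
    split_ifs <;> norm_num

theorem Ndg.exists_pos {M : Fin 6 → ℤ} (h : Ndg M) : ∃ i, 0 < hexL M i := by
  by_contra hc
  push Not at hc
  have a := hc 0
  have b := hc 1
  have c := hc 2
  have d := hc 3
  have e := hc 4
  have f := hc 5
  have w := h.w 0
  simp [hexL] at a b c d e f w
  omega

/-- corner of the hexagon: first point of side `i` -/
theorem exists_side {M : Fin 6 → ℤ} (h : Ndg M) (i : Fin 6) (s : ℤ) (h0 : 0 ≤ s) (h1 : s ≤ hexL M i) :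
    ∃ v, inHex M v ∧ M i - nn i v = 0 ∧ M (i - 1) - nn (i - 1) v = s ∧
      M (i + 1) - nn (i + 1) v = hexL M i - s := by
  -- find v with prescribed nn i, nn (i-1)
  have ex : ∀ a b : ℤ, ∃ v, nn i v = a ∧ nn (i - 1) v = b := by
    intro a b
    refine ⟨a • dr i + b • dr (i - 2), ?_, ?_⟩
    · fin_cases i <;> simp [nn, dr] <;> ring
    · fin_cases i <;> simp [nn, dr] <;> ring
  obtain ⟨v, e1, e2⟩ := ex (M i) (M (i - 1) - s)
  have t := fun k => hexL_t M k v
  have L := h.L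
  have t0 := t i
  have t1 := t (i + 1)
  have t5 := t (i - 1)
  have t2 := t (i + 2)
  have L1 := L (i + 1)
  have L5 := L (i - 1)
  have L2 := L (i + 2)
  rw [show i + 1 - 1 = i by abel, show i + 1 + 1 = i + 2 by rw [add_assoc]; rfl] at t1
  rw [show i + 2 - 1 = i + 1 by clear * -; revert i; decide, show i + 2 + 1 = i + 3 by rw [add_assoc]; rfl] at t2
  rw [show i - 1 + 1 = i by abel, show i - 1 - 1 = i + 4 by clear * -; revert i; decide] at t5
  refine ⟨v, ?_, by omega, by omega, by omega⟩
  intro k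
  rcases fin6_split i k with rfl | rfl | rfl | rfl | rfl | rfl
  · omega
  · omega
  · omega
  · omega
  · omega
  · rw [show i - 1 = i + 5 by clear * -; revert i; decide] at *; omega

theorem factA {g : ℤ × ℤ → ℝ} (hg : Hive g) {I : Set (ℤ × ℤ)} (h : StrictOff g I) {R : ℤ} (hR0 : 0 ≤ R)
    (hR : ∀ v ∈ I, |v.1| ≤ R ∧ |v.2| ≤ R)
    (hmax : ∀ d : ℤ × ℤ → ℝ, (∀ v, 0 ≤ d v) → (∀ v, v ∉ I → d v = 0) →
      (∀ j v, sl g j v = 0 → 0 ≤ sl d j v) → ∀ v, d v = 0)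
    (v : ℤ × ℤ) (j : Fin 6) (h1 : sl g j v = 0) (h2 : sl g (j + 1) v = 0) : False := by
  -- maximal side length
  have bd : ∀ φ M, Facet g φ M → ∀ i, hexL M i ≤ 4 * R + 4 := by
    intro φ M hF i
    obtain ⟨u, hu, eu⟩ := hF.box.att (i - 1)
    obtain ⟨w, hw, ew⟩ := hF.box.att (i + 1)
    have := pair_bound hg h hR0 hR hF.le hu hw (i + 1)
    have e := nn_sum i u
    have f := (hF.box.mem u).1 hu i
    unfold hexL
    omega
  obtain ⟨φ₀, M₀, F₀, p0, p1, p2⟩ := exFacet hg h hR0 hR v j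
  obtain ⟨m, ⟨φ₁, M₁, i₁, F₁, hm₁⟩, hm⟩ := Int.exists_greatest_of_bdd
    (P := fun n => ∃ φ M i, Facet g φ M ∧ hexL M i = n)
    ⟨4 * R + 4, by rintro z ⟨φ, M, i, hF, rfl⟩; exact bd φ M hF i⟩ ⟨_, φ₀, M₀, 0, F₀, rfl⟩
  have hmL : ∀ φ M, Facet g φ M → ∀ i, 0 ≤ hexL M i ∧ hexL M i ≤ m :=
    fun φ M hF i => ⟨hF.ndg.L i, hm _ ⟨φ, M, i, hF, rfl⟩⟩
  have hm0 : 0 < m := by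
    obtain ⟨i, hi⟩ := F₀.ndg.exists_pos
    exact hi.trans_le (hmL _ _ F₀ i).2
  -- the global weight
  choose φ M hF q0 q1 q2 using fun w : ℤ × ℤ => fun l : Fin 6 => exFacet hg h hR0 hR w l
  set d : ℤ × ℤ → ℤ := fun w => hexW m (M w 0) w with hd
  have chain : ∀ w (l : Fin 6), hexW m (M w l) w = d w := by
    intro w
    have st : ∀ l, hexW m (M w l) w = hexW m (M w (l + 1)) w := fun l =>
      (hF w l).E (hF w (l + 1)) (q0 w l) (q0 w (l + 1)) (q2 w l) (q1 w (l + 1)) m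
    have s0 := st 0
    have s1 := st 1
    have s2 := st 2
    have s3 := st 3
    have s4 := st 4
    intro l
    simp only [hd]
    fin_cases l
    · rfl
    · exact s0.symm
    · exact (s0.trans s1).symm
    · exact (s0.trans (s1.trans s2)).symm
    · exact (s0.trans (s1.trans (s2.trans s3))).symm
    · exact (s0.trans (s1.trans (s2.trans (s3.trans s4)))).symm
  have cons : ∀ φ' M' (w : ℤ × ℤ) (l : Fin 6), Facet g φ' M' → inHex M' w → inHex M' (w + dr l) →
      hexW m M' w = d w := by
    intro φ' M' w l hF' h1 h2
    rw [← chain w l]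
    exact hF'.E (hF w l) h1 (q0 w l) h2 (q1 w l) m
  -- d vanishes off I
  have dI : ∀ w, w ∉ I → d w = 0 := by
    intro w hw
    by_contra hne
    apply hw
    have F := hF w 0
    have hin := q0 w 0
    by_cases c1 : ∀ i, 0 < M w 0 i - nn i w
    · have nb : ∀ l, inHex (M w 0) (w + dr l) := fun l => (inHex_dr hin l).2
        ⟨by linarith [c1 l], by linarith [c1 (l + 1)]⟩
      refine h.mem (φ := φ w 0) (j := 0) (F.ev hin) (F.ev (nb 0)) ?_
      have := nb 3
      rw [show (3 : Fin 6) = 0 + 3 from rfl, dr_neg, ← sub_eq_add_neg] at this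
      exact F.ev this
    by_cases c2 : ∃ i, Act (M w 0) i w
    · obtain ⟨i, hi⟩ := c2
      obtain ⟨n2, n3, n4⟩ := nbrs F.ndg hi
      obtain ⟨a0, a1, a2⟩ := hi
      have p1 : inHex (M w 0) (w + dr (i + 1)) := (inHex_dr hin _).2 ⟨by omega, by
        rw [show i + 1 + 1 = i + 2 by rw [add_assoc]; rfl]; exact n2⟩
      have p4 : inHex (M w 0) (w + dr (i + 4)) := (inHex_dr hin _).2 ⟨by omega, by
        rw [show i + 4 + 1 = i - 1 by clear * -; revert i; decide]; omega⟩
      rw [show i + 4 = i + 1 + 3 by rw [add_assoc]; rfl, dr_neg, ← sub_eq_add_neg] at p4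
      exact h.mem (φ := φ w 0) (F.ev hin) (F.ev p1) (F.ev p4)
    · push Not at c2
      exact absurd (hexW_zero m c1 c2) hne
  have dz := hmax (fun w => (d w : ℝ)) (fun w => by exact_mod_cast hexW_nonneg _ _ _)
    (fun w hw => by exact_mod_cast dI w hw) ?_
  · -- contradiction
    have dz' : ∀ w, d w = 0 := fun w => by exact_mod_cast dz w
    rcases (show 1 ≤ m from hm0).eq_or_lt with hm1 | hm2
    · -- m = 1
      have hin : inHex M₀ v := p0
      have r1 : inHex M₀ (v + dr (j - 1)) := by
        rw [← F₀.mem]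
        have e0 := F₀.ev p0
        have e1 := F₀.ev p1
        have e2 := F₀.ev p2
        unfold sl at h1
        rw [Aff.ev_add] at *
        have : φ₀.lin (dr j) = φ₀.lin (dr (j - 1)) + φ₀.lin (dr (j + 1)) := by
          rw [← dr_sum j]; simp [Aff.lin]; ring
        linarith
      have r2 : inHex M₀ (v + dr (j + 2)) := by
        rw [← F₀.mem]
        have e0 := F₀.ev p0
        have e1 := F₀.ev p1
        have e2 := F₀.ev p2
        unfold sl at h2
        rw [Aff.ev_add] at *
        rw [show j + 1 - 1 = j by abel, show j + 1 + 1 = j + 2 by rw [add_assoc]; rfl] at h2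
        have : φ₀.lin (dr (j + 1)) = φ₀.lin (dr j) + φ₀.lin (dr (j + 2)) := by
          rw [← dr_sum (j + 1)]; simp [Aff.lin]
          rw [show j + 1 + 1 = j + 2 by rw [add_assoc]; rfl]; ring
        linarith
      have s1 := (inHex_dr hin _).1 p1
      have s2 := (inHex_dr hin _).1 r1
      have s3 := (inHex_dr hin _).1 r2
      have s4 := (inHex_dr hin _).1 p2
      rw [show j + 2 + 1 = j + 3 by rw [add_assoc]; rfl] at s3
      rw [show j - 1 = j + 5 by clear * -; revert j; decide] at s2
      have s5 := hexL_t M₀ (j + 4) v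
      have s6 := (hmL _ _ F₀ (j + 4)).2
      rw [show j + 4 - 1 = j + 3 by clear * -; revert j; decide, show j + 4 + 1 = j + 5 by rw [add_assoc]; rfl] at s5
      have s7 := hin (j + 4)
      have int : ∀ i, 0 < M₀ i - nn i v := by
        intro i
        rw [show j + 1 + 1 = j + 2 by rw [add_assoc]; rfl] at s4
        rcases fin6_split j i with rfl | rfl | rfl | rfl | rfl | rfl <;> omega
      obtain ⟨i, hi⟩ := F₀.ndg.exists_pos
      have a1 : hexA m M₀ i = 1 := by
        unfold hexA
        rw [if_pos]
        have := (hmL _ _ F₀ i).2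
        omega
      have a2 : 0 ≤ hexA m M₀ (i + 1) := by unfold hexA; split_ifs <;> norm_num
      have hD := Finset.le_sup' (fun i => hexA m M₀ i + hexA m M₀ (i + 1)) (Finset.mem_univ i)
      have c := cons φ₀ M₀ v j F₀ p0 p1
      rw [hexW_int m int, dz' v] at c
      unfold hexD at c
      rw [c] at hD
      omega
    · obtain ⟨w, w0, w1, w2, w3⟩ := exists_side F₁.ndg i₁ 1 (by norm_num) (by omega)
      have hact : Act M₁ i₁ w := ⟨w1, by omega, by omega⟩
      have n := nbrs F₁.ndg hact
      have p1 : inHex M₁ (w + dr (i₁ + 1)) := (inHex_dr w0 _).2 ⟨by omega, by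
        rw [show i₁ + 1 + 1 = i₁ + 2 by rw [add_assoc]; rfl]; exact n.1⟩
      have c := cons φ₁ M₁ w _ F₁ w0 p1
      rw [dz' w, hexW_act m F₁.ndg hact] at c
      unfold hexA at c
      rw [if_pos hm₁] at c
      norm_num at c
  · -- slack inequality
    intro l w hw
    have F := hF w l
    have a0 := q0 w l
    have a1 := q1 w l
    have a2 := q2 w l
    have a3 : inHex (M w l) (w + dr (l - 1)) := by
      rw [← F.mem]
      have e0 := F.ev a0
      have e1 := F.ev a1
      have e2 := F.ev a2
      unfold sl at hw
      rw [Aff.ev_add] at *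
      have : (φ w l).lin (dr l) = (φ w l).lin (dr (l - 1)) + (φ w l).lin (dr (l + 1)) := by
        rw [← dr_sum l]; simp [Aff.lin]; ring
      linarith
    have key := hexW_rhombus hm0 (hmL _ _ F) l w a0 a1 a3 a2
    have b : ∀ k k' : Fin 6, dr k + dr k' = 0 → inHex (M w l) (w + dr k) → hexW m (M w l) (w + dr k) = d (w + dr k) := by
      intro k k' hk hin
      refine cons _ _ _ k' F hin ?_
      rw [add_assoc, hk, add_zero]; exact a0
    rw [cons _ _ _ _ F a0 a1, b l (l + 3) (by rw [dr_neg]; simp) a1,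
      b (l - 1) (l - 1 + 3) (by rw [dr_neg]; simp) a3, b (l + 1) (l + 1 + 3) (by rw [dr_neg]; simp) a2] at key
    unfold sl
    have : ((d (w + dr (l - 1)) + d (w + dr (l + 1)) : ℤ) : ℝ) ≤ ((d w + d (w + dr l) : ℤ) : ℝ) := by
      exact_mod_cast key
    push_cast at this
    linarith


end Part7


section Part8

theorem slk_add_smul (g d : ℤ × ℤ → ℝ) (ε : ℝ) (k : Fin 3) (v : ℤ × ℤ) :
    slk (fun u => g u + ε * d u) k v = slk g k v + ε * slk d k v := by
  unfold slk; split_ifs <;> ring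

theorem slk_cont (k : Fin 3) (v : ℤ × ℤ) : Continuous (fun g : ℤ × ℤ → ℝ => slk g k v) := by
  unfold slk; split_ifs <;> fun_prop

theorem slk_supp {I : Set (ℤ × ℤ)} {R : ℤ} (hR : ∀ v ∈ I, |v.1| ≤ R ∧ |v.2| ≤ R) {d : ℤ × ℤ → ℝ}
    (hd : ∀ v, v ∉ I → d v = 0) (k : Fin 3) (v : ℤ × ℤ) (h : slk d k v ≠ 0) :
    v ∈ Finset.Icc (-R - 1) (R + 1) ×ˢ Finset.Icc (-R - 1) (R + 1) := by
  by_contra hc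
  have z : ∀ a b : ℤ, |a - v.1| ≤ 1 → |b - v.2| ≤ 1 → d (a, b) = 0 := by
    intro a b ha hb
    refine hd _ fun hm => hc ?_
    have := hR _ hm
    simp only [abs_le] at *
    simp only [Finset.mem_product, Finset.mem_Icc]
    omega
  apply h
  unfold slk
  split_ifs <;> rw [z, z, z, z] <;> simp

theorem exEps {g : ℤ × ℤ → ℝ} (hg : Hive g) {I : Set (ℤ × ℤ)} {R : ℤ}
    (hR : ∀ v ∈ I, |v.1| ≤ R ∧ |v.2| ≤ R) {d : ℤ × ℤ → ℝ}
    (hd : ∀ v, v ∉ I → d v = 0) (h : ∀ k v, slk g k v = 0 → 0 ≤ slk d k v) :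
    ∃ ε : ℝ, 0 < ε ∧ Hive (fun u => g u + ε * d u) := by
  have key : ∀ p ∈ (Finset.univ : Finset (Fin 3)) ×ˢ
      (Finset.Icc (-R - 1) (R + 1) ×ˢ Finset.Icc (-R - 1) (R + 1)),
      ∀ᶠ ε in nhdsWithin (0 : ℝ) (Set.Ioi 0), 0 ≤ slk g p.1 p.2 + ε * slk d p.1 p.2 := by
    intro p _
    rcases (hg p.1 p.2).eq_or_lt with h0 | h0
    · filter_upwards [self_mem_nhdsWithin] with ε hε
      rw [← h0, zero_add]
      exact mul_nonneg (le_of_lt hε) (h _ _ h0.symm)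
    · have : Filter.Tendsto (fun ε : ℝ => slk g p.1 p.2 + ε * slk d p.1 p.2) (nhds 0)
          (nhds (slk g p.1 p.2 + 0 * slk d p.1 p.2)) := by
        apply Continuous.tendsto (f := fun ε : ℝ => slk g p.1 p.2 + ε * slk d p.1 p.2)
        fun_prop
      have e := this.eventually (lt_mem_nhds (a := (0 : ℝ)) (by simpa using h0))
      filter_upwards [nhdsWithin_le_nhds e] with ε hε using hε.le
  have := (Filter.eventually_all_finset _).2 key
  obtain ⟨ε, hε, hp⟩ := (this.and self_mem_nhdsWithin).exists
  refine ⟨ε, hp, fun k v => ?_⟩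
  rw [slk_add_smul]
  by_cases h0 : slk d k v = 0
  · rw [h0, mul_zero, add_zero]; exact hg k v
  · exact hε (k, v) (by
      have := slk_supp hR hd k v h0
      simpa using this)

theorem exMax {f : ℤ × ℤ → ℝ} (hf : Hive f) {I : Finset (ℤ × ℤ)} {R : ℤ} (hR0 : 0 ≤ R)
    (hR : ∀ v ∈ I, |v.1| ≤ R ∧ |v.2| ≤ R) :
    ∃ g : ℤ × ℤ → ℝ, Hive g ∧ (∀ v, v ∉ I → g v = f v) ∧
      (∀ d : ℤ × ℤ → ℝ, (∀ v, 0 ≤ d v) → (∀ v, v ∉ I → d v = 0) →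
        (∀ j v, sl g j v = 0 → 0 ≤ sl d j v) → ∀ v, d v = 0) ∧
      (∀ d : ℤ × ℤ → ℝ, (∀ v, v ∉ I → d v = 0) →
        (∀ k v, slk g k v = 0 → slk d k v = 0) → ∀ v, d v = 0) := by
  have hR' : ∀ v ∈ (I : Set (ℤ × ℤ)), |v.1| ≤ R ∧ |v.2| ≤ R := fun v hv => hR v (by simpa using hv)
  let P : Set (ℤ × ℤ → ℝ) := {g | Hive g ∧ ∀ v, v ∉ I → g v = f v}
  have out : ∀ a b : ℤ, R < |a| → (a, b) ∉ I := by
    intro a b h hm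
    have := (hR _ hm).1
    simp at this; omega
  obtain ⟨φ, -, p0, p1, p2⟩ := hf.upEx (R + 1) 0
  have up : ∀ g ∈ P, ∀ v, g v ≤ φ.ev v := by
    rintro g ⟨hg, hgf⟩ v
    refine hg.gcUp φ (R + 1) 0 ?_ ?_ ?_ v
    · rw [hgf _ (out _ _ (by rw [abs_of_nonneg] <;> omega)), p0]
    · rw [hgf _ (out _ _ (by rw [abs_of_nonneg] <;> omega)), p1]
    · rw [hgf _ (out _ _ (by rw [abs_of_nonneg] <;> omega)), p2]
  let lo : ℤ × ℤ → ℝ := fun v => if v ∈ I then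
    f (-R - 1, v.2) + f (R + 1, v.2) - φ.ev ((-R - 1, v.2) + (R + 1, v.2) - v) else f v
  have low : ∀ g ∈ P, ∀ v, lo v ≤ g v := by
    rintro g ⟨hg, hgf⟩ v
    simp only [lo]
    split_ifs with hv
    · have b := (hR v hv).1
      rw [abs_le] at b
      have := hg.dd0 (u := (-R - 1, v.2)) (z := v) (w := (R + 1, v.2)) (by simp; omega) (by simp; omega)
        le_rfl le_rfl
      have u := up g ⟨hg, hgf⟩ ((-R - 1, v.2) + (R + 1, v.2) - v)
      rw [hgf (-R - 1, v.2) (out _ _ (by rw [abs_of_neg] <;> omega)),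
        hgf (R + 1, v.2) (out _ _ (by rw [abs_of_nonneg] <;> omega))] at this
      linarith
    · exact (hgf v hv).ge
  have Pc : IsCompact P := by
    have hK : IsCompact (Set.pi Set.univ fun v => Set.Icc (lo v) (φ.ev v)) :=
      isCompact_univ_pi fun v => isCompact_Icc
    refine hK.of_isClosed_subset ?_ fun g hg v _ => ⟨low g hg v, up g hg v⟩
    have : P = (⋂ k, ⋂ v, {g | 0 ≤ slk g k v}) ∩ ⋂ v, ⋂ (_ : v ∉ I), {g | g v = f v} := by
      ext g; simp [P, Hive]
    rw [this]
    refine IsClosed.inter ?_ ?_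
    · exact isClosed_iInter fun k => isClosed_iInter fun v =>
        isClosed_le continuous_const (slk_cont k v)
    · exact isClosed_iInter fun v => isClosed_iInter fun _ =>
        isClosed_eq (continuous_apply v) continuous_const
  let w : (ℤ × ℤ → ℝ) → ℝ := fun g => ∑ v ∈ I, g v
  have wc : Continuous w := by fun_prop
  have Pn : P.Nonempty := ⟨f, hf, fun _ _ => rfl⟩
  obtain ⟨gm, hgm, hmx⟩ := Pc.exists_isMaxOn Pn wc.continuousOn
  let F : Set (ℤ × ℤ → ℝ) := P ∩ {g | w g = w gm}
  have Fc : IsCompact F := Pc.inter_right (isClosed_eq wc continuous_const)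
  obtain ⟨g, ⟨⟨hg, hgf⟩, hgw⟩, hex⟩ := Fc.extremePoints_nonempty ⟨gm, hgm, rfl⟩
  have wadd : ∀ (d : ℤ × ℤ → ℝ) (ε : ℝ), w (fun u => g u + ε * d u) = w g + ε * w d := by
    intro d ε
    simp only [w, Finset.sum_add_distrib, Finset.mul_sum]
  have hle : ∀ g' ∈ P, w g' ≤ w g := fun g' h' => (hmx h').trans_eq (Eq.symm hgw)
  refine ⟨g, hg, hgf, ?_, ?_⟩
  · intro d d0 dI dt
    obtain ⟨ε, hε, hh⟩ := exEps hg hR' (d := d) (fun v hv => dI v (by simpa using hv)) (by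
      intro k v
      fin_cases k
      · intro h; have := dt 0 v; rw [← slk0, ← slk0] at this; exact this h
      · intro h; have := dt 1 v; rw [← slk1, ← slk1] at this; exact this h
      · intro h; have := dt 2 (v + (1, 0)); rw [← slk2, ← slk2] at this; exact this h)
    have := hle _ ⟨hh, fun v hv => by simp [dI v hv, hgf v hv]⟩
    rw [wadd] at this
    have wd : w d = 0 := le_antisymm (by nlinarith) (Finset.sum_nonneg fun v _ => d0 v)
    intro v
    by_cases hv : v ∈ I
    · exact (Finset.sum_eq_zero_iff_of_nonneg fun v _ => d0 v).1 wd v hv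
    · exact dI v hv
  · intro d dI dt
    have dI' : ∀ v, v ∉ (I : Set (ℤ × ℤ)) → d v = 0 := fun v hv => dI v (by simpa using hv)
    obtain ⟨ε₁, h₁, hh₁⟩ := exEps hg hR' (d := d) dI' fun k v h => (dt k v h).ge
    obtain ⟨ε₂, h₂, hh₂⟩ := exEps hg hR' (d := fun v => 0 + (-1) * d v) (fun v hv => by simp [dI' v hv])
      fun k v h => by rw [slk_add_smul (fun _ => 0) d (-1), dt k v h]; simp [slk]
    have m₁ : (fun u => g u + ε₁ * d u) ∈ P := ⟨hh₁, fun v hv => by simp [dI v hv, hgf v hv]⟩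
    have m₂ : (fun u => g u + (-ε₂) * d u) ∈ P := by
      refine ⟨?_, fun v hv => by simp [dI v hv, hgf v hv]⟩
      convert hh₂ using 2
      ring
    have w₁ := hle _ m₁
    have w₂ := hle _ m₂
    rw [wadd] at w₁ w₂
    have wd : w d = 0 := le_antisymm (by nlinarith) (by nlinarith)
    have e := hex (x₁ := fun u => g u + ε₁ * d u) ⟨m₁, by
        show w _ = w gm
        rw [wadd, wd, mul_zero, add_zero]; exact hgw⟩
      (x₂ := fun u => g u + (-ε₂) * d u) ⟨m₂, by
        show w _ = w gm
        rw [wadd, wd, mul_zero, add_zero]; exact hgw⟩ ?_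
    · intro v
      have := congrFun e v
      have : ε₁ * d v = 0 := by linarith
      exact (mul_eq_zero.1 this).resolve_left h₁.ne'
    · refine ⟨ε₂ / (ε₁ + ε₂), ε₁ / (ε₁ + ε₂), by positivity, by positivity, by field_simp; ring, ?_⟩
      ext u
      simp
      field_simp
      ring


end Part8


section Part9


/-- the open hexagon with parameters `M` -/
def hexI (M : Fin 6 → ℤ) : Finset (ℤ × ℤ) :=
  (Finset.Icc (-M 3) (M 0) ×ˢ Finset.Icc (-M 5) (M 2)).filter fun v => ∀ i, nn i v < M i

theorem mem_hexI {M : Fin 6 → ℤ} {v : ℤ × ℤ} : v ∈ hexI M ↔ ∀ i, nn i v < M i := by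
  unfold hexI
  simp only [Finset.mem_filter, Finset.mem_product, Finset.mem_Icc, and_iff_right_iff_imp]
  intro h
  have h0 : v.1 < M 0 := h 0
  have h2 : v.2 < M 2 := h 2
  have h3 : -v.1 < M 3 := h 3
  have h5 : -v.2 < M 5 := h 5
  omega

def qd (v : ℤ × ℤ) : ℝ := -((v.1 : ℝ) ^ 2 + v.1 * v.2 + (v.2 : ℝ) ^ 2)

theorem slk_qd (k : Fin 3) (v : ℤ × ℤ) : slk qd k v = 1 := by
  unfold slk qd; split_ifs <;> push_cast <;> ring

theorem sl_qd (k : Fin 6) (v : ℤ × ℤ) : sl qd k v = 1 := by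
  fin_cases k
  · exact (slk0 _ _).symm.trans (slk_qd _ _)
  · exact (slk1 _ _).symm.trans (slk_qd _ _)
  · exact (slk2' _ _).trans (slk_qd _ _)
  · exact (slk3 _ _).trans (slk_qd _ _)
  · exact (slk4 _ _).trans (slk_qd _ _)
  · exact (slk5 _ _).trans (slk_qd _ _)

theorem sl_add_smul (g d : ℤ × ℤ → ℝ) (ε : ℝ) (k : Fin 6) (v : ℤ × ℤ) :
    sl (fun u => g u + ε * d u) k v = sl g k v + ε * sl d k v := by
  unfold sl; ring

theorem strict_of {M : Fin 6 → ℤ} {f g : ℤ × ℤ → ℝ} (hg : Hive g) (hf : ∀ j v, 0 < sl f j v)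
    (hgf : ∀ v, v ∉ hexI M → g v = f v) : StrictOff g (hexI M : Set (ℤ × ℤ)) := by
  intro v hv j
  have hv' : v ∉ hexI M := by simpa using hv
  have : ∃ i, M i ≤ nn i v := by simpa [mem_hexI] using hv'
  obtain ⟨i, hi⟩ := this
  have out : ∀ l, 0 ≤ cc (i - l) → v + dr l ∉ hexI M := by
    intro l hl hm
    have := (mem_hexI.1 hm) i
    rw [nn_add, nn_dr] at this
    omega
  have p1 : 0 < sl g i v := by
    have := hf i v
    unfold sl at *
    rwa [hgf v hv', hgf _ (out _ _), hgf _ (out _ _), hgf _ (out _ _)]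
    all_goals (clear * -; revert i; decide)
  have p2 : 0 < sl g (i - 1) v := by
    have := hf (i - 1) v
    unfold sl at *
    rwa [hgf v hv', hgf _ (out _ _), hgf _ (out _ _), hgf _ (out _ _)]
    all_goals (clear * -; revert i; decide)
  have e1 : sl g (j + 1) v + sl g (j + 2) v = 2 * g v - g (v + dr j) - g (v - dr j) := by
    unfold sl
    rw [show j + 1 - 1 = j by abel, show j + 1 + 1 = j + 2 by rw [add_assoc]; rfl,
      show j + 2 - 1 = j + 1 by clear * -; revert j; decide,
      show j + 2 + 1 = j + 3 by rw [add_assoc]; rfl, dr_neg, ← sub_eq_add_neg]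
    ring
  have e2 : sl g (j - 1) v + sl g (j - 2) v = 2 * g v - g (v + dr j) - g (v - dr j) := by
    unfold sl
    rw [show j - 1 - 1 = j - 2 by clear * -; revert j; decide, show j - 1 + 1 = j by abel,
      show j - 2 - 1 = j + 3 by clear * -; revert j; decide,
      show j - 2 + 1 = j - 1 by clear * -; revert j; decide, dr_neg, ← sub_eq_add_neg]
    ring
  have n1 := hg.sl (j + 1) v
  have n2 := hg.sl (j + 2) v
  have n3 := hg.sl (j - 1) v
  have n4 := hg.sl (j - 2) v
  have cases : (j + 1 = i ∨ j + 2 = i ∨ j + 1 = i - 1 ∨ j + 2 = i - 1) ∨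
    (j - 1 = i ∨ j - 2 = i ∨ j - 1 = i - 1 ∨ j - 2 = i - 1) := by clear * -; revert i j; decide
  rcases cases with (h | h | h | h) | (h | h | h | h)
  · rw [← h] at p1; linarith
  · rw [← h] at p1; linarith
  · rw [← h] at p2; linarith
  · rw [← h] at p2; linarith
  · rw [← h] at p1; linarith
  · rw [← h] at p1; linarith
  · rw [← h] at p2; linarith
  · rw [← h] at p2; linarith

def oo : Fin 3 → ℤ × ℤ := ![(0, 1), (1, 0), (0, 0)]

structure DisjT (T : Set (Fin 3 × (ℤ × ℤ))) : Prop where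
  up : ∀ v k k', (k, v) ∈ T → (k', v) ∈ T → k = k'
  dn : ∀ w k k', (k, w + oo k) ∈ T → (k', w + oo k') ∈ T → k = k'

theorem disjT_of {g : ℤ × ℤ → ℝ} (h : ∀ v j, sl g j v = 0 → sl g (j + 1) v = 0 → False) :
    DisjT {p | slk g p.1 p.2 = 0} := by
  have a01 : ∀ v, slk g 0 v = 0 → slk g 1 v = 0 → False := by
    intro v h1 h2
    exact h v 0 (by rw [← slk0, h1]) (by rw [zero_add, ← slk1, h2])
  have a02 : ∀ v, slk g 0 v = 0 → slk g 2 v = 0 → False := by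
    intro v h1 h2
    exact h (v + (1, 0)) 2 (by rw [← slk2, h2])
      (by rw [show (2 : Fin 6) + 1 = 3 from rfl, slk3, add_sub_cancel_right, h1])
  have a12 : ∀ v, slk g 1 v = 0 → slk g 2 v = 0 → False := by
    intro v h1 h2
    exact h (v + (0, 1)) 4 (by rw [slk4, add_sub_cancel_right, h1])
      (by rw [show (4 : Fin 6) + 1 = 5 from rfl, slk5, add_sub_cancel_right, h2])
  have b12 : ∀ w, slk g 1 (w + (1, 0)) = 0 → slk g 2 w = 0 → False := by
    intro w h1 h2
    exact h (w + (1, 0)) 1 (by rw [← slk1, h1])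
      (by rw [show (1 : Fin 6) + 1 = 2 from rfl, ← slk2, h2])
  have b02 : ∀ w, slk g 0 (w + (0, 1)) = 0 → slk g 2 w = 0 → False := by
    intro w h1 h2
    exact h (w + (0, 1)) 5 (by rw [slk5, add_sub_cancel_right, h2])
      (by rw [show (5 : Fin 6) + 1 = 0 from rfl, ← slk0, h1])
  have b01 : ∀ w, slk g 0 (w + (0, 1)) = 0 → slk g 1 (w + (1, 0)) = 0 → False := by
    intro w h1 h2
    refine h (w + (1, 1)) 3 ?_ ?_
    · rw [slk3, ← h1]; congr 1; ext <;> simp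
    · rw [show (3 : Fin 6) + 1 = 4 from rfl, slk4, ← h2]; congr 1; ext <;> simp
  constructor
  · intro v k k' h1 h2
    simp only [Set.mem_ofPred_eq] at h1 h2
    fin_cases k <;> fin_cases k' <;> first | rfl | skip
    · exact (a01 v h1 h2).elim
    · exact (a02 v h1 h2).elim
    · exact (a01 v h2 h1).elim
    · exact (a12 v h1 h2).elim
    · exact (a02 v h2 h1).elim
    · exact (a12 v h2 h1).elim
  · intro v k k' h1 h2
    simp only [Set.mem_ofPred_eq] at h1 h2
    have z : v + (0, 0) = v := by ext <;> simp
    fin_cases k <;> fin_cases k' <;> simp [oo, z] at h1 h2 ⊢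
    · exact (b01 v h1 h2).elim
    · exact (b02 v h1 h2).elim
    · exact (b01 v h2 h1).elim
    · exact (b12 v h1 h2).elim
    · exact (b02 v h2 h1).elim
    · exact (b12 v h2 h1).elim

/-- rhombus vertices -/
def rhv (k : Fin 3) (v : ℤ × ℤ) : Finset (ℤ × ℤ) :=
  if k = 0 then {(v.1, v.2), (v.1 + 1, v.2), (v.1, v.2 + 1), (v.1 + 1, v.2 - 1)}
  else if k = 1 then {(v.1, v.2), (v.1, v.2 + 1), (v.1 - 1, v.2 + 1), (v.1 + 1, v.2)}
  else {(v.1 + 1, v.2), (v.1, v.2 + 1), (v.1, v.2), (v.1 + 1, v.2 + 1)}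

theorem slk_congr {f g : ℤ × ℤ → ℝ} {k : Fin 3} {v : ℤ × ℤ} (h : ∀ u ∈ rhv k v, f u = g u) :
    slk f k v = slk g k v := by
  unfold slk rhv at *
  split_ifs at * <;> simp at h ⊢ <;> obtain ⟨h1, h2, h3, h4⟩ := h <;> rw [h1, h2, h3, h4]

theorem exVertexPert {f : ℤ × ℤ → ℝ} (hf : Hive f) (M : Fin 6 → ℤ) {δ : ℝ} (hδ : 0 < δ) :
    ∃ g, Hive g ∧ (∀ v, v ∉ hexI M → g v = f v + δ * qd v) ∧ DisjT {p | slk g p.1 p.2 = 0} ∧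
      (∀ k v, slk g k v = 0 → ∃ u ∈ rhv k v, u ∈ hexI M) ∧
      (∀ d : ℤ × ℤ → ℝ, (∀ v, v ∉ hexI M → d v = 0) →
        (∀ k v, slk g k v = 0 → slk d k v = 0) → ∀ v, d v = 0) := by
  have hf' : Hive (fun v => f v + δ * qd v) := by
    intro k v
    rw [slk_add_smul, slk_qd]
    linarith [hf k v]
  let R : ℤ := |M 0| + |M 3| + |M 2| + |M 5|
  have hR : ∀ v ∈ hexI M, |v.1| ≤ R ∧ |v.2| ≤ R := by
    intro v hv
    have h := mem_hexI.1 hv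
    have h0 : v.1 < M 0 := h 0
    have h2 : v.2 < M 2 := h 2
    have h3 : -v.1 < M 3 := h 3
    have h5 : -v.2 < M 5 := h 5
    have := le_abs_self (M 0)
    have := le_abs_self (M 2)
    have := le_abs_self (M 3)
    have := le_abs_self (M 5)
    have := abs_nonneg (M 0)
    have := abs_nonneg (M 2)
    have := abs_nonneg (M 3)
    have := abs_nonneg (M 5)
    simp only [abs_le, R]
    omega
  have hR0 : 0 ≤ R := by positivity
  obtain ⟨g, hg, hgf, ha, hb⟩ := exMax hf' hR0 hR
  refine ⟨g, hg, hgf, ?_, ?_, hb⟩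
  · apply disjT_of
    have st := strict_of (M := M) hg (f := fun v => f v + δ * qd v) (fun j v => by
      rw [sl_add_smul, sl_qd]; linarith [hf.sl j v]) hgf
    exact factA hg st hR0 (fun v hv => hR v (by simpa using hv)) fun d h1 h2 h3 =>
      ha d h1 (fun v hv => h2 v (by simpa using hv)) h3
  · intro k v h
    by_contra hc
    push Not at hc
    rw [slk_congr (fun u hu => hgf u (hc u hu)), slk_add_smul, slk_qd] at h
    linarith [hf k v]

theorem exVertex {f : ℤ × ℤ → ℝ} (hf : Hive f) (M : Fin 6 → ℤ) :
    ∃ g, ∃ T : Set (Fin 3 × (ℤ × ℤ)), Hive g ∧ (∀ v, v ∉ hexI M → g v = f v) ∧ DisjT T ∧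
      (∀ k v, (k, v) ∈ T → slk g k v = 0) ∧
      (∀ k v, (k, v) ∈ T → ∃ u ∈ rhv k v, u ∈ hexI M) ∧
      (∀ d : ℤ × ℤ → ℝ, (∀ v, v ∉ hexI M → d v = 0) →
        (∀ k v, (k, v) ∈ T → slk d k v = 0) → ∀ v, d v = 0) := by
  have hpos : ∀ n : ℕ, 0 < (1 : ℝ) / (n + 1) := fun n => by positivity
  choose g hg hgf hdj htch hD using fun n : ℕ => exVertexPert hf M (hpos n)
  let E : Set (Fin 3 × (ℤ × ℤ)) := {p | ∃ u ∈ rhv p.1 p.2, u ∈ hexI M}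
  have hE : E.Finite := by
    have : E ⊆ ↑((Finset.univ : Finset (Fin 3)) ×ˢ
        (Finset.Icc (-M 3 - 1) (M 0 + 1) ×ˢ Finset.Icc (-M 5 - 1) (M 2 + 1))) := by
      rintro ⟨k, x, y⟩ ⟨u, hu, hm⟩
      have h := mem_hexI.1 hm
      have h0 : u.1 < M 0 := h 0
      have h2 : u.2 < M 2 := h 2
      have h3 : -u.1 < M 3 := h 3
      have h5 : -u.2 < M 5 := h 5
      simp only [Finset.coe_product, Set.mem_prod, Finset.mem_coe, Finset.mem_Icc, Finset.mem_univ,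
        true_and]
      unfold rhv at hu
      split_ifs at hu <;> simp at hu <;> rcases hu with rfl | rfl | rfl | rfl <;> simp at * <;> omega
    exact (Finset.finite_toSet _).subset this
  let F : ℕ → Set.powerset E := fun n => ⟨{p | slk (g n) p.1 p.2 = 0}, fun p hp => htch n p.1 p.2 hp⟩
  have : Finite (Set.powerset E) := hE.finite_subsets.to_subtype
  obtain ⟨⟨T, hTE⟩, hinf⟩ := Finite.exists_infinite_fiber F
  rw [Set.infinite_coe_iff] at hinf
  have hT : ∀ n ∈ F ⁻¹' {⟨T, hTE⟩}, ∀ k v, slk (g n) k v = 0 ↔ (k, v) ∈ T := by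
    intro n hn k v
    have : F n = ⟨T, hTE⟩ := hn
    have := congrArg Subtype.val this
    simp only [F] at this
    rw [← this]; rfl
  obtain ⟨n, hn, -⟩ := hinf.exists_gt 0
  obtain ⟨m, hm, hnm⟩ := hinf.exists_gt n
  have hDT : ∀ d : ℤ × ℤ → ℝ, (∀ v, v ∉ hexI M → d v = 0) →
        (∀ k v, (k, v) ∈ T → slk d k v = 0) → ∀ v, d v = 0 := by
    intro d h1 h2
    exact hD n d h1 fun k v h => h2 k v ((hT n hn k v).1 h)
  have hlt : (1 : ℝ) / (m + 1) < 1 / (n + 1) := by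
    apply one_div_lt_one_div_of_lt (by positivity)
    exact_mod_cast Nat.succ_lt_succ hnm
  set a : ℝ := 1 / (n + 1)
  set b : ℝ := 1 / (m + 1)
  have hab : a - b ≠ 0 := by linarith
  let γ : ℤ × ℤ → ℝ := fun v => (1 / (a - b)) * g n v + (- (1 / (a - b))) * g m v
  let g0 : ℤ × ℤ → ℝ := fun v => g n v + (-a) * γ v
  have sγ : ∀ k v, slk γ k v = (1 / (a - b)) * slk (g n) k v + (- (1 / (a - b))) * slk (g m) k v := by
    intro k v
    have := slk_add_smul (fun v => 0 + (1 / (a - b)) * g n v) (g m) (- (1 / (a - b))) k v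
    rw [slk_add_smul (fun _ => 0)] at this
    simp only [γ]
    rw [show slk (fun _ => 0) k v = 0 by simp [slk]] at this
    simpa only [zero_add] using this
  have s0 : ∀ k v, slk g0 k v = slk (g n) k v + (-a) * slk γ k v := fun k v => slk_add_smul _ _ _ _ _
  have γo : ∀ v, v ∉ hexI M → γ v = qd v := by
    intro v hv
    have e1 : g n v = f v + a * qd v := hgf n v hv
    have e2 : g m v = f v + b * qd v := hgf m v hv
    simp only [γ, e1, e2]
    clear_value a b
    field_simp
    ring
  have g0o : ∀ v, v ∉ hexI M → g0 v = f v := by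
    intro v hv
    simp only [g0, γo v hv, hgf n v hv]
    ring
  have Tγ : ∀ k v, (k, v) ∈ T → slk γ k v = 0 := by
    intro k v h
    rw [sγ, (hT n hn k v).2 h, (hT m hm k v).2 h]; simp
  have T0 : ∀ k v, (k, v) ∈ T → slk g0 k v = 0 := by
    intro k v h
    rw [s0, Tγ k v h, (hT n hn k v).2 h]; simp
  have key : ∀ l ∈ F ⁻¹' {⟨T, hTE⟩}, ∀ v, g l v = g0 v + (1 / ((l : ℝ) + 1)) * γ v := by
    intro l hl v
    have := hDT (fun v => g l v + (-1) * (g0 v + (1 / ((l : ℝ) + 1)) * γ v)) (by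
      intro v hv
      rw [g0o v hv, γo v hv, hgf l v hv]; ring) (by
      intro k v h
      rw [slk_add_smul (g l) (fun v => g0 v + (1 / ((l : ℝ) + 1)) * γ v) (-1), slk_add_smul,
        Tγ k v h, T0 k v h, (hT l hl k v).2 h]; simp) v
    linarith
  refine ⟨g0, T, ?_, g0o, ?_, T0, fun k v h => hTE h, hDT⟩
  · intro k v
    by_contra hc
    push Not at hc
    obtain ⟨N, hN⟩ := exists_nat_gt (slk γ k v / (- slk g0 k v))
    obtain ⟨l, hl, hlN⟩ := hinf.exists_gt N
    have h1 := hg l k v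
    rw [show g l = fun v => g0 v + (1 / ((l : ℝ) + 1)) * γ v from funext (key l hl), slk_add_smul] at h1
    rw [div_lt_iff₀ (by linarith)] at hN
    have hlN' : (N : ℝ) < l := by exact_mod_cast hlN
    have : slk γ k v < ((l : ℝ) + 1) * (- slk g0 k v) := hN.trans (by nlinarith)
    have h2 : (1 / ((l : ℝ) + 1)) * slk γ k v < - slk g0 k v := by
      rw [one_div, inv_mul_lt_iff₀ (by positivity)]; exact this
    linarith
  · have : T = {p | slk (g n) p.1 p.2 = 0} := by
      ext ⟨k, v⟩; exact (hT n hn k v).symm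
    rw [this]; exact hdj n


end Part9


section Part10


open Classical in
theorem circ {E N : Type*} (X : Finset E) (hX : X.Nonempty) (α β : E → N)
    (hα : ∀ e ∈ X, (∃ e' ∈ X, e' ≠ e ∧ α e' = α e) ∨ ∃ e' ∈ X, β e' = α e)
    (hβ : ∀ e ∈ X, (∃ e' ∈ X, e' ≠ e ∧ β e' = β e) ∨ ∃ e' ∈ X, α e' = β e) :
    ∃ x : E → ℝ, (∀ e, e ∉ X → x e = 0) ∧ (∃ e, x e ≠ 0) ∧
      ∀ n, ∑ e ∈ X.filter (fun e => α e = n), x e = ∑ e ∈ X.filter (fun e => β e = n), x e := by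
  let S : Finset N := X.image α ∪ X.image β
  have mα : ∀ e ∈ X, α e ∈ S := fun e he => Finset.mem_union_left _ (Finset.mem_image_of_mem _ he)
  have mβ : ∀ e ∈ X, β e ∈ S := fun e he => Finset.mem_union_right _ (Finset.mem_image_of_mem _ he)
  have cα := Finset.card_eq_sum_card_fiberwise (f := α) (s := X) (t := S) mα
  have cβ := Finset.card_eq_sum_card_fiberwise (f := β) (s := X) (t := S) mβ
  have two : ∀ n ∈ S, 2 ≤ (X.filter (fun e => α e = n)).card + (X.filter (fun e => β e = n)).card := by
    have pos : ∀ (γ : E → N), ∀ e ∈ X, ∀ n, γ e = n → 1 ≤ (X.filter (fun e => γ e = n)).card := by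
      intro γ e he n hn
      exact Finset.card_pos.2 ⟨e, by simp [he, hn]⟩
    have pos2 : ∀ (γ : E → N), ∀ e ∈ X, ∀ e' ∈ X, e' ≠ e → ∀ n, γ e = n → γ e' = n →
        2 ≤ (X.filter (fun e => γ e = n)).card := by
      intro γ e he e' he' hne n hn hn'
      exact Finset.one_lt_card.2 ⟨e', by simp [he', hn'], e, by simp [he, hn], hne⟩
    intro n hn
    rcases Finset.mem_union.1 hn with h | h
    · obtain ⟨e, he, rfl⟩ := Finset.mem_image.1 h
      rcases hα e he with ⟨e', he', hne, h'⟩ | ⟨e', he', h'⟩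
      · have := pos2 α e he e' he' hne _ rfl h'
        omega
      · have := pos α e he _ rfl
        have := pos β e' he' _ h'
        omega
    · obtain ⟨e, he, rfl⟩ := Finset.mem_image.1 h
      rcases hβ e he with ⟨e', he', hne, h'⟩ | ⟨e', he', h'⟩
      · have := pos2 β e he e' he' hne _ rfl h'
        omega
      · have := pos β e he _ rfl
        have := pos α e' he' _ h'
        omega
  have hcard : S.card ≤ X.card := by
    have h1 : S.card * 2 ≤ ∑ n ∈ S, ((X.filter (fun e => α e = n)).card +
        (X.filter (fun e => β e = n)).card) := by
      rw [← smul_eq_mul]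
      exact Finset.card_nsmul_le_sum _ _ _ two
    rw [Finset.sum_add_distrib, ← cα, ← cβ] at h1
    omega
  obtain ⟨e0, he0⟩ := hX
  let n0 := α e0
  let S' := S.erase n0
  have hS' : S'.card < X.card := by
    have : S'.card < S.card := Finset.card_erase_lt_of_mem (mα e0 he0)
    omega
  let ext : (X → ℝ) → E → ℝ := fun x e => if h : e ∈ X then x ⟨e, h⟩ else 0
  let L : (X → ℝ) →ₗ[ℝ] (S' → ℝ) :=
    { toFun := fun x n => ∑ e ∈ X.filter (fun e => α e = n), ext x e -
        ∑ e ∈ X.filter (fun e => β e = n), ext x e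
      map_add' := by
        intro x y
        have : ∀ e, ext (x + y) e = ext x e + ext y e := by
          intro e; simp only [ext]; split_ifs <;> simp
        ext n
        simp only [this, Finset.sum_add_distrib, Pi.add_apply]; ring
      map_smul' := by
        intro c x
        have : ∀ e, ext (c • x) e = c * ext x e := by
          intro e; simp only [ext]; split_ifs <;> simp
        ext n
        simp only [this, ← Finset.mul_sum, Pi.smul_apply, smul_eq_mul, RingHom.id_apply]; ring }
  have hker : LinearMap.ker L ≠ ⊥ := by
    apply LinearMap.ker_ne_bot_of_finrank_lt
    simpa using hS'
  obtain ⟨x, hx, hx0⟩ := Submodule.exists_mem_ne_zero_of_ne_bot hker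
  have hxL : ∀ n : S', ∑ e ∈ X.filter (fun e => α e = n), ext x e -
        ∑ e ∈ X.filter (fun e => β e = n), ext x e = 0 := fun n => congrFun (LinearMap.mem_ker.1 hx) n
  refine ⟨ext x, fun e he => by simp [ext, he], ?_, ?_⟩
  · by_contra hc
    push Not at hc
    apply hx0
    ext e
    have := hc e
    simpa [ext] using this
  · have other : ∀ n, n ≠ n0 → ∑ e ∈ X.filter (fun e => α e = n), ext x e =
        ∑ e ∈ X.filter (fun e => β e = n), ext x e := by
      intro n hn
      by_cases hS : n ∈ S
      · exact sub_eq_zero.1 (hxL ⟨n, Finset.mem_erase.2 ⟨hn, hS⟩⟩)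
      · rw [Finset.filter_false_of_mem, Finset.filter_false_of_mem]
        · intro e he h; exact hS (h ▸ mβ e he)
        · intro e he h; exact hS (h ▸ mα e he)
    intro n
    by_cases hn : n = n0
    · subst hn
      have t1 := Finset.sum_fiberwise_of_maps_to (s := X) (t := S) mα (ext x)
      have t2 := Finset.sum_fiberwise_of_maps_to (s := X) (t := S) mβ (ext x)
      rw [← t2, ← Finset.add_sum_erase _ _ (mα e0 he0), ← Finset.add_sum_erase _ _ (mα e0 he0)] at t1
      have t3 : ∑ n ∈ S.erase (α e0), ∑ e ∈ X.filter (fun e => α e = n), ext x e =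
          ∑ n ∈ S.erase (α e0), ∑ e ∈ X.filter (fun e => β e = n), ext x e :=
        Finset.sum_congr rfl fun n hn => other n (Finset.ne_of_mem_erase hn)
      rw [t3] at t1
      exact add_right_cancel t1
    · exact other n hn


end Part10


section Part11


abbrev EE := Fin 3 × (ℤ × ℤ)

/-- edge labels -/
def lab (g : ℤ × ℤ → ℝ) (e : EE) : ℝ :=
  if e.1 = 0 then g (e.2.1 + 1, e.2.2) - g (e.2.1, e.2.2)
  else if e.1 = 1 then g (e.2.1, e.2.2) - g (e.2.1, e.2.2 + 1)
  else g (e.2.1, e.2.2 + 1) - g (e.2.1 + 1, e.2.2)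

theorem lab_up (g : ℤ × ℤ → ℝ) (v : ℤ × ℤ) : ∑ j, lab g (j, v) = 0 := by
  simp [Fin.sum_univ_three, lab]

theorem lab_dn (g : ℤ × ℤ → ℝ) (w : ℤ × ℤ) : ∑ j, lab g (j, w + oo j) = 0 := by
  simp [Fin.sum_univ_three, lab, oo]

theorem lab_slk (g : ℤ × ℤ → ℝ) (k j : Fin 3) (v : ℤ × ℤ) (hkj : j ≠ k) (h : slk g k v = 0) :
    lab g (j, v) = lab g (j, v - oo k + oo j) := by
  fin_cases k <;> fin_cases j <;> simp [slk, lab, oo] at * <;> linarith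

theorem slk_lab (g : ℤ × ℤ → ℝ) (k : Fin 3) (v : ℤ × ℤ)
    (h : lab g (k + 1, v) = lab g (k + 1, v - oo k + oo (k + 1))) : slk g k v = 0 := by
  fin_cases k <;> simp [slk, lab, oo] at * <;> linarith

theorem poincare (μ : EE → ℝ) (up : ∀ v, ∑ j, μ (j, v) = 0) (dn : ∀ w, ∑ j, μ (j, w + oo j) = 0)
    (L : ℤ) (hL : ∀ j x y, x ≤ L → μ (j, (x, y)) = 0) :
    ∃ d : ℤ × ℤ → ℝ, (∀ e, lab d e = μ e) ∧
      ∀ x y, d (x, y) = ∑ i ∈ Finset.Ico L x, μ (0, (i, y)) := by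
  let d : ℤ × ℤ → ℝ := fun v => ∑ i ∈ Finset.Ico L v.1, μ (0, (i, v.2))
  have h0 : ∀ x y, d (x + 1, y) - d (x, y) = μ (0, (x, y)) := by
    intro x y
    simp only [d]
    rcases lt_or_ge x L with h | h
    · rw [Finset.Ico_eq_empty (by omega), Finset.Ico_eq_empty (by omega), hL _ _ _ h.le]; simp
    · rw [← Finset.insert_Ico_right_eq_Ico_add_one h]
      simp
  have low : ∀ x y, x ≤ L → d (x, y) = 0 := by
    intro x y h
    simp only [d]
    rw [Finset.Ico_eq_empty (by omega)]; simp
  simp only [Fin.sum_univ_three] at up dn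
  have h1' : ∀ n : ℕ, ∀ y, d (L + n, y) - d (L + n, y + 1) = μ (1, (L + n, y)) := by
    intro n
    induction n with
    | zero => intro y; simp [low, hL]
    | succ n ih =>
      intro y
      have a := h0 (L + n) y
      have b := h0 (L + n) (y + 1)
      have c := ih y
      have u := up (L + n, y)
      have w := dn (L + n, y)
      simp [oo] at w
      push_cast
      rw [← add_assoc]
      linarith
  have h1 : ∀ x y, d (x, y) - d (x, y + 1) = μ (1, (x, y)) := by
    intro x y
    rcases le_or_gt x L with h | h
    · simp [low x _ h, hL _ x _ h]
    · have := h1' (x - L).toNat y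
      rwa [show L + ((x - L).toNat : ℤ) = x by omega] at this
  refine ⟨d, ?_, fun _ _ => rfl⟩
  rintro ⟨k, x, y⟩
  have a := h0 x y
  have b := h1 x y
  have u := up (x, y)
  fin_cases k <;> simp [lab] <;> linarith

def ZZ : AddSubgroup ℝ := (Int.castAddHom ℝ).range

/-- the two ends of an edge -/
def eds (e : EE) : (ℤ × ℤ) × (ℤ × ℤ) :=
  if e.1 = 0 then ((e.2.1 + 1, e.2.2), (e.2.1, e.2.2))
  else if e.1 = 1 then ((e.2.1, e.2.2), (e.2.1, e.2.2 + 1))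
  else ((e.2.1, e.2.2 + 1), (e.2.1 + 1, e.2.2))

theorem lab_eds (g : ℤ × ℤ → ℝ) (e : EE) : lab g e = g (eds e).1 - g (eds e).2 := by
  unfold lab eds; split_ifs <;> rfl

/-- if both ends of the short diagonal are fixed, one of the two adjacent triangles is all fixed -/
theorem fixed_tri {M : Fin 6 → ℤ} (k : Fin 3) (v : ℤ × ℤ) (h1 : (eds (k, v)).1 ∉ hexI M)
    (h2 : (eds (k, v)).2 ∉ hexI M) :
    (∀ j, (eds (j, v)).1 ∉ hexI M ∧ (eds (j, v)).2 ∉ hexI M) ∨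
    (∀ j, (eds (j, v - oo k + oo j)).1 ∉ hexI M ∧ (eds (j, v - oo k + oo j)).2 ∉ hexI M) := by
  obtain ⟨x, y⟩ := v
  have P : ∀ a b : ℤ, (a, b) ∈ hexI M ↔ (a < M 0 ∧ a + b < M 1 ∧ b < M 2 ∧ -a < M 3 ∧ -a - b < M 4 ∧
      -b < M 5) := by
    intro a b
    rw [mem_hexI]
    simp [Fin.forall_fin_succ, nn]
  by_contra hc
  rw [not_or] at hc
  obtain ⟨c1, c2⟩ := hc
  fin_cases k
  · have e1 : (x, y + 1) ∈ hexI M := by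
      by_contra h; apply c1; intro j; fin_cases j <;> simp [eds] at * <;> tauto
    have e2 : (x + 1, y - 1) ∈ hexI M := by
      by_contra h; apply c2; intro j; fin_cases j <;> simp [eds, oo] at * <;> tauto
    simp [eds] at h1
    rw [P] at *
    omega
  · have e1 : (x + 1, y) ∈ hexI M := by
      by_contra h; apply c1; intro j; fin_cases j <;> simp [eds] at * <;> tauto
    have e2 : (x - 1, y + 1) ∈ hexI M := by
      by_contra h; apply c2; intro j; fin_cases j <;> simp [eds, oo] at * <;> tauto
    simp [eds] at h1
    rw [P] at *
    omega
  · have e1 : (x, y) ∈ hexI M := by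
      by_contra h; apply c1; intro j; fin_cases j <;> simp [eds] at * <;> tauto
    have e2 : (x + 1, y + 1) ∈ hexI M := by
      by_contra h; apply c2; intro j; fin_cases j <;> simp [eds, oo] at * <;> tauto
    simp [eds] at h1
    rw [P] at *
    omega


end Part11


section Part12


inductive Nd
  | u (v : ℤ × ℤ)
  | d (w : ℤ × ℤ)
  | m (v : ℤ × ℤ) (j : Fin 3)

open Classical in
def nda (T : Set EE) (e : EE) : Nd := if ∃ k, (k, e.2) ∈ T then Nd.m e.2 e.1 else Nd.u e.2

open Classical in
def ndb (T : Set EE) (e : EE) : Nd :=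
  if h : ∃ k, (k, e.2 - oo e.1 + oo k) ∈ T then Nd.m (e.2 - oo e.1 + oo h.choose) e.1
  else Nd.d (e.2 - oo e.1)

theorem ndb_m {T : Set EE} (hT : DisjT T) {e : EE} {k : Fin 3} (h : (k, e.2 - oo e.1 + oo k) ∈ T) :
    ndb T e = Nd.m (e.2 - oo e.1 + oo k) e.1 := by
  have hh : ∃ k, (k, e.2 - oo e.1 + oo k) ∈ T := ⟨k, h⟩
  unfold ndb
  rw [dif_pos hh]
  rw [hT.dn _ _ _ hh.choose_spec h]

theorem ndb_d {T : Set EE} {e : EE} (h : ¬ ∃ k, (k, e.2 - oo e.1 + oo k) ∈ T) :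
    ndb T e = Nd.d (e.2 - oo e.1) := by
  unfold ndb
  rw [dif_neg h]

theorem nda_m {T : Set EE} {e : EE} {k : Fin 3} (h : (k, e.2) ∈ T) : nda T e = Nd.m e.2 e.1 := by
  unfold nda
  rw [if_pos ⟨k, h⟩]

theorem nda_u {T : Set EE} {e : EE} (h : ¬ ∃ k, (k, e.2) ∈ T) : nda T e = Nd.u e.2 := by
  unfold nda
  rw [if_neg h]

theorem sum_ZZ {a : Fin 3 → ℝ} (h : ∑ j, a j = 0) (j : Fin 3) (hj : ∀ i, i ≠ j → a i ∈ ZZ) : a j ∈ ZZ := by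
  rw [← Finset.add_sum_erase _ _ (Finset.mem_univ j)] at h
  rw [eq_neg_of_add_eq_zero_left h]
  exact neg_mem (sum_mem fun i hi => hj i (Finset.ne_of_mem_erase hi))

open Classical in
theorem sum_filter_one {X : Finset EE} {x : EE → ℝ} (hx : ∀ e, e ∉ X → x e = 0) (p : EE → Prop)
    (e0 : EE) (h : ∀ e, p e ↔ e = e0) : ∑ e ∈ X.filter p, x e = x e0 := by
  by_cases he : e0 ∈ X
  · rw [Finset.sum_eq_single_of_mem e0]
    · simp [he, h]
    · intro b hb hne
      simp [h] at hb
      exact absurd hb.2 hne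
  · rw [hx e0 he]
    apply Finset.sum_eq_zero
    intro b hb
    simp [h] at hb
    rw [hb.2, hx e0 he]

open Classical in
theorem sum_filter_three {X : Finset EE} {x : EE → ℝ} (hx : ∀ e, e ∉ X → x e = 0) (p : EE → Prop)
    (f : Fin 3 → ℤ × ℤ) (h : ∀ e, p e ↔ e.2 = f e.1) :
    ∑ e ∈ X.filter p, x e = ∑ j, x (j, f j) := by
  have : ∑ j, x (j, f j) = ∑ e ∈ Finset.univ.image (fun j => (j, f j)), x e := by
    rw [Finset.sum_image]
    intro a _ b _ hab
    exact (Prod.ext_iff.1 hab).1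
  rw [this]
  apply Finset.sum_subset
  · rintro ⟨k, v⟩ he
    simp [h] at he
    simp [he.2]
  · rintro ⟨k, v⟩ he hn
    simp at he
    apply hx
    intro hX
    apply hn
    simp [hX, h, he]

theorem integ {g : ℤ × ℤ → ℝ} {M : Fin 6 → ℤ} {T : Set EE} (hT : DisjT T)
    (hT0 : ∀ k v, (k, v) ∈ T → slk g k v = 0)
    (hD : ∀ d : ℤ × ℤ → ℝ, (∀ v, v ∉ hexI M → d v = 0) →
        (∀ k v, (k, v) ∈ T → slk d k v = 0) → ∀ v, d v = 0)
    (hbInt : ∀ v, v ∉ hexI M → g v ∈ ZZ) : ∀ v, g v ∈ ZZ := by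
  classical
  let X' : Set EE := {e | e ∉ T ∧ lab g e ∉ ZZ}
  have fixX : ∀ e, (eds e).1 ∉ hexI M → (eds e).2 ∉ hexI M → e ∉ X' := by
    intro e h1 h2 he
    apply he.2
    rw [lab_eds]
    exact sub_mem (hbInt _ h1) (hbInt _ h2)
  have bdX : ∀ e ∈ X', e.2 ∈ Finset.Icc (-M 3 - 1) (M 0 + 1) ×ˢ Finset.Icc (-M 5 - 1) (M 2 + 1) := by
    rintro ⟨k, x, y⟩ he
    have : (eds (k, x, y)).1 ∈ hexI M ∨ (eds (k, x, y)).2 ∈ hexI M := by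
      by_contra hc
      rw [not_or] at hc
      exact fixX _ hc.1 hc.2 he
    have B : ∀ u ∈ hexI M, u.1 < M 0 ∧ u.2 < M 2 ∧ -u.1 < M 3 ∧ -u.2 < M 5 := by
      intro u hu
      have h := mem_hexI.1 hu
      exact ⟨h 0, h 2, h 3, h 5⟩
    simp only [Finset.mem_product, Finset.mem_Icc]
    unfold eds at this
    split_ifs at this <;> simp only at this <;> rcases this with h | h <;> have := B _ h <;>
      simp only at this <;> omega
  have finX : X'.Finite := by
    have : X' ⊆ ↑((Finset.univ : Finset (Fin 3)) ×ˢ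
        (Finset.Icc (-M 3 - 1) (M 0 + 1) ×ˢ Finset.Icc (-M 5 - 1) (M 2 + 1))) := by
      intro e he
      have := bdX e he
      exact Finset.mem_coe.2 (Finset.mem_product.2 ⟨Finset.mem_univ _, this⟩)
    exact (Finset.finite_toSet _).subset this
  let X : Finset EE := finX.toFinset
  have mX : ∀ e, e ∈ X ↔ e ∉ T ∧ lab g e ∉ ZZ := fun e => by simp [X, X']
  have key : X = ∅ := by
    by_contra hne
    have hne' : X.Nonempty := Finset.nonempty_iff_ne_empty.2 hne
    obtain ⟨x, hx0, ⟨e1, he1⟩, hn⟩ := circ X hne' (nda T) (ndb T) (by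
      rintro ⟨j, v⟩ he
      obtain ⟨heT, heZ⟩ := (mX _).1 he
      by_cases hm : ∃ k, (k, v) ∈ T
      · obtain ⟨k, hk⟩ := hm
        have hjk : j ≠ k := fun h => heT (h ▸ hk)
        right
        refine ⟨(j, v - oo k + oo j), (mX _).2 ⟨?_, ?_⟩, ?_⟩
        · intro h
          exact hjk (hT.dn (v - oo k) j k h (by rwa [sub_add_cancel]))
        · rwa [← lab_slk g k j v hjk (hT0 k v hk)]
        · rw [nda_m (e := (j, v)) hk, ndb_m hT (e := (j, v - oo k + oo j)) (k := k)]
          · simp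
          · simpa using hk
      · left
        have : ∃ i, i ≠ j ∧ lab g (i, v) ∉ ZZ := by
          by_contra hc
          push Not at hc
          exact heZ (sum_ZZ (a := fun j => lab g (j, v)) (lab_up g v) j hc)
        obtain ⟨i, hij, hi⟩ := this
        refine ⟨(i, v), (mX _).2 ⟨fun h => hm ⟨i, h⟩, hi⟩, ?_, ?_⟩
        · intro h; exact hij (Prod.ext_iff.1 h).1
        · rw [nda_u (e := (i, v)) hm, nda_u (e := (j, v)) hm]) (by
      rintro ⟨j, v⟩ he
      obtain ⟨heT, heZ⟩ := (mX _).1 he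
      by_cases hm : ∃ k, (k, v - oo j + oo k) ∈ T
      · obtain ⟨k, hk⟩ := hm
        have hjk : j ≠ k := by
          rintro rfl
          apply heT; simpa using hk
        right
        refine ⟨(j, v - oo j + oo k), (mX _).2 ⟨?_, ?_⟩, ?_⟩
        · intro h
          exact hjk (hT.up _ _ _ h hk)
        · rw [lab_slk g k j _ hjk (hT0 k _ hk)]
          simpa using heZ
        · rw [nda_m (e := (j, v - oo j + oo k)) hk, ndb_m hT (e := (j, v)) hk]
      · left
        have : ∃ i, i ≠ j ∧ lab g (i, v - oo j + oo i) ∉ ZZ := by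
          by_contra hc
          push Not at hc
          apply heZ
          have := sum_ZZ (a := fun i => lab g (i, v - oo j + oo i)) (lab_dn g (v - oo j)) j hc
          simpa using this
        obtain ⟨i, hij, hi⟩ := this
        refine ⟨(i, v - oo j + oo i), (mX _).2 ⟨fun h => hm ⟨i, h⟩, hi⟩, ?_, ?_⟩
        · intro h; exact hij (Prod.ext_iff.1 h).1
        · rw [ndb_d (e := (i, v - oo j + oo i)), ndb_d (e := (j, v)) hm]
          · simp
          · simpa using hm)
    have xT : ∀ e ∈ T, x e = 0 := fun e he => hx0 e fun h => ((mX e).1 h).1 he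
    -- unmatched triangles
    have hup : ∀ v, (¬ ∃ k, (k, v) ∈ T) → ∑ j, x (j, v) = 0 := by
      intro v hv
      have := hn (Nd.u v)
      rw [sum_filter_three hx0 _ (fun _ => v)] at this
      · rw [this]
        apply Finset.sum_eq_zero
        intro e he
        have h2 := (Finset.mem_filter.1 he).2
        unfold ndb at h2
        split_ifs at h2
      · intro e
        constructor
        · intro h
          unfold nda at h
          split_ifs at h
          exact Nd.u.inj h
        · intro h
          rw [nda_u (by rw [h]; exact hv), h]
    have hdn : ∀ w, (¬ ∃ k, (k, w + oo k) ∈ T) → ∑ j, x (j, w + oo j) = 0 := by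
      intro w hv
      have := hn (Nd.d w)
      rw [sum_filter_three hx0 (fun e => ndb T e = Nd.d w) (fun j => w + oo j)] at this
      · rw [← this]
        apply Finset.sum_eq_zero
        intro e he
        have h2 := (Finset.mem_filter.1 he).2
        unfold nda at h2
        split_ifs at h2
      · intro e
        constructor
        · intro h
          unfold ndb at h
          split_ifs at h
          rw [← Nd.d.inj h]; simp
        · intro h
          have e1 : e.2 - oo e.1 = w := by rw [h]; simp
          rw [ndb_d (by rw [e1]; exact hv), e1]
    have hmt : ∀ k v j, (k, v) ∈ T → j ≠ k → x (j, v) = x (j, v - oo k + oo j) := by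
      intro k v j hk hjk
      have := hn (Nd.m v j)
      rw [sum_filter_one hx0 _ (j, v), sum_filter_one hx0 _ (j, v - oo k + oo j)] at this
      · exact this
      · intro e
        constructor
        · intro h
          unfold ndb at h
          split_ifs at h with h3
          have h4 := Nd.m.inj h
          have h5 := h3.choose_spec
          rw [h4.1] at h5
          have h6 := hT.up _ _ _ h5 hk
          rw [h6] at h4
          obtain ⟨k', v'⟩ := e
          have h7 := h4.2
          have h8 := h4.1
          simp only at h7 h8
          subst h7
          rw [← h8]; simp
        · rintro rfl
          rw [ndb_m hT (k := k)]
          · simp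
          · simpa using hk
      · intro e
        constructor
        · intro h
          unfold nda at h
          split_ifs at h
          have h4 := Nd.m.inj h
          exact Prod.ext h4.2 h4.1
        · rintro rfl
          exact nda_m (e := (j, v)) hk
    let μ : EE → ℝ := fun e => if e ∈ T then - ∑ j, x (j, e.2) else x e
    have μn : ∀ e, e ∉ T → μ e = x e := fun e he => by simp only [μ, if_neg he]
    have μt : ∀ e, e ∈ T → μ e = - ∑ j, x (j, e.2) := fun e he => by simp only [μ, if_pos he]
    have μup : ∀ v, ∑ j, μ (j, v) = 0 := by
      intro v
      by_cases hv : ∃ k, (k, v) ∈ T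
      · obtain ⟨k, hk⟩ := hv
        rw [← Finset.add_sum_erase _ _ (Finset.mem_univ k), μt _ hk]
        rw [← Finset.add_sum_erase _ _ (Finset.mem_univ k), xT _ hk]
        have : ∑ j ∈ Finset.univ.erase k, μ (j, v) = ∑ j ∈ Finset.univ.erase k, x (j, v) := by
          refine Finset.sum_congr rfl fun j hj => μn _ fun h => ?_
          exact (Finset.ne_of_mem_erase hj) (hT.up _ _ _ h hk)
        rw [this]; ring
      · rw [← hup v hv]
        exact Finset.sum_congr rfl fun j hj => μn _ fun h => hv ⟨j, h⟩
    have μdn : ∀ w, ∑ j, μ (j, w + oo j) = 0 := by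
      intro w
      by_cases hv : ∃ k, (k, w + oo k) ∈ T
      · obtain ⟨k, hk⟩ := hv
        rw [← Finset.add_sum_erase _ _ (Finset.mem_univ k), μt _ hk]
        rw [← Finset.add_sum_erase _ _ (Finset.mem_univ k), xT _ hk]
        have : ∑ j ∈ Finset.univ.erase k, μ (j, w + oo j) =
            ∑ j ∈ Finset.univ.erase k, x (j, w + oo k) := by
          refine Finset.sum_congr rfl fun j hj => ?_
          have hjk := Finset.ne_of_mem_erase hj
          rw [hmt k _ j hk hjk, add_sub_cancel_right]
          refine μn _ fun h => hjk (hT.dn _ _ _ h hk)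
        rw [this]; simp
      · rw [← hdn w hv]
        exact Finset.sum_congr rfl fun j hj => μn _ fun h => hv ⟨j, h⟩
    obtain ⟨d, hd, hds⟩ := poincare μ μup μdn (-M 3 - 2) (by
      intro j a b hab
      have z : ∀ i, x (i, (a, b)) = 0 := by
        intro i
        refine hx0 _ fun h => ?_
        have := bdX _ (finX.mem_toFinset.1 h)
        simp only [Finset.mem_product, Finset.mem_Icc] at this
        omega
      simp only [μ]
      split_ifs
      · simp [z]
      · exact z j)
    have fn : ∀ e, e ∉ T → (eds e).1 ∉ hexI M → (eds e).2 ∉ hexI M → μ e = 0 := by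
      intro e he h1 h2
      rw [μn e he]
      exact hx0 _ fun h => fixX e h1 h2 (finX.mem_toFinset.1 h)
    have ff : ∀ e, (eds e).1 ∉ hexI M → (eds e).2 ∉ hexI M → μ e = 0 := by
      rintro ⟨k, v⟩ h1 h2
      by_cases he : (k, v) ∈ T
      · rcases fixed_tri k v h1 h2 with h | h
        · have := μup v
          rw [← Finset.add_sum_erase _ _ (Finset.mem_univ k), Finset.sum_eq_zero, add_zero] at this
          · exact this
          · intro j hj
            exact fn _ (fun h' => Finset.ne_of_mem_erase hj (hT.up _ _ _ h' he)) (h j).1 (h j).2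
        · have := μdn (v - oo k)
          rw [← Finset.add_sum_erase _ _ (Finset.mem_univ k), Finset.sum_eq_zero, add_zero] at this
          · simpa using this
          · intro j hj
            exact fn _ (fun h' => Finset.ne_of_mem_erase hj (hT.dn _ _ _ h' (by simpa using he)))
              (h j).1 (h j).2
      · exact fn _ he h1 h2
    have dl : ∀ a b, (∀ c, c ≤ a → (c, b) ∉ hexI M) → d (a, b) = 0 := by
      intro a b h
      rw [hds]
      apply Finset.sum_eq_zero
      intro i hi
      rw [Finset.mem_Ico] at hi
      exact ff _ (h _ (by simp; omega)) (h _ (by simp; omega))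
    have dtop : ∀ a b, M 2 ≤ b → d (a, b) = 0 := by
      intro a b h
      refine dl a b fun c _ hm => ?_
      have : b < M 2 := mem_hexI.1 hm 2
      omega
    have dup : ∀ n : ℕ, ∀ a b, M 2 ≤ b + n → (∀ c, b ≤ c → (a, c) ∉ hexI M) → d (a, b) = 0 := by
      intro n
      induction n with
      | zero => intro a b h _; exact dtop a b (by simpa using h)
      | succ n ih =>
        intro a b h hc
        have h1 := ih a (b + 1) (by push_cast at h; omega) fun c hbc => hc c (by omega)
        have h2 := hd (1, (a, b))
        rw [ff (1, (a, b)) (hc _ le_rfl) (hc _ (by simp))] at h2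
        simp [lab] at h2
        linarith
    have dz : ∀ v, v ∉ hexI M → d v = 0 := by
      rintro ⟨a, b⟩ hv
      have : ∃ i, M i ≤ nn i (a, b) := by simpa [mem_hexI] using hv
      obtain ⟨i, hi⟩ := this
      have left : ∀ i : Fin 6, M i ≤ nn i (a, b) → (∀ c, c ≤ a → nn i (a, b) ≤ nn i (c, b)) →
          d (a, b) = 0 := by
        intro i h1 h2
        refine dl a b fun c hc hm => ?_
        have := mem_hexI.1 hm i
        have := h2 c hc
        omega
      have upw : ∀ i : Fin 6, M i ≤ nn i (a, b) → (∀ c, b ≤ c → nn i (a, b) ≤ nn i (a, c)) →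
          d (a, b) = 0 := by
        intro i h1 h2
        refine dup (M 2 - b).toNat a b (by omega) fun c hc hm => ?_
        have := mem_hexI.1 hm i
        have := h2 c hc
        omega
      fin_cases i
      · exact upw 0 hi (by intro c hc; simp [nn])
      · exact upw 1 hi (by intro c hc; simp [nn]; omega)
      · exact left 2 hi (by intro c hc; simp [nn])
      · exact left 3 hi (by intro c hc; simp [nn]; omega)
      · exact left 4 hi (by intro c hc; simp [nn]; omega)
      · exact left 5 hi (by intro c hc; simp [nn])
    have d0 := hD d dz (by
      intro k v hk
      have hjk : k + 1 ≠ k := by clear * -; revert k; decide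
      apply slk_lab
      rw [hd, hd, μn, μn]
      · exact hmt k v (k + 1) hk hjk
      · exact fun h => hjk (hT.dn (v - oo k) _ _ h (by simpa using hk))
      · exact fun h => hjk (hT.up _ _ _ h hk))
    apply he1
    have e1T : e1 ∉ T := fun h => he1 (xT e1 h)
    rw [← μn e1 e1T, ← hd e1]
    simp [lab_eds, d0]
  have labT : ∀ e, e ∉ T → lab g e ∈ ZZ := by
    intro e he
    by_contra hc
    have := (mX e).2 ⟨he, hc⟩
    rw [key] at this
    simp at this
  have labZ : ∀ e, lab g e ∈ ZZ := by
    rintro ⟨k, v⟩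
    by_cases he : (k, v) ∈ T
    · refine sum_ZZ (a := fun j => lab g (j, v)) (lab_up g v) k fun i hi => ?_
      exact labT _ fun h => hi (hT.up _ _ _ h he)
    · exact labT _ he
  have row : ∀ n : ℕ, ∀ y, g (-M 3 + n, y) ∈ ZZ := by
    intro n
    induction n with
    | zero =>
      intro y
      apply hbInt
      intro hm
      have := mem_hexI.1 hm 3
      simp [nn] at this
    | succ n ih =>
      intro y
      have h1 := labZ (0, (-M 3 + n, y))
      have h2 := add_mem h1 (ih y)
      simp [lab] at h2
      push_cast
      rw [← add_assoc]
      exact h2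
  rintro ⟨a, b⟩
  by_cases h : (a, b) ∈ hexI M
  · have h3 : -a < M 3 := mem_hexI.1 h 3
    have := row (a + M 3).toNat b
    rwa [show -M 3 + ((a + M 3).toNat : ℤ) = a by omega] at this
  · exact hbInt _ h

theorem latticeMain {f : ℤ × ℤ → ℝ} (hf : Hive f) (M : Fin 6 → ℤ)
    (hbInt : ∀ v, v ∉ hexI M → f v ∈ ZZ) :
    ∃ g, Hive g ∧ (∀ v, v ∉ hexI M → g v = f v) ∧ ∀ v, g v ∈ ZZ := by
  obtain ⟨g, T, hg, hgf, hT, hT0, -, hD⟩ := exVertex hf M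
  exact ⟨g, hg, hgf, integ hT hT0 hD fun v hv => by rw [hgf v hv]; exact hbInt v hv⟩


end Part12


section Part13


structure Bx where
  a1 : ℤ
  b1 : ℤ
  a2 : ℤ
  b2 : ℤ
  a3 : ℤ
  b3 : ℤ
  h1 : a1 < b1
  h2 : a2 < b2
  h3 : a3 < b3
  h4 : a1 + a2 ≤ a3
  h5 : a3 ≤ a1 + b2
  h6 : a3 ≤ b1 + a2
  h7 : b1 + a2 ≤ b3
  h8 : a1 + b2 ≤ b3
  h9 : b3 ≤ b1 + b2

def Bx.tri (B : Bx) (t : ℤ × ℤ × ℤ) : Prop :=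
  B.a1 ≤ t.1 ∧ t.1 < B.b1 ∧ B.a2 ≤ t.2.1 ∧ t.2.1 < B.b2 ∧ B.a3 ≤ t.2.2 ∧ t.2.2 < B.b3

def Bx.pt (B : Bx) (v : ℤ × ℤ) : Prop :=
  B.a1 ≤ v.1 ∧ v.1 ≤ B.b1 ∧ B.a2 ≤ v.2 ∧ v.2 ≤ B.b2 ∧ B.a3 ≤ v.1 + v.2 ∧ v.1 + v.2 ≤ B.b3

theorem open_pt {Rg : ℝ → ℝ → Prop}
    (hc : ∀ s t s' t' ε : ℝ, Rg s t → Rg s' t' → 0 ≤ ε → ε ≤ 1 → Rg (s + ε * (s' - s)) (t + ε * (t' - t)))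
    {s t s' t' : ℝ} (h : Rg s t) (h' : Rg s' t') :
    ∃ ε : ℝ, 0 < ε ∧ |ε * (s' - s)| < 1 / 4 ∧ |ε * (t' - t)| < 1 / 4 ∧
      Rg (s + ε * (s' - s)) (t + ε * (t' - t)) := by
  set A := |s' - s| + |t' - t| with hA
  have A0 : 0 ≤ A := by positivity
  have h1 : |s' - s| ≤ A := by have := abs_nonneg (t' - t); linarith
  have h2 : |t' - t| ≤ A := by have := abs_nonneg (s' - s); linarith
  have hp : (0 : ℝ) < 1 / (5 * (A + 1)) := by positivity
  have hA1 : 1 / (5 * (A + 1)) * A < 1 / 4 := by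
    rw [one_div, inv_mul_lt_iff₀ (by positivity)]; linarith
  refine ⟨1 / (5 * (A + 1)), hp, ?_, ?_, hc _ _ _ _ _ h h' hp.le ?_⟩
  · rw [abs_mul, abs_of_pos hp]
    exact (mul_le_mul_of_nonneg_left h1 hp.le).trans_lt hA1
  · rw [abs_mul, abs_of_pos hp]
    exact (mul_le_mul_of_nonneg_left h2 hp.le).trans_lt hA1
  · rw [div_le_one (by positivity)]; linarith

theorem boxLemma (S : Finset (ℤ × ℤ × ℤ)) (hne : S.Nonempty) (Rg : ℝ → ℝ → Prop)
    (hc : ∀ s t s' t' ε : ℝ, Rg s t → Rg s' t' → 0 ≤ ε → ε ≤ 1 → Rg (s + ε * (s' - s)) (t + ε * (t' - t)))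
    (hS : ∀ p q r, (p, q, r) ∈ S → r = p + q ∨ r = p + q + 1)
    (hU : ∀ p q : ℤ, (p, q, p + q) ∈ S → Rg p q ∧ Rg (p + 1) q ∧ Rg p (q + 1))
    (hD : ∀ p q : ℤ, (p, q, p + q + 1) ∈ S → Rg (p + 1) q ∧ Rg p (q + 1) ∧ Rg (p + 1) (q + 1))
    (hR : ∀ s t, Rg s t → ∃ p q r : ℤ, (p, q, r) ∈ S ∧ p ≤ s ∧ s ≤ p + 1 ∧ q ≤ t ∧ t ≤ q + 1 ∧
      r ≤ s + t ∧ s + t ≤ r + 1) :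
    ∃ B : Bx, ∀ p q r, (p, q, r) ∈ S ↔ B.tri (p, q, r) ∧ (r = p + q ∨ r = p + q + 1) := by
  have opn : ∀ (s t : ℝ) (p q r : ℤ), Rg s t → p < s → s < p + 1 → q < t → t < q + 1 → r < s + t →
      s + t < r + 1 → (p, q, r) ∈ S := by
    intro s t p q r h h1 h2 h3 h4 h5 h6
    obtain ⟨p', q', r', hm, g1, g2, g3, g4, g5, g6⟩ := hR s t h
    have e1 : (p : ℝ) < p' + 1 := by linarith
    have e2 : (p' : ℝ) < p + 1 := by linarith
    have e3 : (q : ℝ) < q' + 1 := by linarith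
    have e4 : (q' : ℝ) < q + 1 := by linarith
    have e5 : (r : ℝ) < r' + 1 := by linarith
    have e6 : (r' : ℝ) < r + 1 := by linarith
    norm_cast at e1 e2 e3 e4 e5 e6
    rwa [show p = p' by omega, show q = q' by omega, show r = r' by omega]
  -- extreme vertices
  have vx0 : ∀ p q r, (p, q, r) ∈ S → ∃ t, Rg p t := by
    intro p q r h
    rcases hS p q r h with rfl | rfl
    · exact ⟨_, (hU p q h).1⟩
    · exact ⟨_, (hD p q h).2.1⟩
  have vx1 : ∀ p q r, (p, q, r) ∈ S → ∃ t, Rg (p + 1) t := by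
    intro p q r h
    rcases hS p q r h with rfl | rfl
    · exact ⟨_, (hU p q h).2.1⟩
    · exact ⟨_, (hD p q h).1⟩
  have vy0 : ∀ p q r, (p, q, r) ∈ S → ∃ s, Rg s q := by
    intro p q r h
    rcases hS p q r h with rfl | rfl
    · exact ⟨_, (hU p q h).1⟩
    · exact ⟨_, (hD p q h).1⟩
  have vy1 : ∀ p q r, (p, q, r) ∈ S → ∃ s, Rg s (q + 1) := by
    intro p q r h
    rcases hS p q r h with rfl | rfl
    · exact ⟨_, (hU p q h).2.2⟩
    · exact ⟨_, (hD p q h).2.1⟩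
  have vz0 : ∀ p q r : ℤ, (p, q, r) ∈ S → ∃ s t, Rg s t ∧ s + t = r := by
    intro p q r h
    rcases hS p q r h with rfl | rfl
    · exact ⟨_, _, (hU p q h).1, by push_cast; ring⟩
    · exact ⟨_, _, (hD p q h).1, by push_cast; ring⟩
  have vz1 : ∀ p q r : ℤ, (p, q, r) ∈ S → ∃ s t, Rg s t ∧ s + t = r + 1 := by
    intro p q r h
    rcases hS p q r h with rfl | rfl
    · exact ⟨_, _, (hU p q h).2.1, by push_cast; ring⟩
    · exact ⟨_, _, (hD p q h).2.2, by push_cast; ring⟩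
  have mid : ∀ s t s' t' : ℝ, Rg s t → Rg s' t' → Rg (s + (1 / 2) * (s' - s)) (t + (1 / 2) * (t' - t)) :=
    fun s t s' t' h h' => hc _ _ _ _ _ h h' (by norm_num) (by norm_num)
  -- moves
  have mu1 : ∀ p q p' q' r' : ℤ, (p, q, p + q) ∈ S → (p', q', r') ∈ S → p' < p →
      (p - 1, q, p + q) ∈ S := by
    intro p q p' q' r' h h' hlt
    obtain ⟨t', ht'⟩ := vx0 _ _ _ h'
    obtain ⟨ε, e0, e1, e2, e3⟩ := open_pt hc (mid _ _ _ _ (hU p q h).1 (hU p q h).2.2) ht'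
    have hlt' : (p' : ℝ) < p := by exact_mod_cast hlt
    have neg := mul_pos e0 (sub_pos.2 hlt')
    rw [abs_lt] at e1 e2
    refine opn _ _ _ _ _ e3 ?_ ?_ ?_ ?_ ?_ ?_ <;> push_cast <;> linarith
  have mu2 : ∀ p q p' q' r' : ℤ, (p, q, p + q) ∈ S → (p', q', r') ∈ S → q' < q →
      (p, q - 1, p + q) ∈ S := by
    intro p q p' q' r' h h' hlt
    obtain ⟨t', ht'⟩ := vy0 _ _ _ h'
    obtain ⟨ε, e0, e1, e2, e3⟩ := open_pt hc (mid _ _ _ _ (hU p q h).1 (hU p q h).2.1) ht'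
    have hlt' : (q' : ℝ) < q := by exact_mod_cast hlt
    have neg := mul_pos e0 (sub_pos.2 hlt')
    rw [abs_lt] at e1 e2
    refine opn _ _ _ _ _ e3 ?_ ?_ ?_ ?_ ?_ ?_ <;> push_cast <;> linarith
  have mu3 : ∀ p q p' q' r' : ℤ, (p, q, p + q) ∈ S → (p', q', r') ∈ S → p + q < r' →
      (p, q, p + q + 1) ∈ S := by
    intro p q p' q' r' h h' hlt
    obtain ⟨s', t', ht', hst⟩ := vz1 _ _ _ h'
    obtain ⟨ε, e0, e1, e2, e3⟩ := open_pt hc (mid _ _ _ _ (hU p q h).2.1 (hU p q h).2.2) ht'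
    have hlt' : (p + q : ℝ) < r' := by exact_mod_cast hlt
    have neg := mul_pos e0 (sub_pos.2 hlt')
    have lin : ε * (s' + t') = ε * (r' + 1) := by rw [hst]
    rw [abs_lt] at e1 e2
    refine opn _ _ _ _ _ e3 ?_ ?_ ?_ ?_ ?_ ?_ <;> push_cast <;> linarith
  have md1 : ∀ p q p' q' r' : ℤ, (p, q, p + q + 1) ∈ S → (p', q', r') ∈ S → p < p' →
      (p + 1, q, p + q + 1) ∈ S := by
    intro p q p' q' r' h h' hlt
    obtain ⟨t', ht'⟩ := vx1 _ _ _ h'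
    obtain ⟨ε, e0, e1, e2, e3⟩ := open_pt hc (mid _ _ _ _ (hD p q h).1 (hD p q h).2.2) ht'
    have hlt' : (p : ℝ) < p' := by exact_mod_cast hlt
    have neg := mul_pos e0 (sub_pos.2 hlt')
    rw [abs_lt] at e1 e2
    refine opn _ _ _ _ _ e3 ?_ ?_ ?_ ?_ ?_ ?_ <;> push_cast <;> linarith
  have md2 : ∀ p q p' q' r' : ℤ, (p, q, p + q + 1) ∈ S → (p', q', r') ∈ S → q < q' →
      (p, q + 1, p + q + 1) ∈ S := by
    intro p q p' q' r' h h' hlt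
    obtain ⟨t', ht'⟩ := vy1 _ _ _ h'
    obtain ⟨ε, e0, e1, e2, e3⟩ := open_pt hc (mid _ _ _ _ (hD p q h).2.1 (hD p q h).2.2) ht'
    have hlt' : (q : ℝ) < q' := by exact_mod_cast hlt
    have neg := mul_pos e0 (sub_pos.2 hlt')
    rw [abs_lt] at e1 e2
    refine opn _ _ _ _ _ e3 ?_ ?_ ?_ ?_ ?_ ?_ <;> push_cast <;> linarith
  have md3 : ∀ p q p' q' r' : ℤ, (p, q, p + q + 1) ∈ S → (p', q', r') ∈ S → r' < p + q + 1 →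
      (p, q, p + q) ∈ S := by
    intro p q p' q' r' h h' hlt
    obtain ⟨s', t', ht', hst⟩ := vz0 _ _ _ h'
    obtain ⟨ε, e0, e1, e2, e3⟩ := open_pt hc (mid _ _ _ _ (hD p q h).1 (hD p q h).2.1) ht'
    have hlt' : (r' : ℝ) < p + q + 1 := by exact_mod_cast hlt
    have neg := mul_pos e0 (sub_pos.2 hlt')
    have lin : ε * (s' + t') = ε * r' := by rw [hst]
    rw [abs_lt] at e1 e2
    refine opn _ _ _ _ _ e3 ?_ ?_ ?_ ?_ ?_ ?_ <;> push_cast <;> linarith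
  obtain ⟨⟨pa, pa2, pa3⟩, hpa, mpa⟩ := S.exists_min_image (fun t => t.1) hne
  obtain ⟨⟨pb, pb2, pb3⟩, hpb, mpb⟩ := S.exists_max_image (fun t => t.1) hne
  obtain ⟨⟨qa1, qa, qa3⟩, hqa, mqa⟩ := S.exists_min_image (fun t => t.2.1) hne
  obtain ⟨⟨qb1, qb, qb3⟩, hqb, mqb⟩ := S.exists_max_image (fun t => t.2.1) hne
  obtain ⟨⟨ra1, ra2, ra⟩, hra, mra⟩ := S.exists_min_image (fun t => t.2.2) hne
  obtain ⟨⟨rb1, rb2, rb⟩, hrb, mrb⟩ := S.exists_max_image (fun t => t.2.2) hne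
  simp only at mpa mpb mqa mqb mra mrb
  have inb : ∀ p q r, (p, q, r) ∈ S → pa ≤ p ∧ p ≤ pb ∧ qa ≤ q ∧ q ≤ qb ∧ ra ≤ r ∧ r ≤ rb ∧
      (r = p + q ∨ r = p + q + 1) := fun p q r h =>
    ⟨mpa _ h, mpb _ h, mqa _ h, mqb _ h, mra _ h, mrb _ h, hS _ _ _ h⟩
  have i1 := inb _ _ _ hpa
  have i2 := inb _ _ _ hpb
  have i3 := inb _ _ _ hqa
  have i4 := inb _ _ _ hqb
  have i5 := inb _ _ _ hra
  have i6 := inb _ _ _ hrb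
  refine ⟨⟨pa, pb + 1, qa, qb + 1, ra, rb + 1, by omega, by omega, by omega, by omega, by omega,
    by omega, by omega, by omega, by omega⟩, ?_⟩
  intro p q r
  simp only [Bx.tri]
  constructor
  · intro h
    have := inb _ _ _ h
    omega
  · intro h
    -- walk from a member of S towards (p,q,r)
    have walk : ∀ n : ℕ, ∀ p' q' r' : ℤ, (p', q', r') ∈ S → |p' - p| + |q' - q| + |r' - r| ≤ n →
        (p, q, r) ∈ S := by
      intro n
      induction n with
      | zero =>
        intro p' q' r' h' hd
        have := abs_nonneg (p' - p)
        have := abs_nonneg (q' - q)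
        have := abs_nonneg (r' - r)
        have e1 : p' - p = 0 := abs_eq_zero.1 (by push_cast at hd; omega)
        have e2 : q' - q = 0 := abs_eq_zero.1 (by push_cast at hd; omega)
        have e3 : r' - r = 0 := abs_eq_zero.1 (by push_cast at hd; omega)
        rwa [show p = p' by omega, show q = q' by omega, show r = r' by omega]
      | succ n ih =>
        intro p' q' r' h' hd
        push_cast at hd
        simp only [abs] at hd ih
        rcases hS _ _ _ h' with rfl | rfl
        · by_cases c1 : p < p'
          · exact ih _ _ _ (mu1 p' q' _ _ _ h' hpa (by omega)) (by omega)
          by_cases c2 : q < q'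
          · exact ih _ _ _ (mu2 p' q' _ _ _ h' hqa (by omega)) (by omega)
          by_cases c3 : p' + q' < r
          · exact ih _ _ _ (mu3 p' q' _ _ _ h' hrb (by omega)) (by omega)
          rwa [show p = p' by omega, show q = q' by omega, show r = p' + q' by omega]
        · by_cases c1 : p' < p
          · exact ih _ _ _ (md1 p' q' _ _ _ h' hpb (by omega)) (by omega)
          by_cases c2 : q' < q
          · exact ih _ _ _ (md2 p' q' _ _ _ h' hqb (by omega)) (by omega)
          by_cases c3 : r < p' + q' + 1
          · exact ih _ _ _ (md3 p' q' _ _ _ h' hra (by omega)) (by omega)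
          rwa [show p = p' by omega, show q = q' by omega, show r = p' + q' + 1 by omega]
    exact walk (|pa - p| + |pa2 - q| + |pa3 - r|).toNat _ _ _ hpa (by
      rw [Int.toNat_of_nonneg]; positivity)


end Part13


section Part14


namespace Bx

def lo (B : Bx) (y : ℤ) : ℤ := max B.a1 (B.a3 - y)
def hi (B : Bx) (y : ℤ) : ℤ := min B.b1 (B.b3 - y)
def cl (B : Bx) (x y : ℤ) : ℤ := max (B.lo y) (min (B.hi y) x)
def cy (B : Bx) (y : ℤ) : ℤ := max B.a2 (min B.b2 y)

def Fh (B : Bx) (g : ℤ × ℤ → ℝ) (N : ℤ) (x y : ℤ) : ℝ :=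
  g (B.cl x y, y) - N * ((|x - B.cl x y| : ℤ) : ℝ)

def ext (B : Bx) (g : ℤ × ℤ → ℝ) (N K : ℤ) (v : ℤ × ℤ) : ℝ :=
  B.Fh g N v.1 (B.cy v.2) - K * ((|v.2 - B.cy v.2| : ℤ) : ℝ)

def mm (B : Bx) : Fin 6 → ℤ := ![B.b1, B.b3, B.b2, -B.a1, -B.a3, -B.a2]

variable {B : Bx} {g : ℤ × ℤ → ℝ} {N K : ℤ}

theorem lo_le_hi {y : ℤ} (h1 : B.a2 ≤ y) (h2 : y ≤ B.b2) : B.lo y ≤ B.hi y := by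
  obtain ⟨a1, b1, a2, b2, a3, b3, _, _, _, _, _, _, _, _, _⟩ := B
  simp only [lo, hi] at *; omega

theorem pt_iff {x y : ℤ} : B.pt (x, y) ↔ B.a2 ≤ y ∧ y ≤ B.b2 ∧ B.lo y ≤ x ∧ x ≤ B.hi y := by
  simp only [lo, hi, pt]; omega

theorem lo_step (y : ℤ) : B.lo y - 1 ≤ B.lo (y + 1) ∧ B.lo (y + 1) ≤ B.lo y := by
  simp only [lo]; omega

theorem hi_step (y : ℤ) : B.hi y - 1 ≤ B.hi (y + 1) ∧ B.hi (y + 1) ≤ B.hi y := by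
  simp only [hi]; omega

theorem Fh_lo {x y : ℤ} (h1 : B.a2 ≤ y) (h2 : y ≤ B.b2) (h : x ≤ B.lo y) :
    B.Fh g N x y = g (B.lo y, y) - N * (B.lo y - x) := by
  have := lo_le_hi h1 h2
  have e : B.cl x y = B.lo y := by simp only [cl]; omega
  rw [Fh, e, abs_of_nonpos (by omega)]; push_cast; ring

theorem Fh_hi {x y : ℤ} (h1 : B.a2 ≤ y) (h2 : y ≤ B.b2) (h : B.hi y ≤ x) :
    B.Fh g N x y = g (B.hi y, y) - N * (x - B.hi y) := by
  have := lo_le_hi h1 h2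
  have e : B.cl x y = B.hi y := by simp only [cl]; omega
  rw [Fh, e, abs_of_nonneg (by omega)]; push_cast; ring

theorem Fh_mid {x y : ℤ} (h : B.lo y ≤ x) (h' : x ≤ B.hi y) :
    B.Fh g N x y = g (x, y) := by
  have e : B.cl x y = x := by simp only [cl]; omega
  rw [Fh, e]; simp

/-- the hypotheses on `g` inside of the box -/
structure Ok (B : Bx) (g : ℤ × ℤ → ℝ) (N K : ℤ) (b : ℝ) : Prop where
  bd : ∀ v, B.pt v → |g v| ≤ b
  hN : 4 * b ≤ N
  hK : 2 * b + N ≤ K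
  rA : ∀ x y, B.pt (x, y) → B.pt (x + 1, y) → B.pt (x, y + 1) → B.pt (x + 1, y - 1) →
    g (x, y + 1) + g (x + 1, y - 1) ≤ g (x, y) + g (x + 1, y)
  rB : ∀ x y, B.pt (x, y) → B.pt (x, y + 1) → B.pt (x - 1, y + 1) → B.pt (x + 1, y) →
    g (x - 1, y + 1) + g (x + 1, y) ≤ g (x, y) + g (x, y + 1)
  rC : ∀ x y, B.pt (x, y) → B.pt (x, y + 1) → B.pt (x + 1, y) → B.pt (x + 1, y + 1) →
    g (x, y) + g (x + 1, y + 1) ≤ g (x + 1, y) + g (x, y + 1)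
  l2 : ∀ x y, B.pt (x, y) → B.pt (x, y + 1) → B.pt (x, y - 1) →
    g (x, y + 1) + g (x, y - 1) ≤ 2 * g (x, y)
  l3 : ∀ x y, B.pt (x, y) → B.pt (x - 1, y + 1) → B.pt (x + 1, y - 1) →
    g (x - 1, y + 1) + g (x + 1, y - 1) ≤ 2 * g (x, y)

variable {b : ℝ}

theorem Ok.b0 (h : Ok B g N K b) : 0 ≤ b := by
  have := lo_le_hi (B := B) (y := B.a2) le_rfl B.h2.le
  exact (abs_nonneg _).trans (h.bd (B.lo B.a2, B.a2) (pt_iff.2 ⟨le_rfl, B.h2.le, le_rfl, this⟩))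

theorem Ok.D_lo (h : Ok B g N K b) {x y : ℤ} (h1 : B.a2 ≤ y) (h2 : y ≤ B.b2) (hx : x + 1 ≤ B.lo y) :
    B.Fh g N (x + 1) y - B.Fh g N x y = N := by
  rw [Fh_lo h1 h2 hx, Fh_lo h1 h2 (by omega)]; push_cast; ring

theorem Ok.D_hi (h : Ok B g N K b) {x y : ℤ} (h1 : B.a2 ≤ y) (h2 : y ≤ B.b2) (hx : B.hi y ≤ x) :
    B.Fh g N (x + 1) y - B.Fh g N x y = -N := by
  rw [Fh_hi h1 h2 hx, Fh_hi h1 h2 (by omega)]; push_cast; ring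

theorem Ok.D_abs (h : Ok B g N K b) {x y : ℤ} (h1 : B.a2 ≤ y) (h2 : y ≤ B.b2) :
    -N ≤ B.Fh g N (x + 1) y - B.Fh g N x y ∧ B.Fh g N (x + 1) y - B.Fh g N x y ≤ N := by
  have b0 := h.b0
  have hN := h.hN
  rcases le_or_gt (x + 1) (B.lo y) with c | c
  · rw [h.D_lo h1 h2 c]; constructor <;> linarith
  rcases le_or_gt (B.hi y) x with c' | c'
  · rw [h.D_hi h1 h2 c']; constructor <;> linarith
  rw [Fh_mid (by omega) (by omega), Fh_mid (by omega) (by omega)]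
  have p := abs_le.1 (h.bd (x, y) (pt_iff.2 ⟨h1, h2, by omega, by omega⟩))
  have q := abs_le.1 (h.bd (x + 1, y) (pt_iff.2 ⟨h1, h2, by omega, by omega⟩))
  constructor <;> linarith [p.1, p.2, q.1, q.2]

theorem Ok.C (h : Ok B g N K b) {x y : ℤ} (h1 : B.a2 ≤ y) (h2 : y + 1 ≤ B.b2) :
    B.Fh g N (x + 1) (y + 1) - B.Fh g N x (y + 1) ≤ B.Fh g N (x + 1) y - B.Fh g N x y := by
  have s1 := lo_step (B := B) y
  have s2 := hi_step (B := B) y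
  rcases le_or_gt (x + 1) (B.lo y) with c | c
  · rw [h.D_lo h1 (by omega) c]; exact (h.D_abs (by omega) h2).2
  rcases le_or_gt (B.hi (y + 1)) x with c' | c'
  · rw [h.D_hi (by omega) h2 c']; exact (h.D_abs h1 (by omega)).1
  rw [Fh_mid (by omega) (by omega), Fh_mid (by omega) (by omega), Fh_mid (by omega) (by omega),
    Fh_mid (by omega) (by omega)]
  have := h.rC x y (pt_iff.2 (by omega)) (pt_iff.2 (by omega)) (pt_iff.2 (by omega))
    (pt_iff.2 (by omega))
  linarith

theorem Ok.B' (h : Ok B g N K b) {x y : ℤ} (h1 : B.a2 ≤ y) (h2 : y + 1 ≤ B.b2) :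
    B.Fh g N (x + 1) y - B.Fh g N x y ≤ B.Fh g N x (y + 1) - B.Fh g N (x - 1) (y + 1) := by
  have s1 := lo_step (B := B) y
  have s2 := hi_step (B := B) y
  obtain ⟨x, rfl⟩ : ∃ z, x = z + 1 := ⟨x - 1, by ring⟩
  rw [add_sub_cancel_right]
  rcases le_or_gt (x + 1) (B.lo (y + 1)) with c | c
  · rw [h.D_lo (by omega) h2 c]; exact (h.D_abs h1 (by omega)).2
  rcases le_or_gt (B.hi y) (x + 1) with c' | c'
  · rw [h.D_hi h1 (by omega) c']; exact (h.D_abs (by omega) h2).1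
  rw [Fh_mid (by omega) (by omega), Fh_mid (by omega) (by omega), Fh_mid (by omega) (by omega),
    Fh_mid (by omega) (by omega)]
  have := h.rB (x + 1) y (pt_iff.2 (by omega)) (pt_iff.2 (by omega)) (pt_iff.2 (by omega))
    (pt_iff.2 (by omega))
  rw [add_sub_cancel_right] at this
  linarith

theorem Ok.row (h : Ok B g N K b) {x y : ℤ} (h1 : B.a2 ≤ y) (h2 : y ≤ B.b2) :
    B.Fh g N (x + 1) y - B.Fh g N x y ≤ B.Fh g N x y - B.Fh g N (x - 1) y := by
  have := B.h2
  rcases lt_or_ge y B.b2 with c | c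
  · have p := h.B' (x := x) h1 (by omega)
    have q := h.C (x := x - 1) h1 (by omega)
    rw [sub_add_cancel] at q
    linarith
  · have p := h.B' (x := x) (y := y - 1) (by omega) (by omega)
    have q := h.C (x := x) (y := y - 1) (by omega) (by omega)
    rw [sub_add_cancel] at p q
    linarith

theorem lo_cvx (y : ℤ) : (B.lo (y + 1) = B.lo y ∧ B.lo (y - 1) = B.lo y) ∨
    (B.lo (y + 1) = B.lo y - 1 ∧ B.lo (y - 1) = B.lo y + 1) ∨
    B.lo (y + 1) + B.lo (y - 1) - 2 * B.lo y = 1 := by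
  simp only [lo]; omega

theorem hi_cvx (y : ℤ) : (B.hi (y + 1) = B.hi y ∧ B.hi (y - 1) = B.hi y) ∨
    (B.hi (y + 1) = B.hi y - 1 ∧ B.hi (y - 1) = B.hi y + 1) ∨
    2 * B.hi y - B.hi (y + 1) - B.hi (y - 1) = 1 := by
  simp only [hi]; omega

theorem Ok.A (h : Ok B g N K b) {x y : ℤ} (h1 : B.a2 < y) (h2 : y < B.b2) :
    B.Fh g N x (y + 1) + B.Fh g N (x + 1) (y - 1) ≤ B.Fh g N x y + B.Fh g N (x + 1) y := by
  have s1 := lo_step (B := B) y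
  have s2 := hi_step (B := B) y
  have s3 := lo_step (B := B) (y - 1)
  have s4 := hi_step (B := B) (y - 1)
  rw [sub_add_cancel] at s3 s4
  have lh := lo_le_hi (B := B) (y := y) h1.le h2.le
  have lh1 := lo_le_hi (B := B) (y := y + 1) (by omega) (by omega)
  have lh2 := lo_le_hi (B := B) (y := y - 1) (by omega) (by omega)
  have hN := h.hN
  rcases le_or_gt (x + 1) (B.lo y) with c | c
  · rw [Fh_lo (x := x) (y := y + 1) (by omega) (by omega) (by omega),
      Fh_lo (x := x + 1) (y := y - 1) (by omega) (by omega) (by omega),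
      Fh_lo (x := x) (y := y) (by omega) (by omega) (by omega),
      Fh_lo (x := x + 1) (y := y) (by omega) (by omega) (by omega)]
    have p0 : B.pt (B.lo y, y) := pt_iff.2 (by omega)
    have p1 : B.pt (B.lo (y + 1), y + 1) := pt_iff.2 (by omega)
    have p2 : B.pt (B.lo (y - 1), y - 1) := pt_iff.2 (by omega)
    rcases lo_cvx (B := B) y with ⟨e1, e2⟩ | ⟨e1, e2⟩ | e
    · rw [e1] at p1; rw [e2] at p2
      have := h.l2 _ _ p0 p1 p2
      rw [e1, e2]; push_cast; linarith
    · rw [e1] at p1; rw [e2] at p2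
      have := h.l3 _ _ p0 p1 p2
      rw [e1, e2]; push_cast; linarith
    · have b0 := abs_le.1 (h.bd _ p0)
      have b1 := abs_le.1 (h.bd _ p1)
      have b2 := abs_le.1 (h.bd _ p2)
      have e' : (B.lo (y + 1) : ℝ) = 1 + 2 * B.lo y - B.lo (y - 1) := by
        rw [show B.lo (y + 1) = 1 + 2 * B.lo y - B.lo (y - 1) by omega]; push_cast; ring
      rw [e']; push_cast
      linarith [b0.1, b0.2, b1.1, b1.2, b2.1, b2.2]
  rcases le_or_gt (B.hi y) x with c' | c'
  · rw [Fh_hi (x := x) (y := y + 1) (by omega) (by omega) (by omega),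
      Fh_hi (x := x + 1) (y := y - 1) (by omega) (by omega) (by omega),
      Fh_hi (x := x) (y := y) (by omega) (by omega) (by omega),
      Fh_hi (x := x + 1) (y := y) (by omega) (by omega) (by omega)]
    have p0 : B.pt (B.hi y, y) := pt_iff.2 (by omega)
    have p1 : B.pt (B.hi (y + 1), y + 1) := pt_iff.2 (by omega)
    have p2 : B.pt (B.hi (y - 1), y - 1) := pt_iff.2 (by omega)
    rcases hi_cvx (B := B) y with ⟨e1, e2⟩ | ⟨e1, e2⟩ | e
    · rw [e1] at p1; rw [e2] at p2
      have := h.l2 _ _ p0 p1 p2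
      rw [e1, e2]; push_cast; linarith
    · rw [e1] at p1; rw [e2] at p2
      have := h.l3 _ _ p0 p1 p2
      rw [e1, e2]; push_cast; linarith
    · have b0 := abs_le.1 (h.bd _ p0)
      have b1 := abs_le.1 (h.bd _ p1)
      have b2 := abs_le.1 (h.bd _ p2)
      have e' : (B.hi (y + 1) : ℝ) = 2 * B.hi y - B.hi (y - 1) - 1 := by
        rw [show B.hi (y + 1) = 2 * B.hi y - B.hi (y - 1) - 1 by omega]; push_cast; ring
      rw [e']; push_cast
      linarith [b0.1, b0.2, b1.1, b1.2, b2.1, b2.2]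
  rw [Fh_mid (by omega) (by omega), Fh_mid (by omega) (by omega), Fh_mid (by omega) (by omega),
    Fh_mid (by omega) (by omega)]
  exact h.rA x y (pt_iff.2 (by omega)) (pt_iff.2 (by omega)) (pt_iff.2 (by omega))
    (pt_iff.2 (by omega))

theorem cl_pt {x y : ℤ} (h1 : B.a2 ≤ y) (h2 : y ≤ B.b2) : B.pt (B.cl x y, y) := by
  have := lo_le_hi h1 h2
  refine pt_iff.2 ⟨h1, h2, ?_⟩
  simp only [cl]; omega

theorem Ok.V (h : Ok B g N K b) {x y : ℤ} (h1 : B.a2 ≤ y) (h2 : y + 1 ≤ B.b2) :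
    |B.Fh g N x (y + 1) - B.Fh g N x y| ≤ K := by
  have s1 := lo_step (B := B) y
  have s2 := hi_step (B := B) y
  have p := abs_le.1 (h.bd _ (cl_pt (x := x) h1 (by omega)))
  have q := abs_le.1 (h.bd _ (cl_pt (x := x) (y := y + 1) (by omega) h2))
  have N0 : (0 : ℝ) ≤ N := by have := h.b0; linarith [h.hN]
  have hd : -1 ≤ |x - B.cl x (y + 1)| - |x - B.cl x y| ∧
      |x - B.cl x (y + 1)| - |x - B.cl x y| ≤ 1 := by
    have l1 := lo_le_hi (B := B) (y := y) h1 (by omega)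
    have l2 := lo_le_hi (B := B) (y := y + 1) (by omega) (by omega)
    simp only [cl, abs_eq_max_neg]
    generalize B.lo y = l at *
    generalize B.hi y = r at *
    generalize B.lo (y + 1) = l' at *
    generalize B.hi (y + 1) = r' at *
    omega
  have hd1 : ((-1 : ℤ) : ℝ) ≤ ((|x - B.cl x (y + 1)| - |x - B.cl x y| : ℤ) : ℝ) := by
    exact_mod_cast hd.1
  have hd2 : ((|x - B.cl x (y + 1)| - |x - B.cl x y| : ℤ) : ℝ) ≤ ((1 : ℤ) : ℝ) := by
    exact_mod_cast hd.2
  rw [Int.cast_sub] at hd1 hd2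
  have m1 := mul_le_mul_of_nonneg_left hd1 N0
  have m2 := mul_le_mul_of_nonneg_left hd2 N0
  rw [mul_sub] at m1 m2
  simp only [Int.cast_one, Int.cast_neg] at m1 m2
  have := h.hK
  simp only [Fh]
  rw [abs_le]
  constructor <;> linarith [p.1, p.2, q.1, q.2]

theorem ext_in {x y : ℤ} (h1 : B.a2 ≤ y) (h2 : y ≤ B.b2) : B.ext g N K (x, y) = B.Fh g N x y := by
  have e : B.cy y = y := by simp only [cy]; omega
  simp [ext, e]
theorem ext_lo {x y : ℤ} (h1 : y ≤ B.a2) :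
    B.ext g N K (x, y) = B.Fh g N x B.a2 - K * (B.a2 - y) := by
  have := B.h2
  have e : B.cy y = B.a2 := by simp only [cy]; omega
  simp only [ext, e]; rw [abs_of_nonpos (by omega)]; push_cast; ring
theorem ext_hi {x y : ℤ} (h1 : B.b2 ≤ y) :
    B.ext g N K (x, y) = B.Fh g N x B.b2 - K * (y - B.b2) := by
  have := B.h2
  have e : B.cy y = B.b2 := by simp only [cy]; omega
  simp only [ext, e]; rw [abs_of_nonneg (by omega)]; push_cast; ring

theorem Ok.hive (h : Ok B g N K b) : Hive (B.ext g N K) := by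
  have h2 := B.h2
  refine Hive.mk' ?_ ?_ ?_ <;> intro x y
  · rcases lt_trichotomy y B.a2 with c | c | c
    · rw [ext_lo (y := y) (by omega), ext_lo (y := y + 1) (by omega), ext_lo (y := y - 1) (by omega),
        ext_lo (y := y) (by omega)]
      push_cast; linarith
    · subst c
      have := abs_le.1 (h.V (x := x) le_rfl (by omega))
      rw [ext_in (y := B.a2) le_rfl (by omega), ext_in (y := B.a2 + 1) (by omega) (by omega),
        ext_lo (y := B.a2 - 1) (by omega), ext_in (y := B.a2) le_rfl (by omega)]
      push_cast; linarith [this.1, this.2]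
    rcases lt_trichotomy y B.b2 with c' | c' | c'
    · rw [ext_in (by omega) (by omega), ext_in (by omega) (by omega), ext_in (by omega) (by omega),
        ext_in (by omega) (by omega)]
      exact h.A c c'
    · subst c'
      have := abs_le.1 (h.V (x := x + 1) (y := B.b2 - 1) (by omega) (by omega))
      rw [sub_add_cancel] at this
      rw [ext_in (y := B.b2) (by omega) (by omega), ext_hi (y := B.b2 + 1) (by omega),
        ext_in (y := B.b2 - 1) (by omega) (by omega), ext_in (y := B.b2) (by omega) (by omega)]
      push_cast; linarith [this.1, this.2]
    · rw [ext_hi (y := y) (by omega), ext_hi (y := y + 1) (by omega), ext_hi (y := y - 1) (by omega),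
        ext_hi (y := y) (by omega)]
      push_cast; linarith
  · rcases lt_or_ge y B.a2 with c | c
    · have := h.row (x := x) le_rfl h2.le
      rw [ext_lo (y := y + 1) (by omega), ext_lo (y := y) (by omega), ext_lo (y := y) (by omega),
        ext_lo (y := y + 1) (by omega)]
      push_cast; linarith
    rcases lt_or_ge y B.b2 with c' | c'
    · have := h.B' (x := x) c (by omega)
      rw [ext_in (by omega) (by omega), ext_in (by omega) (by omega), ext_in (by omega) (by omega),
        ext_in (by omega) (by omega)]
      linarith
    · have := h.row (x := x) h2.le le_rfl
      rw [ext_hi (y := y + 1) (by omega), ext_hi (y := y) (by omega), ext_hi (y := y) (by omega),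
        ext_hi (y := y + 1) (by omega)]
      push_cast; linarith
  · rcases lt_or_ge y B.a2 with c | c
    · rw [ext_lo (y := y) (by omega), ext_lo (y := y + 1) (by omega), ext_lo (y := y) (by omega),
        ext_lo (y := y + 1) (by omega)]
      push_cast; linarith
    rcases lt_or_ge y B.b2 with c' | c'
    · have := h.C (x := x) c (by omega)
      rw [ext_in (by omega) (by omega), ext_in (by omega) (by omega), ext_in (by omega) (by omega),
        ext_in (by omega) (by omega)]
      linarith
    · rw [ext_hi (y := y) (by omega), ext_hi (y := y + 1) (by omega), ext_hi (y := y) (by omega),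
        ext_hi (y := y + 1) (by omega)]
      push_cast; linarith

theorem mem_mm (v : ℤ × ℤ) : v ∈ hexI B.mm ↔ B.a1 < v.1 ∧ v.1 < B.b1 ∧ B.a2 < v.2 ∧ v.2 < B.b2 ∧
    B.a3 < v.1 + v.2 ∧ v.1 + v.2 < B.b3 := by
  rw [mem_hexI]
  simp [Fin.forall_fin_succ, nn, mm]
  omega

theorem ext_int (hg : ∀ v, B.pt v → v ∉ hexI B.mm → g v ∈ ZZ) (v : ℤ × ℤ) (hv : v ∉ hexI B.mm) :
    B.ext g N K v ∈ ZZ := by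
  obtain ⟨x, y⟩ := v
  have h2 := B.h2
  have z : ∀ n : ℤ, (n : ℝ) ∈ ZZ := fun n => ⟨n, by simp⟩
  have c1 : B.a2 ≤ B.cy y ∧ B.cy y ≤ B.b2 := by simp only [cy]; omega
  have lh := lo_le_hi c1.1 c1.2
  have hm : (B.cl x (B.cy y), B.cy y) ∉ hexI B.mm := by
    intro hm
    apply hv
    rw [mem_mm] at hm ⊢
    simp only at hm ⊢
    have e : B.cy y = y := by simp only [cy] at hm ⊢; omega
    rw [e] at hm lh
    have e : B.cl x y = x := by simp only [cl, lo, hi] at hm lh ⊢; omega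
    rw [e] at hm
    exact hm
  have := hg _ (cl_pt c1.1 c1.2) hm
  simp only [ext, Fh]
  refine ZZ.sub_mem (ZZ.sub_mem this ?_) ?_
  · rw [← Int.cast_mul]; exact z _
  · rw [← Int.cast_mul]; exact z _

end Bx

theorem extendMain (B : Bx) (g : ℤ × ℤ → ℝ)
    (rA : ∀ x y, B.pt (x, y) → B.pt (x + 1, y) → B.pt (x, y + 1) → B.pt (x + 1, y - 1) →
      g (x, y + 1) + g (x + 1, y - 1) ≤ g (x, y) + g (x + 1, y))
    (rB : ∀ x y, B.pt (x, y) → B.pt (x, y + 1) → B.pt (x - 1, y + 1) → B.pt (x + 1, y) →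
      g (x - 1, y + 1) + g (x + 1, y) ≤ g (x, y) + g (x, y + 1))
    (rC : ∀ x y, B.pt (x, y) → B.pt (x, y + 1) → B.pt (x + 1, y) → B.pt (x + 1, y + 1) →
      g (x, y) + g (x + 1, y + 1) ≤ g (x + 1, y) + g (x, y + 1))
    (l2 : ∀ x y, B.pt (x, y) → B.pt (x, y + 1) → B.pt (x, y - 1) →
      g (x, y + 1) + g (x, y - 1) ≤ 2 * g (x, y))
    (l3 : ∀ x y, B.pt (x, y) → B.pt (x - 1, y + 1) → B.pt (x + 1, y - 1) →
      g (x - 1, y + 1) + g (x + 1, y - 1) ≤ 2 * g (x, y))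
    (hbInt : ∀ v, B.pt v → v ∉ hexI B.mm → g v ∈ ZZ) :
    ∃ g' : ℤ × ℤ → ℝ, Hive g' ∧ (∀ v, B.pt v → v ∉ hexI B.mm → g' v = g v) ∧ ∀ v, g' v ∈ ZZ := by
  obtain ⟨b, hb⟩ : ∃ b : ℝ, ∀ v, B.pt v → |g v| ≤ b := by
    refine ⟨∑ v ∈ Finset.Icc B.a1 B.b1 ×ˢ Finset.Icc B.a2 B.b2, |g v|, fun v hv => ?_⟩
    refine Finset.single_le_sum (f := fun v => |g v|) (fun _ _ => abs_nonneg _) ?_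
    simp only [Finset.mem_product, Finset.mem_Icc]
    exact ⟨⟨hv.1, hv.2.1⟩, hv.2.2.1, hv.2.2.2.1⟩
  obtain ⟨n, hn⟩ := exists_nat_ge (4 * b)
  obtain ⟨k, hk⟩ := exists_nat_ge (2 * b + n)
  have ok : B.Ok g n k b := ⟨hb, by simpa using hn, by simpa using hk, rA, rB, rC, l2, l3⟩
  obtain ⟨g', h1, h2, h3⟩ := latticeMain ok.hive B.mm (Bx.ext_int hbInt)
  refine ⟨g', h1, ?_, h3⟩
  rintro ⟨x, y⟩ hv hm
  rw [h2 _ hm]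
  obtain ⟨p, q, r, s⟩ := Bx.pt_iff.1 hv
  rw [Bx.ext_in p q, Bx.Fh_mid r s]


end Part14


section Part15


/-- the point with lattice coordinates `(s, t)` -/
def PR (b : Pt) (s t : ℝ) : Pt := (b.1 + s + t / 2, b.2 + t * (Real.sqrt 3 / 2))

def Uq (b : Pt) (p q : ℤ) : GridTriangle := ⟨PR b p q, true⟩
def Dq (b : Pt) (p q : ℤ) : GridTriangle := ⟨PR b p (q + 1), false⟩

def cY (b : Pt) : Pt →ᵃ[ℝ] ℝ :=
  ((2 / Real.sqrt 3) • LinearMap.snd ℝ ℝ ℝ).toAffineMap + AffineMap.const ℝ Pt (-(2 / Real.sqrt 3) * b.2)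
def cX (b : Pt) : Pt →ᵃ[ℝ] ℝ :=
  (LinearMap.fst ℝ ℝ ℝ).toAffineMap + AffineMap.const ℝ Pt (-b.1) - (1 / 2 : ℝ) • cY b

theorem sq3 : Real.sqrt 3 ≠ 0 := by positivity

theorem cY_PR (b : Pt) (s t : ℝ) : cY b (PR b s t) = t := by
  have := sq3
  simp [cY, PR]; field_simp; ring
theorem cX_PR (b : Pt) (s t : ℝ) : cX b (PR b s t) = s := by
  have := cY_PR b s t
  simp [cX, this]; simp [PR]; ring

theorem PR_inj (b : Pt) (x y x' y' : ℤ) : PR b x y = PR b x' y' ↔ x = x' ∧ y = y' := by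
  constructor
  · intro h
    have h1 := congrArg (cX b) h
    have h2 := congrArg (cY b) h
    rw [cX_PR, cX_PR] at h1
    rw [cY_PR, cY_PR] at h2
    exact ⟨by exact_mod_cast h1, by exact_mod_cast h2⟩
  · rintro ⟨rfl, rfl⟩; rfl

def PZ (b : Pt) (v : ℤ × ℤ) : Pt := PR b v.1 v.2

theorem PZ_inj (b : Pt) (v w : ℤ × ℤ) : PZ b v = PZ b w ↔ v = w := by
  rw [PZ, PZ, PR_inj, Prod.ext_iff]

section vert
variable (b : Pt) (p q : ℤ)
theorem Uq0 : (Uq b p q).v0 = PZ b (p, q) := by simp [Uq, GridTriangle.v0, PZ]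
theorem Uq1 : (Uq b p q).v1 = PZ b (p + 1, q) := by
  ext <;> simp [Uq, GridTriangle.v1, PZ, PR, xiv] <;> ring
theorem Uq2 : (Uq b p q).v2 = PZ b (p, q + 1) := by
  ext <;> simp [Uq, GridTriangle.v2, PZ, PR, xiv] <;> ring
theorem Dq0 : (Dq b p q).v0 = PZ b (p, q + 1) := by simp [Dq, GridTriangle.v0, PZ]
theorem Dq1 : (Dq b p q).v1 = PZ b (p + 1, q + 1) := by
  ext <;> simp [Dq, GridTriangle.v1, PZ, PR, xiv] <;> ring
theorem Dq2 : (Dq b p q).v2 = PZ b (p + 1, q) := by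
  ext <;> simp [Dq, GridTriangle.v2, PZ, PR, xiv] <;> ring

theorem mem_Uq (v w : ℤ × ℤ) : (PZ b v, PZ b w) ∈ (Uq b p q).edgeFinset ↔
    (v = (p, q) ∧ w = (p + 1, q)) ∨ (v = (p + 1, q) ∧ w = (p, q + 1)) ∨
    (v = (p, q + 1) ∧ w = (p, q)) := by
  simp only [GridTriangle.edgeFinset, GridTriangle.e0, GridTriangle.e1, GridTriangle.e2,
    Finset.mem_insert, Finset.mem_singleton, Uq0, Uq1, Uq2, Prod.mk.injEq, PZ_inj]

theorem mem_Dq (v w : ℤ × ℤ) : (PZ b v, PZ b w) ∈ (Dq b p q).edgeFinset ↔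
    (v = (p, q + 1) ∧ w = (p + 1, q + 1)) ∨ (v = (p + 1, q + 1) ∧ w = (p + 1, q)) ∨
    (v = (p + 1, q) ∧ w = (p, q + 1)) := by
  simp only [GridTriangle.edgeFinset, GridTriangle.e0, GridTriangle.e1, GridTriangle.e2,
    Finset.mem_insert, Finset.mem_singleton, Dq0, Dq1, Dq2, Prod.mk.injEq, PZ_inj]
end vert

theorem Uq_inj (b : Pt) (p q p' q' : ℤ) : Uq b p q = Uq b p' q' ↔ p = p' ∧ q = q' := by
  simp [Uq, PR_inj]
theorem Dq_inj (b : Pt) (p q p' q' : ℤ) : Dq b p q = Dq b p' q' ↔ p = p' ∧ q = q' := by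
  have := PR_inj b p (q + 1) p' (q' + 1)
  push_cast at this
  simp only [Dq, GridTriangle.mk.injEq, this, and_true]
  omega
theorem Uq_ne_Dq (b : Pt) (p q p' q' : ℤ) : Uq b p q ≠ Dq b p' q' := by
  simp [Uq, Dq]

theorem region_ge (T : GridTriangle) (ψ : Pt →ᵃ[ℝ] ℝ) (c : ℝ) (h0 : c ≤ ψ T.v0) (h1 : c ≤ ψ T.v1)
    (h2 : c ≤ ψ T.v2) : ∀ z ∈ T.region, c ≤ ψ z := by
  have hc : Convex ℝ (ψ ⁻¹' Set.Ici c) := (convex_Ici c).affine_preimage ψ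
  have : T.region ⊆ ψ ⁻¹' Set.Ici c := by
    refine convexHull_min ?_ hc
    intro z hz
    simp only [Set.mem_insert_iff, Set.mem_singleton_iff] at hz
    rcases hz with rfl | rfl | rfl <;> simpa
  exact fun z hz => this hz

theorem v0_mem (T : GridTriangle) : T.v0 ∈ T.region := subset_convexHull _ _ (by simp)
theorem v1_mem (T : GridTriangle) : T.v1 ∈ T.region := subset_convexHull _ _ (by simp)
theorem v2_mem (T : GridTriangle) : T.v2 ∈ T.region := subset_convexHull _ _ (by simp)

theorem lat (G : ConvexGrid) (T0 : GridTriangle) (h0 : T0 ∈ G.tris) (T : GridTriangle)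
    (hT : T ∈ G.tris) : ∃ p q : ℤ, T = Uq T0.base p q ∨ T = Dq T0.base p q := by
  obtain ⟨m, n, h⟩ := G.aligned T hT T0 h0
  obtain ⟨B, u⟩ := T
  simp only at h
  have e : B = PR T0.base ((m - n : ℤ) : ℝ) n := by
    rw [sub_eq_iff_eq_add] at h
    rw [h]
    ext <;> simp [PR, xiv] <;> ring
  cases u
  · refine ⟨m - n, n - 1, Or.inr ?_⟩
    rw [e]; simp [Dq]
  · refine ⟨m - n, n, Or.inl ?_⟩
    rw [e]; simp [Uq]

def idx (b : Pt) (T : GridTriangle) : ℤ × ℤ × ℤ :=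
  if T.up then (⌊cX b T.base⌋, ⌊cY b T.base⌋, ⌊cX b T.base⌋ + ⌊cY b T.base⌋)
  else (⌊cX b T.base⌋, ⌊cY b T.base⌋ - 1, ⌊cX b T.base⌋ + ⌊cY b T.base⌋)

theorem idxU (b : Pt) (p q : ℤ) : idx b (Uq b p q) = (p, q, p + q) := by
  simp [idx, Uq, cX_PR, cY_PR]
theorem idxD (b : Pt) (p q : ℤ) : idx b (Dq b p q) = (p, q, p + q + 1) := by
  have : ((q : ℝ) + 1) = ((q + 1 : ℤ) : ℝ) := by push_cast; rfl
  simp [idx, Dq, cX_PR, cY_PR]; ring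

theorem mem_region {G : ConvexGrid} {T : GridTriangle} (hT : T ∈ G.tris) {z : Pt}
    (hz : z ∈ T.region) : z ∈ G.region := by
  simp only [ConvexGrid.region, Set.mem_iUnion]
  exact ⟨T, hT, hz⟩

theorem gridBox (G : ConvexGrid) : ∃ (b : Pt) (B : Bx),
    (∀ T ∈ G.tris, ∃ p q : ℤ, T = Uq b p q ∨ T = Dq b p q) ∧
    (∀ p q, Uq b p q ∈ G.tris ↔ B.tri (p, q, p + q)) ∧
    (∀ p q, Dq b p q ∈ G.tris ↔ B.tri (p, q, p + q + 1)) := by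
  classical
  obtain ⟨T0, h0⟩ := G.nonempty
  set b := T0.base with hb
  have hl := lat G T0 h0
  rw [← hb] at hl
  have key : ∀ p q r, (p, q, r) ∈ G.tris.image (idx b) ↔
      (r = p + q ∧ Uq b p q ∈ G.tris) ∨ (r = p + q + 1 ∧ Dq b p q ∈ G.tris) := by
    intro p q r
    rw [Finset.mem_image]
    constructor
    · rintro ⟨T, hT, e⟩
      obtain ⟨p', q', rfl | rfl⟩ := hl T hT
      · rw [idxU] at e; cases e; exact Or.inl ⟨rfl, hT⟩
      · rw [idxD] at e; cases e; exact Or.inr ⟨rfl, hT⟩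
    · rintro (⟨rfl, h⟩ | ⟨rfl, h⟩)
      · exact ⟨_, h, idxU _ _ _⟩
      · exact ⟨_, h, idxD _ _ _⟩
  have hPZ : ∀ p q : ℤ, PZ b (p, q) = PR b p q := fun _ _ => rfl
  have keyU : ∀ p q, (p, q, p + q) ∈ G.tris.image (idx b) ↔ Uq b p q ∈ G.tris := by
    intro p q; rw [key]
    constructor
    · rintro (h | h)
      · exact h.2
      · omega
    · exact fun h => Or.inl ⟨rfl, h⟩
  have keyD : ∀ p q, (p, q, p + q + 1) ∈ G.tris.image (idx b) ↔ Dq b p q ∈ G.tris := by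
    intro p q; rw [key]
    constructor
    · rintro (h | h)
      · omega
      · exact h.2
    · exact fun h => Or.inr ⟨rfl, h⟩
  obtain ⟨B, hB⟩ := boxLemma (G.tris.image (idx b)) (G.nonempty.image _)
    (fun s t => PR b s t ∈ G.region) (by
      intro s t s' t' ε h h' e0 e1
      have := G.convex h h' (a := 1 - ε) (b := ε) (by linarith) e0 (by ring)
      have e : PR b (s + ε * (s' - s)) (t + ε * (t' - t)) = (1 - ε) • PR b s t + ε • PR b s' t' := by
        ext <;> simp [PR] <;> ring
      show PR b (s + ε * (s' - s)) (t + ε * (t' - t)) ∈ _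
      rw [e]; exact this)
    (by
      intro p q r h
      rcases (key p q r).1 h with h | h
      · exact Or.inl h.1
      · exact Or.inr h.1)
    (by
      intro p q h
      have hT := (keyU p q).1 h
      have m0 := mem_region hT (v0_mem _)
      have m1 := mem_region hT (v1_mem _)
      have m2 := mem_region hT (v2_mem _)
      rw [Uq0] at m0; rw [Uq1] at m1; rw [Uq2] at m2
      simp only [hPZ] at m0 m1 m2
      push_cast at m0 m1 m2
      exact ⟨m0, m1, m2⟩)
    (by
      intro p q h
      have hT := (keyD p q).1 h
      have m0 := mem_region hT (v0_mem _)
      have m1 := mem_region hT (v1_mem _)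
      have m2 := mem_region hT (v2_mem _)
      rw [Dq0] at m0; rw [Dq1] at m1; rw [Dq2] at m2
      simp only [hPZ] at m0 m1 m2
      push_cast at m0 m1 m2
      exact ⟨m2, m0, m1⟩)
    (by
      intro s t h
      simp only [ConvexGrid.region, Set.mem_iUnion] at h
      obtain ⟨T, hT, hz⟩ := h
      obtain ⟨p, q, rfl | rfl⟩ := hl T hT
      · have gen : ∀ (ψ : Pt →ᵃ[ℝ] ℝ) (c : ℝ), c ≤ ψ (PZ b (p, q)) → c ≤ ψ (PZ b (p + 1, q)) →
            c ≤ ψ (PZ b (p, q + 1)) → c ≤ ψ (PR b s t) := by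
          intro ψ c a1 a2 a3
          refine region_ge _ ψ c ?_ ?_ ?_ _ hz
          · rwa [Uq0]
          · rwa [Uq1]
          · rwa [Uq2]
        refine ⟨p, q, p + q, (keyU p q).2 hT, ?_⟩
        have c1 := gen (cX b) p (by simp [PZ, cX_PR]) (by simp [PZ, cX_PR]) (by simp [PZ, cX_PR])
        have c2 := gen (cY b) q (by simp [PZ, cY_PR]) (by simp [PZ, cY_PR]) (by simp [PZ, cY_PR])
        have c3 := gen (-(cX b + cY b)) (-(p + q + 1)) (by simp [PZ, cX_PR, cY_PR]; linarith)
          (by simp [PZ, cX_PR, cY_PR]; linarith) (by simp [PZ, cX_PR, cY_PR]; linarith)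
        simp [cX_PR, cY_PR] at c1 c2 c3
        push_cast
        refine ⟨?_, ?_, ?_, ?_, ?_, ?_⟩ <;> linarith
      · have gen : ∀ (ψ : Pt →ᵃ[ℝ] ℝ) (c : ℝ), c ≤ ψ (PZ b (p, q + 1)) → c ≤ ψ (PZ b (p + 1, q + 1)) →
            c ≤ ψ (PZ b (p + 1, q)) → c ≤ ψ (PR b s t) := by
          intro ψ c a1 a2 a3
          refine region_ge _ ψ c ?_ ?_ ?_ _ hz
          · rwa [Dq0]
          · rwa [Dq1]
          · rwa [Dq2]
        refine ⟨p, q, p + q + 1, (keyD p q).2 hT, ?_⟩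
        have c1 := gen (-(cX b)) (-(p + 1)) (by simp [PZ, cX_PR]) (by simp [PZ, cX_PR])
          (by simp [PZ, cX_PR])
        have c2 := gen (-(cY b)) (-(q + 1)) (by simp [PZ, cY_PR]) (by simp [PZ, cY_PR])
          (by simp [PZ, cY_PR])
        have c3 := gen (cX b + cY b) (p + q + 1) (by simp [PZ, cX_PR, cY_PR]; linarith)
          (by simp [PZ, cX_PR, cY_PR]; linarith) (by simp [PZ, cX_PR, cY_PR]; linarith)
        simp [cX_PR, cY_PR] at c1 c2 c3
        push_cast
        refine ⟨?_, ?_, ?_, ?_, ?_, ?_⟩ <;> linarith)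
  refine ⟨b, B, hl, ?_, ?_⟩
  · intro p q
    rw [← keyU, hB]
    constructor
    · exact fun h => h.1
    · exact fun h => ⟨h, Or.inl rfl⟩
  · intro p q
    rw [← keyD, hB]
    constructor
    · exact fun h => h.1
    · exact fun h => ⟨h, Or.inr rfl⟩


end Part15


section Part16


theorem mem_boundary (G : ConvexGrid) (e : Ed) :
    e ∈ G.boundary ↔ ∃ T, (T ∈ G.tris ∧ e ∈ T.edgeFinset) ∧
      ∀ T', T' ∈ G.tris → e ∈ T'.edgeFinset → T' = T := by
  rw [ConvexGrid.boundary, Finset.mem_filter, Finset.card_eq_one]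
  simp only [Finset.eq_singleton_iff_unique_mem, Finset.mem_filter]
  constructor
  · rintro ⟨_, T, h1, h2⟩
    exact ⟨T, h1, fun T' a b => h2 T' ⟨a, b⟩⟩
  · rintro ⟨T, h1, h2⟩
    refine ⟨?_, T, h1, fun T' a => h2 T' a.1 a.2⟩
    rw [ConvexGrid.edges, Finset.mem_biUnion]
    exact ⟨T, h1⟩

theorem mem_edges {G : ConvexGrid} {e : Ed} :
    e ∈ G.edges ↔ ∃ T ∈ G.tris, e ∈ T.edgeFinset := by
  rw [ConvexGrid.edges, Finset.mem_biUnion]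

structure GB (G : ConvexGrid) (b : Pt) (B : Bx) : Prop where
  hl : ∀ T ∈ G.tris, ∃ p q : ℤ, T = Uq b p q ∨ T = Dq b p q
  hU : ∀ p q, Uq b p q ∈ G.tris ↔ B.tri (p, q, p + q)
  hD : ∀ p q, Dq b p q ∈ G.tris ↔ B.tri (p, q, p + q + 1)

section
variable {G : ConvexGrid} {b : Pt} {B : Bx}

theorem GB.bnd (H : GB G b B) (v w : ℤ × ℤ) (p q p' q' : ℤ)
    (hu : ∀ a c, (PZ b v, PZ b w) ∈ (Uq b a c).edgeFinset ↔ a = p ∧ c = q)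
    (hd : ∀ a c, (PZ b v, PZ b w) ∈ (Dq b a c).edgeFinset ↔ a = p' ∧ c = q') :
    (PZ b v, PZ b w) ∈ G.boundary ↔ (B.tri (p, q, p + q) ∧ ¬ B.tri (p', q', p' + q' + 1)) ∨
      (¬ B.tri (p, q, p + q) ∧ B.tri (p', q', p' + q' + 1)) := by
  rw [mem_boundary, ← H.hU, ← H.hD]
  have mu := (hu p q).2 ⟨rfl, rfl⟩
  have md := (hd p' q').2 ⟨rfl, rfl⟩
  constructor
  · rintro ⟨T, ⟨h1, h2⟩, h3⟩
    obtain ⟨a, c, rfl | rfl⟩ := H.hl T h1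
    · obtain ⟨rfl, rfl⟩ := (hu a c).1 h2
      exact Or.inl ⟨h1, fun h => Uq_ne_Dq _ _ _ _ _ (h3 _ h md).symm⟩
    · obtain ⟨rfl, rfl⟩ := (hd a c).1 h2
      exact Or.inr ⟨fun h => Uq_ne_Dq _ _ _ _ _ (h3 _ h mu), h1⟩
  · rintro (⟨h1, h2⟩ | ⟨h1, h2⟩)
    · refine ⟨_, ⟨h1, mu⟩, fun T' a e => ?_⟩
      obtain ⟨r, c, rfl | rfl⟩ := H.hl T' a
      · obtain ⟨rfl, rfl⟩ := (hu r c).1 e; rfl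
      · obtain ⟨rfl, rfl⟩ := (hd r c).1 e; exact absurd a h2
    · refine ⟨_, ⟨h2, md⟩, fun T' a e => ?_⟩
      obtain ⟨r, c, rfl | rfl⟩ := H.hl T' a
      · obtain ⟨rfl, rfl⟩ := (hu r c).1 e; exact absurd a h1
      · obtain ⟨rfl, rfl⟩ := (hd r c).1 e; rfl

theorem GB.k0 (H : GB G b B) (x y : ℤ) : (PZ b (x, y), PZ b (x + 1, y)) ∈ G.boundary ↔
    (B.tri (x, y, x + y) ∧ ¬ B.tri (x, y - 1, x + (y - 1) + 1)) ∨
      (¬ B.tri (x, y, x + y) ∧ B.tri (x, y - 1, x + (y - 1) + 1)) := by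
  refine H.bnd _ _ _ _ _ _ (fun a c => ?_) (fun a c => ?_)
  · rw [mem_Uq]; simp only [Prod.mk.injEq]; omega
  · rw [mem_Dq]; simp only [Prod.mk.injEq]; omega

theorem GB.k1 (H : GB G b B) (x y : ℤ) : (PZ b (x, y + 1), PZ b (x, y)) ∈ G.boundary ↔
    (B.tri (x, y, x + y) ∧ ¬ B.tri (x - 1, y, x - 1 + y + 1)) ∨
      (¬ B.tri (x, y, x + y) ∧ B.tri (x - 1, y, x - 1 + y + 1)) := by
  refine H.bnd _ _ _ _ _ _ (fun a c => ?_) (fun a c => ?_)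
  · rw [mem_Uq]; simp only [Prod.mk.injEq]; omega
  · rw [mem_Dq]; simp only [Prod.mk.injEq]; omega

theorem GB.k2 (H : GB G b B) (x y : ℤ) : (PZ b (x + 1, y), PZ b (x, y + 1)) ∈ G.boundary ↔
    (B.tri (x, y, x + y) ∧ ¬ B.tri (x, y, x + y + 1)) ∨
      (¬ B.tri (x, y, x + y) ∧ B.tri (x, y, x + y + 1)) := by
  refine H.bnd _ _ _ _ _ _ (fun a c => ?_) (fun a c => ?_)
  · rw [mem_Uq]; simp only [Prod.mk.injEq]; omega
  · rw [mem_Dq]; simp only [Prod.mk.injEq]; omega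

/-- every edge is of one of the three kinds -/
theorem GB.kinds (H : GB G b B) {e : Ed} (he : e ∈ G.edges) : ∃ x y : ℤ,
    (e = (PZ b (x, y), PZ b (x + 1, y)) ∧ B.pt (x, y) ∧ B.pt (x + 1, y)) ∨
    (e = (PZ b (x, y + 1), PZ b (x, y)) ∧ B.pt (x, y + 1) ∧ B.pt (x, y)) ∨
    (e = (PZ b (x + 1, y), PZ b (x, y + 1)) ∧ B.pt (x + 1, y) ∧ B.pt (x, y + 1)) := by
  obtain ⟨T, hT, heT⟩ := mem_edges.1 he
  obtain ⟨p, q, rfl | rfl⟩ := H.hl T hT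
  · have t := (H.hU p q).1 hT
    simp only [GridTriangle.edgeFinset, GridTriangle.e0, GridTriangle.e1, GridTriangle.e2,
      Finset.mem_insert, Finset.mem_singleton, Uq0, Uq1, Uq2] at heT
    refine ⟨p, q, ?_⟩
    rcases heT with rfl | rfl | rfl
    · left; refine ⟨rfl, ?_⟩; simp only [Bx.pt, Bx.tri] at *; omega
    · right; right; refine ⟨rfl, ?_⟩; simp only [Bx.pt, Bx.tri] at *; omega
    · right; left; refine ⟨rfl, ?_⟩; simp only [Bx.pt, Bx.tri] at *; omega
  · have t := (H.hD p q).1 hT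
    simp only [GridTriangle.edgeFinset, GridTriangle.e0, GridTriangle.e1, GridTriangle.e2,
      Finset.mem_insert, Finset.mem_singleton, Dq0, Dq1, Dq2] at heT
    rcases heT with rfl | rfl | rfl
    · refine ⟨p, q + 1, ?_⟩
      left; refine ⟨rfl, ?_⟩; simp only [Bx.pt, Bx.tri] at *; omega
    · refine ⟨p + 1, q, ?_⟩
      right; left; refine ⟨rfl, ?_⟩; simp only [Bx.pt, Bx.tri] at *; omega
    · refine ⟨p, q, ?_⟩
      right; right; refine ⟨rfl, ?_⟩; simp only [Bx.pt, Bx.tri] at *; omega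

theorem GB.bd_out (H : GB G b B) {e : Ed} (he : e ∈ G.boundary) : ∃ v w : ℤ × ℤ,
    e = (PZ b v, PZ b w) ∧ B.pt v ∧ B.pt w ∧ v ∉ hexI B.mm ∧ w ∉ hexI B.mm := by
  have he' : e ∈ G.edges := by
    rw [ConvexGrid.boundary, Finset.mem_filter] at he; exact he.1
  obtain ⟨x, y, ⟨rfl, h⟩ | ⟨rfl, h⟩ | ⟨rfl, h⟩⟩ := H.kinds he'
  · refine ⟨_, _, rfl, h.1, h.2, ?_⟩
    rw [H.k0] at he
    simp only [Bx.mem_mm, Bx.pt, Bx.tri] at *; omega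
  · refine ⟨_, _, rfl, h.1, h.2, ?_⟩
    rw [H.k1] at he
    simp only [Bx.mem_mm, Bx.pt, Bx.tri] at *; omega
  · refine ⟨_, _, rfl, h.1, h.2, ?_⟩
    rw [H.k2] at he
    simp only [Bx.mem_mm, Bx.pt, Bx.tri] at *; omega

/-- box points are vertices of grid triangles -/
theorem GB.ptv (H : GB G b B) {v : ℤ × ℤ} (hv : B.pt v) :
    ∃ T ∈ G.tris, T.v0 = PZ b v ∨ T.v1 = PZ b v ∨ T.v2 = PZ b v := by
  obtain ⟨x, y⟩ := v
  have U0 : ∀ p q, B.tri (p, q, p + q) → (∃ T ∈ G.tris, T.v0 = PZ b (p, q) ∨ T.v1 = PZ b (p, q) ∨ T.v2 = PZ b (p, q)) ∧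
      (∃ T ∈ G.tris, T.v0 = PZ b (p + 1, q) ∨ T.v1 = PZ b (p + 1, q) ∨ T.v2 = PZ b (p + 1, q)) ∧ (∃ T ∈ G.tris, T.v0 = PZ b (p, q + 1) ∨ T.v1 = PZ b (p, q + 1) ∨ T.v2 = PZ b (p, q + 1)) := by
    intro p q h
    refine ⟨⟨_, (H.hU p q).2 h, ?_⟩, ⟨_, (H.hU p q).2 h, ?_⟩, ⟨_, (H.hU p q).2 h, ?_⟩⟩
    · exact Or.inl (Uq0 _ _ _)
    · exact Or.inr (Or.inl (Uq1 _ _ _))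
    · exact Or.inr (Or.inr (Uq2 _ _ _))
  have D0 : ∀ p q, B.tri (p, q, p + q + 1) → (∃ T ∈ G.tris, T.v0 = PZ b (p, q + 1) ∨ T.v1 = PZ b (p, q + 1) ∨ T.v2 = PZ b (p, q + 1)) ∧
      (∃ T ∈ G.tris, T.v0 = PZ b (p + 1, q + 1) ∨ T.v1 = PZ b (p + 1, q + 1) ∨ T.v2 = PZ b (p + 1, q + 1)) ∧
      (∃ T ∈ G.tris, T.v0 = PZ b (p + 1, q) ∨ T.v1 = PZ b (p + 1, q) ∨ T.v2 = PZ b (p + 1, q)) := by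
    intro p q h
    refine ⟨⟨_, (H.hD p q).2 h, ?_⟩, ⟨_, (H.hD p q).2 h, ?_⟩, ⟨_, (H.hD p q).2 h, ?_⟩⟩
    · exact Or.inl (Dq0 _ _ _)
    · exact Or.inr (Or.inl (Dq1 _ _ _))
    · exact Or.inr (Or.inr (Dq2 _ _ _))
  by_cases c1 : B.tri (x, y, x + y)
  · exact (U0 _ _ c1).1
  by_cases c2 : B.tri (x - 1, y, x - 1 + y)
  · have := (U0 _ _ c2).2.1; rwa [sub_add_cancel] at this
  by_cases c3 : B.tri (x, y - 1, x + (y - 1))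
  · have := (U0 _ _ c3).2.2; rwa [sub_add_cancel] at this
  by_cases c4 : B.tri (x, y - 1, x + (y - 1) + 1)
  · have := (D0 _ _ c4).1; rwa [sub_add_cancel] at this
  by_cases c5 : B.tri (x - 1, y - 1, x - 1 + (y - 1) + 1)
  · have := (D0 _ _ c5).2.1; rwa [sub_add_cancel, sub_add_cancel] at this
  by_cases c6 : B.tri (x - 1, y, x - 1 + y + 1)
  · have := (D0 _ _ c6).2.2; rwa [sub_add_cancel] at this
  exfalso
  obtain ⟨a1, b1, a2, b2, a3, b3, _, _, _, _, _, _, _, _, _⟩ := B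
  simp only [Bx.tri, Bx.pt] at *
  clear U0 D0 H
  omega

theorem GB.pt_mem (H : GB G b B) {v : ℤ × ℤ} (hv : B.pt v) :
    ∃ T ∈ G.tris, PZ b v ∈ T.region := by
  obtain ⟨T, hT, h⟩ := H.ptv hv
  refine ⟨T, hT, ?_⟩
  rcases h with h | h | h
  · rw [← h]; exact v0_mem _
  · rw [← h]; exact v1_mem _
  · rw [← h]; exact v2_mem _

theorem four_pt {g : Pt → ℝ} (hg : ConcaveOn ℝ G.region g)
    (ha : ∀ T ∈ G.tris, AffineOn g T.region) {T : GridTriangle} (hT : T ∈ G.tris) {a c u v : Pt}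
    (hma : a ∈ T.region) (hmc : c ∈ T.region) (hu : u ∈ G.region) (hv : v ∈ G.region)
    (h : u + v = a + c) : g u + g v ≤ g a + g c := by
  obtain ⟨φ, hφ⟩ := ha T hT
  have hm : midpoint ℝ u v = midpoint ℝ a c := by
    rw [midpoint_eq_smul_add, midpoint_eq_smul_add, h]
  have hin : midpoint ℝ a c ∈ T.region := (convex_convexHull ℝ _).midpoint_mem hma hmc
  have h1 : g (midpoint ℝ a c) = (g a + g c) / 2 := by
    rw [hφ _ hin, hφ _ hma, hφ _ hmc, AffineMap.map_midpoint, midpoint_eq_smul_add]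
    simp; ring
  have h2 := hg.2 hu hv (show (0 : ℝ) ≤ 1 / 2 by norm_num) (show (0 : ℝ) ≤ 1 / 2 by norm_num)
    (by norm_num)
  have h3 : (1 / 2 : ℝ) • u + (1 / 2 : ℝ) • v = midpoint ℝ a c := by
    rw [← hm, midpoint_eq_smul_add, smul_add]; norm_num
  rw [h3, h1] at h2
  simp only [smul_eq_mul] at h2
  linarith

theorem PZ_add {v w v' w' : ℤ × ℤ} (h : v + w = v' + w') : PZ b v + PZ b w = PZ b v' + PZ b w' := by
  have h1 : (v.1 : ℝ) + w.1 = v'.1 + w'.1 := by exact_mod_cast congrArg Prod.fst h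
  have h2 : (v.2 : ℝ) + w.2 = v'.2 + w'.2 := by exact_mod_cast congrArg Prod.snd h
  ext
  · simp only [PZ, PR, Prod.fst_add]; linarith
  · simp only [PZ, PR, Prod.snd_add]; linear_combination (Real.sqrt 3 / 2) * h2

theorem GB.reg (H : GB G b B) {v : ℤ × ℤ} (hv : B.pt v) : PZ b v ∈ G.region := by
  obtain ⟨T, hT, h⟩ := H.pt_mem hv
  exact mem_region hT h

theorem GB.rh (H : GB G b B) {g : Pt → ℝ} (hg : ConcaveOn ℝ G.region g)
    (ha : ∀ T ∈ G.tris, AffineOn g T.region) {x y : ℤ} (h0 : B.pt (x, y)) (h1 : B.pt (x + 1, y))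
    (h2 : B.pt (x, y + 1)) {u v : ℤ × ℤ} (hu : B.pt u) (hv : B.pt v) :
    (u + v = (x, y) + (x + 1, y) → g (PZ b u) + g (PZ b v) ≤ g (PZ b (x, y)) + g (PZ b (x + 1, y))) ∧
    (u + v = (x, y) + (x, y + 1) → g (PZ b u) + g (PZ b v) ≤ g (PZ b (x, y)) + g (PZ b (x, y + 1))) ∧
    (u + v = (x + 1, y) + (x, y + 1) →
      g (PZ b u) + g (PZ b v) ≤ g (PZ b (x + 1, y)) + g (PZ b (x, y + 1))) := by
  have t : B.tri (x, y, x + y) := by simp only [Bx.pt, Bx.tri] at *; omega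
  have hT := (H.hU x y).2 t
  have m0 := v0_mem (Uq b x y)
  have m1 := v1_mem (Uq b x y)
  have m2 := v2_mem (Uq b x y)
  rw [Uq0] at m0; rw [Uq1] at m1; rw [Uq2] at m2
  exact ⟨fun h => four_pt hg ha hT m0 m1 (H.reg hu) (H.reg hv) (PZ_add h),
    fun h => four_pt hg ha hT m0 m2 (H.reg hu) (H.reg hv) (PZ_add h),
    fun h => four_pt hg ha hT m1 m2 (H.reg hu) (H.reg hv) (PZ_add h)⟩

theorem GB.ln (H : GB G b B) {g : Pt → ℝ} (hg : ConcaveOn ℝ G.region g)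
    (ha : ∀ T ∈ G.tris, AffineOn g T.region) {w u v : ℤ × ℤ} (hw : B.pt w) (hu : B.pt u)
    (hv : B.pt v) (h : u + v = w + w) : g (PZ b u) + g (PZ b v) ≤ 2 * g (PZ b w) := by
  obtain ⟨T, hT, hm⟩ := H.pt_mem hw
  have := four_pt hg ha hT hm hm (H.reg hu) (H.reg hv) (PZ_add h)
  linarith

def xo0 (B : Bx) (x y : ℤ) : Prop := (B.tri (x, y, x + y) ∧ ¬ B.tri (x, y - 1, x + (y - 1) + 1)) ∨
  (¬ B.tri (x, y, x + y) ∧ B.tri (x, y - 1, x + (y - 1) + 1))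
def xo1 (B : Bx) (x y : ℤ) : Prop := (B.tri (x, y, x + y) ∧ ¬ B.tri (x - 1, y, x - 1 + y + 1)) ∨
  (¬ B.tri (x, y, x + y) ∧ B.tri (x - 1, y, x - 1 + y + 1))
def xo2 (B : Bx) (x y : ℤ) : Prop := (B.tri (x, y, x + y) ∧ ¬ B.tri (x, y, x + y + 1)) ∨
  (¬ B.tri (x, y, x + y) ∧ B.tri (x, y, x + y + 1))

theorem loT (y : ℤ) (h1 : B.a2 ≤ y) (h2 : y < B.b2) :
    (B.lo (y + 1) = B.lo y ∧ xo1 B (B.lo y) y) ∨ (B.lo (y + 1) = B.lo y - 1 ∧ xo2 B (B.lo y - 1) y) := by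
  obtain ⟨a1, b1, a2, b2, a3, b3, _, _, _, _, _, _, _, _, _⟩ := B
  simp only [Bx.lo, xo1, xo2, Bx.tri] at *
  rcases le_or_gt (a3 - y) a1 with c | c
  · rw [max_eq_left c]; omega
  · rw [max_eq_right c.le]; omega

theorem hiT (y : ℤ) (h1 : B.a2 ≤ y) (h2 : y < B.b2) :
    (B.hi (y + 1) = B.hi y ∧ xo1 B (B.hi y) y) ∨ (B.hi (y + 1) = B.hi y - 1 ∧ xo2 B (B.hi y - 1) y) := by
  obtain ⟨a1, b1, a2, b2, a3, b3, _, _, _, _, _, _, _, _, _⟩ := B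
  simp only [Bx.hi, xo1, xo2, Bx.tri] at *
  rcases lt_or_ge b1 (b3 - y) with c | c
  · rw [min_eq_left c.le]; omega
  · rw [min_eq_right c]; omega

theorem botT (x : ℤ) (h1 : B.lo B.a2 ≤ x) (h2 : x < B.hi B.a2) : xo0 B x B.a2 := by
  obtain ⟨a1, b1, a2, b2, a3, b3, _, _, _, _, _, _, _, _, _⟩ := B
  simp only [Bx.lo, Bx.hi, xo0, Bx.tri] at *
  omega

theorem topT (x : ℤ) (h1 : B.lo B.b2 ≤ x) (h2 : x < B.hi B.b2) : xo0 B x B.b2 := by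
  obtain ⟨a1, b1, a2, b2, a3, b3, _, _, _, _, _, _, _, _, _⟩ := B
  simp only [Bx.lo, Bx.hi, xo0, Bx.tri] at *
  omega

theorem ptT (v : ℤ × ℤ) (hv : B.pt v) (hm : v ∉ hexI B.mm) :
    v.1 = B.lo v.2 ∨ v.1 = B.hi v.2 ∨ v.2 = B.a2 ∨ v.2 = B.b2 := by
  rw [Bx.mem_mm] at hm
  simp only [Bx.pt, Bx.lo, Bx.hi] at *
  omega

/-- integrality of the boundary values -/
theorem bdInt (γ : ℤ × ℤ → ℝ)
    (e0 : ∀ x y, xo0 B x y → γ (x + 1, y) - γ (x, y) ∈ ZZ)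
    (e1 : ∀ x y, xo1 B x y → γ (x, y) - γ (x, y + 1) ∈ ZZ)
    (e2 : ∀ x y, xo2 B x y → γ (x, y + 1) - γ (x + 1, y) ∈ ZZ)
    (v : ℤ × ℤ) (hv : B.pt v) (hm : v ∉ hexI B.mm) : γ v - γ (B.lo B.a2, B.a2) ∈ ZZ := by
  set c := γ (B.lo B.a2, B.a2) with hc
  have b2 := B.h2
  have ZA : ∀ {a d : ℝ}, a - c ∈ ZZ → d - a ∈ ZZ → d - c ∈ ZZ := by
    intro a d h1 h2; have := ZZ.add_mem h1 h2; rwa [show a - c + (d - a) = d - c by ring] at this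
  have ZB : ∀ {a d : ℝ}, a - c ∈ ZZ → a - d ∈ ZZ → d - c ∈ ZZ := by
    intro a d h1 h2; have := ZZ.sub_mem h1 h2; rwa [show a - c - (a - d) = d - c by ring] at this
  have hL : ∀ y, B.a2 ≤ y → y ≤ B.b2 → γ (B.lo y, y) - c ∈ ZZ := by
    intro y h1
    induction y, h1 using Int.leInduction with
    | base => intro _; rw [hc, sub_self]; exact ZZ.zero_mem
    | succ y h1 ih =>
      intro h2
      have ih := ih (by omega)
      rcases loT y h1 (by omega) with ⟨e, h⟩ | ⟨e, h⟩
      · rw [e]; exact ZB ih (e1 _ _ h)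
      · have := e2 _ _ h
        rw [sub_add_cancel] at this
        rw [e]; exact ZA ih this
  have hB : ∀ x, B.lo B.a2 ≤ x → x ≤ B.hi B.a2 → γ (x, B.a2) - c ∈ ZZ := by
    intro x h1
    induction x, h1 using Int.leInduction with
    | base => intro _; rw [hc, sub_self]; exact ZZ.zero_mem
    | succ x h1 ih =>
      intro h2
      exact ZA (ih (by omega)) (e0 _ _ (botT x h1 (by omega)))
  have hT : ∀ x, B.lo B.b2 ≤ x → x ≤ B.hi B.b2 → γ (x, B.b2) - c ∈ ZZ := by
    intro x h1
    induction x, h1 using Int.leInduction with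
    | base => intro _; exact hL _ b2.le le_rfl
    | succ x h1 ih =>
      intro h2
      exact ZA (ih (by omega)) (e0 _ _ (topT x h1 (by omega)))
  have hR : ∀ y, B.a2 ≤ y → y ≤ B.b2 → γ (B.hi y, y) - c ∈ ZZ := by
    intro y h1
    induction y, h1 using Int.leInduction with
    | base => intro _; exact hB _ (Bx.lo_le_hi le_rfl b2.le) le_rfl
    | succ y h1 ih =>
      intro h2
      have ih := ih (by omega)
      rcases hiT y h1 (by omega) with ⟨e, h⟩ | ⟨e, h⟩
      · rw [e]; exact ZB ih (e1 _ _ h)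
      · have := e2 _ _ h
        rw [sub_add_cancel] at this
        rw [e]; exact ZA ih this
  obtain ⟨x, y⟩ := v
  obtain ⟨p, q, r, s⟩ := Bx.pt_iff.1 hv
  rcases ptT _ hv hm with e | e | e | e
  · simp only at e; rw [e]; exact hL y p q
  · simp only at e; rw [e]; exact hR y p q
  · simp only at e; subst e; exact hB x r s
  · simp only at e; subst e; exact hT x r s

/-- affine map of the plane from lattice coordinates -/
def AM (b : Pt) (φ : Aff) : Pt →ᵃ[ℝ] ℝ :=
  AffineMap.const ℝ Pt φ.p + φ.q • cX b + φ.r • cY b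

theorem AM_PZ (φ : Aff) (v : ℤ × ℤ) : AM b φ (PZ b v) = φ.ev v := by
  simp [AM, PZ, cX_PR, cY_PR, Aff.ev]

theorem GB.recon (H : GB G b B) {g : ℤ × ℤ → ℝ} (hg : Hive g) : ∃ F : Pt → ℝ,
    ConcaveOn ℝ G.region F ∧ (∀ T ∈ G.tris, AffineOn F T.region) ∧ ∀ v, B.pt v → F (PZ b v) = g v := by
  have hex : ∀ T : GridTriangle, ∃ φ : Pt →ᵃ[ℝ] ℝ, T ∈ G.tris → (∀ v, g v ≤ φ (PZ b v)) ∧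
      (∃ v, T.v0 = PZ b v ∧ φ (PZ b v) = g v) ∧ (∃ v, T.v1 = PZ b v ∧ φ (PZ b v) = g v) ∧
      (∃ v, T.v2 = PZ b v ∧ φ (PZ b v) = g v) := by
    intro T
    by_cases hT : T ∈ G.tris
    · obtain ⟨p, q, rfl | rfl⟩ := H.hl T hT
      · obtain ⟨φ, h, h0, h1, h2⟩ := hg.upEx p q
        refine ⟨AM b φ, fun _ => ⟨fun v => ?_, ⟨_, Uq0 b p q, ?_⟩, ⟨_, Uq1 b p q, ?_⟩, ⟨_, Uq2 b p q, ?_⟩⟩⟩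
        · rw [AM_PZ]; exact h v
        · rw [AM_PZ]; exact h0.symm
        · rw [AM_PZ]; exact h1.symm
        · rw [AM_PZ]; exact h2.symm
      · obtain ⟨φ, h, h0, h1, h2⟩ := hg.dnEx p q
        refine ⟨AM b φ, fun _ => ⟨fun v => ?_, ⟨_, Dq0 b p q, ?_⟩, ⟨_, Dq1 b p q, ?_⟩, ⟨_, Dq2 b p q, ?_⟩⟩⟩
        · rw [AM_PZ]; exact h v
        · rw [AM_PZ]; exact h2.symm
        · rw [AM_PZ]; exact h0.symm
        · rw [AM_PZ]; exact h1.symm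
    · exact ⟨0, fun h => absurd h hT⟩
  choose φ hφ using hex
  have cmp : ∀ T ∈ G.tris, ∀ T' ∈ G.tris, ∀ z ∈ T.region, φ T z ≤ φ T' z := by
    intro T hT T' hT' z hz
    obtain ⟨_, ⟨v0, a0, c0⟩, ⟨v1, a1, c1⟩, ⟨v2, a2, c2⟩⟩ := hφ T hT
    have h' := (hφ T' hT').1
    have := region_ge T (φ T' - φ T) 0 ?_ ?_ ?_ z hz
    · simp at this; linarith
    · rw [a0]; simp; rw [c0]; exact h' _
    · rw [a1]; simp; rw [c1]; exact h' _
    · rw [a2]; simp; rw [c2]; exact h' _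
  let F : Pt → ℝ := fun z => G.tris.inf' G.nonempty (fun T => φ T z)
  have hF : ∀ T ∈ G.tris, ∀ z ∈ T.region, F z = φ T z := by
    intro T hT z hz
    refine le_antisymm (Finset.inf'_le _ hT) ?_
    exact Finset.le_inf' _ _ (fun T' hT' => cmp T hT T' hT' z hz)
  refine ⟨F, ⟨G.convex, ?_⟩, fun T hT => ⟨φ T, hF T hT⟩, ?_⟩
  · intro z _ w _ s t hs ht hst
    refine Finset.le_inf' _ _ (fun T hT => ?_)
    have e : φ T (s • z + t • w) = s • φ T z + t • φ T w :=
      Convex.combo_affine_apply hst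
    rw [e]
    have p : F z ≤ φ T z := Finset.inf'_le _ hT
    have q : F w ≤ φ T w := Finset.inf'_le _ hT
    simp only [smul_eq_mul]
    nlinarith
  · intro v hv
    obtain ⟨T, hT, h⟩ := H.ptv hv
    obtain ⟨_, ⟨v0, a0, c0⟩, ⟨v1, a1, c1⟩, ⟨v2, a2, c2⟩⟩ := hφ T hT
    rcases h with h | h | h
    · rw [← h, hF T hT _ (v0_mem _), a0, c0]; rw [a0, PZ_inj] at h; rw [h]
    · rw [← h, hF T hT _ (v1_mem _), a1, c1]; rw [a1, PZ_inj] at h; rw [h]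
    · rw [← h, hF T hT _ (v2_mem _), a2, c2]; rw [a2, PZ_inj] at h; rw [h]
end

theorem finalMain (G : ConvexGrid) (h₀ : Ed → ℤ)
    (hext : ∃ h : Ed → ℝ, IsConcaveCocirculation G h ∧
      ∀ e ∈ G.boundary, h e = (h₀ e : ℝ)) :
    ∃ h : Ed → ℝ, IsConcaveCocirculation G h ∧
      (∀ e ∈ G.edges, ∃ z : ℤ, h e = (z : ℝ)) ∧
      ∀ e ∈ G.boundary, h e = (h₀ e : ℝ) := by
  obtain ⟨h, ⟨_, gR, hc, ha, he⟩, hb⟩ := hext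
  obtain ⟨b, B, hl, hU, hD⟩ := gridBox G
  have H : GB G b B := ⟨hl, hU, hD⟩
  have sub : ∀ e ∈ G.boundary, e ∈ G.edges := by
    intro e he; rw [ConvexGrid.boundary, Finset.mem_filter] at he; exact he.1
  have hbd : ∀ e ∈ G.boundary, gR e.2 - gR e.1 = (h₀ e : ℝ) := by
    intro e hm; rw [← he e (sub e hm)]; exact hb e hm
  have z : ∀ n : ℤ, (n : ℝ) ∈ ZZ := fun n => ⟨n, by simp⟩
  let γ : ℤ × ℤ → ℝ := fun v => gR (PZ b v)
  have hbInt := bdInt (B := B) γ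
    (fun x y hx => by have := hbd _ ((H.k0 x y).2 hx); simp only [γ]; rw [this]; exact z _)
    (fun x y hx => by have := hbd _ ((H.k1 x y).2 hx); simp only [γ]; rw [this]; exact z _)
    (fun x y hx => by have := hbd _ ((H.k2 x y).2 hx); simp only [γ]; rw [this]; exact z _)
  obtain ⟨g', hive, hg', hz⟩ := extendMain B (fun v => γ v - γ (B.lo B.a2, B.a2))
    (by
      intro x y h0 h1 h2 h3
      have := (H.rh hc ha h0 h1 h2 h2 h3).1 (by ext <;> simp <;> ring)
      simp only [γ]; linarith)
    (by
      intro x y h0 h1 h2 h3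
      have := (H.rh hc ha h0 h3 h1 h2 h3).2.1 (by ext <;> simp <;> ring)
      simp only [γ]; linarith)
    (by
      intro x y h0 h1 h2 h3
      have := (H.rh hc ha h0 h2 h1 h0 h3).2.2 (by ext <;> simp <;> ring)
      simp only [γ]; linarith)
    (by
      intro x y h0 h1 h2
      have := H.ln hc ha h0 h1 h2 (by ext <;> simp <;> ring)
      simp only [γ]; linarith)
    (by
      intro x y h0 h1 h2
      have := H.ln hc ha h0 h1 h2 (by ext <;> simp <;> ring)
      simp only [γ]; linarith)
    hbInt
  obtain ⟨F, F1, F2, F3⟩ := H.recon hive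
  refine ⟨fun e => F e.2 - F e.1, ⟨?_, F, F1, F2, fun _ _ => rfl⟩, ?_, ?_⟩
  · intro T _
    simp only [GridTriangle.e0, GridTriangle.e1, GridTriangle.e2]
    ring
  · intro e hm
    have key : ∀ v w, B.pt v → B.pt w → ∃ n : ℤ, F (PZ b w) - F (PZ b v) = n := by
      intro v w hv hw
      rw [F3 _ hv, F3 _ hw]
      obtain ⟨n, hn⟩ := ZZ.sub_mem (hz w) (hz v)
      exact ⟨n, hn.symm⟩
    obtain ⟨x, y, ⟨rfl, h1, h2⟩ | ⟨rfl, h1, h2⟩ | ⟨rfl, h1, h2⟩⟩ := H.kinds hm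
    · exact key _ _ h1 h2
    · exact key _ _ h1 h2
    · exact key _ _ h1 h2
  · intro e hm
    have := hbd e hm
    obtain ⟨v, w, rfl, hv, hw, nv, nw⟩ := H.bd_out hm
    simp only at this ⊢
    rw [F3 _ hv, F3 _ hw, hg' _ hv nv, hg' _ hw nw, ← this]
    simp only [γ]; ring


end Part16

/-- Knutson–Tao integrality, Theorem 1.  If an integer-valued function
on the boundary edges of a convex grid extends to a concave cocirculation, then it
extends to an integer concave cocirculation. -/
theorem stmt0 (G : ConvexGrid) (h₀ : Ed → ℤ)
    (hext : ∃ h : Ed → ℝ, IsConcaveCocirculation G h ∧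
      ∀ e ∈ G.boundary, h e = (h₀ e : ℝ)) :
    ∃ h : Ed → ℝ, IsConcaveCocirculation G h ∧
      (∀ e ∈ G.edges, ∃ z : ℤ, h e = (z : ℝ)) ∧
      ∀ e ∈ G.boundary, h e = (h₀ e : ℝ) := by
  exact finalMain G h₀ hext


end
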